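/- Pumping theorem for 2-VASS: there exists a polynomial p with natural-number coefficients such that for every 2-VASS V with n control states and norm M, every (0,0)-run τ of V of length greater than p(nM)ⁿ factors into τ = τ₀τ₁⋯τ_k for some k ≥ 1, such that there exist non-empty cycles α₁,…,α_k, each of length at most p(nM)ⁿ, for which the path τ₀ α₁ⁱ τ₁ α₂ⁱ ⋯ α_kⁱ τ_k is a (0,0)-run for every i ∈ ℕ; furthermore, the lengths of τ₀ and τ_k are at most p(nM)ⁿ. -/

import Mathlib

/-- Integer vectors in the plane. -/
abbrev Vec2 : Type := ℤ × ℤ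

/-- The norm of a vector: the maximum of the absolute values of its coordinates. -/
def vnorm (v : Vec2) : ℕ := max v.1.natAbs v.2.natAbs

/-- A vector is positive if both coordinates are positive. -/
def Pos (v : Vec2) : Prop := 0 < v.1 ∧ 0 < v.2

/-- A vector is semi-positive if both coordinates are nonnegative and one is positive. -/
def SemiPos (v : Vec2) : Prop := 0 ≤ v.1 ∧ 0 ≤ v.2 ∧ (0 < v.1 ∨ 0 < v.2)

/-- A vector is vertical if it is of the form (0, a) with a > 0. -/
def Vert (v : Vec2) : Prop := v.1 = 0 ∧ 0 < v.2

/-- A vector is horizontal if it is of the form (a, 0) with a > 0. -/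
def Horiz (v : Vec2) : Prop := 0 < v.1 ∧ v.2 = 0

/-- Embedding of integer vectors into the rational plane. -/
def toQ (v : Vec2) : ℚ × ℚ := ((v.1 : ℚ), (v.2 : ℚ))

/-- The half-line (ray) ℚ≥0 · x generated by a rational vector x. -/
def rayQ (x : ℚ × ℚ) : Set (ℚ × ℚ) := {z | ∃ a : ℚ, 0 ≤ a ∧ z = a • x}

/-- The cone of a finite list of integer vectors: all nonnegative rational
linear combinations. -/
def Cone (vs : List Vec2) : Set (ℚ × ℚ) :=
  {x | ∃ a : Fin vs.length → ℚ, (∀ i, 0 ≤ a i) ∧ x = ∑ i, a i • toQ (vs.get i)}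

/-- The sequential cone: nonnegative rational combinations all of whose
partial sums are in the nonnegative orthant. -/
def SeqCone (vs : List Vec2) : Set (ℚ × ℚ) :=
  {x | ∃ a : Fin vs.length → ℚ, (∀ i, 0 ≤ a i) ∧
    (∀ k : ℕ, k ≤ vs.length →
      0 ≤ ∑ i : Fin vs.length, if (i : ℕ) < k then a i • toQ (vs.get i) else 0) ∧
    x = ∑ i, a i • toQ (vs.get i)}

/-- Two integer vectors are colinear if they generate the same half-line. -/
def Colinear (v w : Vec2) : Prop := rayQ (toQ v) = rayQ (toQ w)

/-- The clockwise relation on nonnegative vectors: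
`Clk v u` iff u lies strictly clockwise from v. -/
def Clk (v u : Vec2) : Prop := 0 < v.2 * u.1 - v.1 * u.2

/-- Projection of a vector on coordinate `j` (`Fin 2` indexes the two coordinates). -/
def proj (j : Fin 2) (v : Vec2) : ℤ := if j = 0 then v.1 else v.2

/-! ### 2-dimensional vector addition systems with states (2-VASS) -/

/-- A transition of a 2-VASS with control states `Fin n`:
a source state, an effect vector, and a target state. -/
abbrev Transition (n : ℕ) : Type := Fin n × Vec2 × Fin n

/-- A 2-VASS with control states `Fin n` is a finite set of transitions. -/
abbrev VASS (n : ℕ) : Type := Finset (Transition n)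

/-- The norm of a 2-VASS: the largest norm of an effect of a transition. -/
def vassNorm {n : ℕ} (V : VASS n) : ℕ := V.sup (fun t => vnorm t.2.1)

/-- The effect of a sequence of transitions: the sum of the individual effects. -/
def effect {n : ℕ} (π : List (Transition n)) : Vec2 := (π.map (fun t => t.2.1)).sum

/-- A path of `V`: a sequence of transitions of `V` in which
consecutive control states match. -/
def IsPath {n : ℕ} (V : VASS n) (π : List (Transition n)) : Prop :=
  (∀ t ∈ π, t ∈ V) ∧ π.Chain' (fun s t => s.2.2 = t.1)

/-- The path `π` starts at control state `q` (vacuously true for the empty path). -/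
def startsAt {n : ℕ} (π : List (Transition n)) (q : Fin n) : Prop :=
  ∀ t ∈ π.head?, t.1 = q

/-- The control state after the first `i` transitions of `π`, for a path
starting at control state `q`. -/
def stateAt {n : ℕ} (π : List (Transition n)) (q : Fin n) (i : ℕ) : Fin n :=
  (((π.take i).getLast?).map (fun t => t.2.2)).getD q

/-- The final control state of a path `π` starting at control state `q`. -/
def endState {n : ℕ} (π : List (Transition n)) (q : Fin n) : Fin n := stateAt π q π.length

/-- The counter values after the first `i` transitions of `π`, starting from
counter values `u`. -/
def vecAt {n : ℕ} (π : List (Transition n)) (u : Vec2) (i : ℕ) : Vec2 :=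
  u + effect (π.take i)

/-- The path `π` is enabled in the configuration `(q, u)`: it starts at `q`
and all intermediate counter values are nonnegative. -/
def Enabled {n : ℕ} (π : List (Transition n)) (q : Fin n) (u : Vec2) : Prop :=
  startsAt π q ∧ ∀ i ≤ π.length, 0 ≤ vecAt π u i

/-- For `j ∈ {1,2}`, the path `π` is `{j}`-enabled in the configuration `(q, u)`:
it starts at `q` and the `j`-th coordinate of all intermediate counter values is
nonnegative. -/
def JEnabled {n : ℕ} (π : List (Transition n)) (q : Fin n) (u : Vec2) (j : Fin 2) : Prop :=
  startsAt π q ∧ ∀ i ≤ π.length, 0 ≤ proj j (vecAt π u i)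

/-- A run of `V`: a path of `V` enabled in the configuration `(q, u)`.
Its source is `(q, u)`, its target is `(endState π q, vecAt π u π.length)`,
and its configurations are `(stateAt π q i, vecAt π u i)` for `i ≤ π.length`. -/
def IsRun {n : ℕ} (V : VASS n) (π : List (Transition n)) (q : Fin n) (u : Vec2) : Prop :=
  IsPath V π ∧ Enabled π q u

/-- A (0,0)-run of `V`: a run whose source and target counter values are `(0,0)`. -/
def IsZeroRun {n : ℕ} (V : VASS n) (π : List (Transition n)) (q : Fin n) : Prop :=
  IsRun V π q 0 ∧ effect π = 0

/-- A cycle of `V`: a nonempty path of `V` whose starting and ending control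
states coincide. -/
def IsCycle {n : ℕ} (V : VASS n) (γ : List (Transition n)) : Prop :=
  IsPath V γ ∧ γ ≠ [] ∧ γ.head?.map (fun t => t.1) = γ.getLast?.map (fun t => t.2.2)

/-- `pumped i τs αs` is the path `τ₀ α₁ⁱ τ₁ α₂ⁱ ⋯ α_kⁱ τ_k`, where
`τs = [τ₀, …, τ_k]` and `αs = [α₁, …, α_k]` and `αⱼⁱ` denotes `αⱼ`
repeated `i` times. -/
def pumped {n : ℕ} (i : ℕ) : List (List (Transition n)) → List (List (Transition n)) →
    List (Transition n)
  | [], _ => []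
  | τs, [] => τs.flatten
  | τ :: τs, α :: αs => τ ++ (List.replicate i α).flatten ++ pumped i τs αs

/-!
A vector is pumpable at time `t` of a run if cycles inserted along the run up to time `t` add it
to the counters. Pumpable vectors are closed under addition, can be carried to later times, and
stay pumpable when walks with large counters are spliced in; so repeating a short cycle often
enough and balancing it with an earlier pump yields new pumps.

The first time a counter exceeds a scale `D`, singly exponential in `n`, some small nonzero vector
is pumpable: otherwise the counters grow by at most a factor polynomial in `nM` while no new
control state is visited with both counters large, and there are at most `n` such states. From
then on the pump can be traded for flatter ones, so that it never gets much steeper than the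
configuration. If no horizontal vector is pumpable, the short cycles are not flatter than the
flattest pump, which bounds the increase of the slope defect outside the strip along the axis;
inside the strip, a repeated state and second counter with increasing first counter would give a
horizontal pump.

Exchanging the counters gives a steep pump besides the flat one, and reversing time gives the same
pair backwards from the end of the run. If a configuration is large, its direction lies in both
the forward and the backward cone, so a common vector can be pumped up before it and down after
it. If no configuration is large, a configuration repeats. In both cases the inserted cycles have
total effect zero, and reading them off in order factors the run.
-/

namespace TwoVASS

/-! ### Walks, effects and trajectories -/

theorem exists_lt_map_eq_of_card_lt {α β : Type*} [LinearOrder α] {s : Finset α} {t : Finset β}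
    {g : α → β} (hst : t.card < s.card) (hg : ∀ a ∈ s, g a ∈ t) :
    ∃ a ∈ s, ∃ b ∈ s, a < b ∧ g a = g b := by
  obtain ⟨a, ha, b, hb, hne, hab⟩ := Finset.exists_ne_map_eq_of_card_lt_of_maps_to hst hg
  rcases lt_or_gt_of_ne hne with hlt | hlt
  · exact ⟨a, ha, b, hb, hlt, hab⟩
  · exact ⟨b, hb, a, ha, hlt, hab.symm⟩

section Walks

variable {E S : Type*} {src tgt : E → S} {p q r : S} {l a b : List E}

/-- The list of edges `l` is a walk from `p` to `q` in the multigraph with source map `src` and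
target map `tgt`. Unlike `IsPath`, this keeps track of the endpoints of the empty walk. -/
def IsWalk (src tgt : E → S) : S → List E → S → Prop
  | p, [], q => p = q
  | p, e :: l, q => src e = p ∧ IsWalk src tgt (tgt e) l q

theorem isWalk_append :
    IsWalk src tgt p (a ++ b) q ↔ ∃ r, IsWalk src tgt p a r ∧ IsWalk src tgt r b q := by
  induction a generalizing p with
  | nil => simp [IsWalk]
  | cons e l ih => simp [IsWalk, ih, and_assoc]

theorem IsWalk.append (ha : IsWalk src tgt p a r) (hb : IsWalk src tgt r b q) :
    IsWalk src tgt p (a ++ b) q :=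
  isWalk_append.2 ⟨r, ha, hb⟩

theorem IsWalk.flatten_replicate (ha : IsWalk src tgt p a p) (k : ℕ) :
    IsWalk src tgt p (List.replicate k a).flatten p := by
  induction k with
  | zero => simp [IsWalk]
  | succ k ih => simpa [List.replicate_succ] using ha.append ih

theorem IsWalk.take_drop (h : IsWalk src tgt p l q) {i : ℕ} (hi : i < l.length) :
    IsWalk src tgt p (l.take i) (src l[i]) ∧ IsWalk src tgt (src l[i]) (l.drop i) q := by
  obtain ⟨r, htake, hdrop⟩ := isWalk_append.1 ((List.take_append_drop i l).symm ▸ h)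
  have hr : src l[i] = r := by
    rw [List.drop_eq_getElem_cons hi] at hdrop
    exact hdrop.1
  exact hr ▸ ⟨htake, hdrop⟩

theorem exists_lt_getElem_eq_of_card_lt (f : E → S) (F : Finset S) (hF : ∀ e ∈ l, f e ∈ F)
    (hl : F.card < l.length) :
    ∃ (i j : ℕ) (hi : i < l.length) (hj : j < l.length),
      i < j ∧ j ≤ F.card ∧ f l[i] = f l[j] := by
  have hlen (i : Fin (F.card + 1)) : (i : ℕ) < l.length := by omega
  obtain ⟨i, -, j, -, hij, heq⟩ := exists_lt_map_eq_of_card_lt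
    (s := (Finset.univ : Finset (Fin (F.card + 1)))) (t := F)
    (g := fun i => f (l[(i : ℕ)]'(hlen i))) (by simp) (fun _ _ => hF _ (List.getElem_mem _))
  exact ⟨i, j, hlen i, hlen j, hij, by omega, heq⟩

theorem IsWalk.exists_closed_subwalk (h : IsWalk src tgt p l q) (F : Finset S)
    (hF : ∀ e ∈ l, src e ∈ F) (hl : F.card < l.length) :
    ∃ a b c r, l = a ++ b ++ c ∧ b ≠ [] ∧ b.length ≤ F.card ∧ IsWalk src tgt p a r ∧
      IsWalk src tgt r b r ∧ IsWalk src tgt r c q := by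
  obtain ⟨i, j, hi, hj, hij, hjF, hsrc⟩ := exists_lt_getElem_eq_of_card_lt src F hF hl
  obtain ⟨ha, hbc⟩ := h.take_drop hi
  have hlen : j - i < (l.drop i).length := by rw [List.length_drop]; omega
  obtain ⟨hb, hc⟩ := hbc.take_drop hlen
  have hget : (l.drop i)[j - i] = l[j] := by grind
  rw [hget, ← hsrc] at hb hc
  refine ⟨l.take i, (l.drop i).take (j - i), (l.drop i).drop (j - i), _, ?_, ?_, ?_, ha, hb, hc⟩
  · rw [List.append_assoc, List.take_append_drop, List.take_append_drop]
  · exact List.ne_nil_of_length_pos (by rw [List.length_take]; omega)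
  · rw [List.length_take]; omega

theorem IsWalk.exists_short (h : IsWalk src tgt p l q) (F : Finset S)
    (hF : ∀ e ∈ l, src e ∈ F) (w : E → ℤ)
    (hw : ∀ b r, b ⊆ l → b.length ≤ F.card → IsWalk src tgt r b r → (b.map w).sum ≤ 0) :
    ∃ l', l' ⊆ l ∧ l'.length ≤ F.card ∧ IsWalk src tgt p l' q ∧
      (l.map w).sum ≤ (l'.map w).sum := by
  induction hk : l.length using Nat.strong_induction_on generalizing l with
  | _ k ih =>
    by_cases hl : F.card < l.length
    · obtain ⟨a, b, c, r, rfl, hb, hb_len, ha, hbb, hc⟩ := h.exists_closed_subwalk F hF hl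
      have hsub : a ++ c ⊆ a ++ b ++ c := by grind
      have hb_pos : 0 < b.length := List.length_pos_iff.2 hb
      obtain ⟨l', hl', hlen, hwalk, hsum⟩ := ih (a ++ c).length (by grind)
        (ha.append hc) (fun e he => hF e (hsub he))
        (fun b' r' hb' => hw b' r' (List.Subset.trans hb' hsub)) rfl
      have hb_sum := hw b r (by grind) hb_len hbb
      refine ⟨l', List.Subset.trans hl' hsub, hlen, hwalk, le_trans ?_ hsum⟩
      simp only [List.map_append, List.sum_append]
      linarith
    · exact ⟨l, List.Subset.refl _, not_lt.1 hl, h, le_rfl⟩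

theorem IsWalk.exists_short_closed_of_pos (h : IsWalk src tgt p l p) (F : Finset S)
    (hF : ∀ e ∈ l, src e ∈ F) (w : E → ℤ) (hw : 0 < (l.map w).sum) :
    ∃ l' r, l' ⊆ l ∧ l'.length ≤ F.card ∧ IsWalk src tgt r l' r ∧ 0 < (l'.map w).sum := by
  by_contra! hcon
  obtain ⟨l', hsub, hlen, hwalk, hsum⟩ := h.exists_short F hF w hcon
  exact (hw.trans_le hsum).not_ge (hcon l' p hsub hlen hwalk)

end Walks

section Effects

variable {n : ℕ}

theorem vnorm_le_iff {v : Vec2} {B : ℕ} : vnorm v ≤ B ↔ |v.1| ≤ B ∧ |v.2| ≤ B := by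
  rw [vnorm, max_le_iff, Int.abs_eq_natAbs, Int.abs_eq_natAbs, Nat.cast_le, Nat.cast_le]

theorem vnorm_add_le (v w : Vec2) : vnorm (v + w) ≤ vnorm v + vnorm w :=
  max_le
    ((Int.natAbs_add_le _ _).trans (add_le_add (le_max_left _ _) (le_max_left _ _)))
    ((Int.natAbs_add_le _ _).trans (add_le_add (le_max_right _ _) (le_max_right _ _)))

theorem vnorm_neg (v : Vec2) : vnorm (-v) = vnorm v := by simp [vnorm]

theorem vnorm_swap (v : Vec2) : vnorm v.swap = vnorm v := max_comm _ _

theorem effect_nil : effect ([] : List (Transition n)) = 0 := rfl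

theorem effect_cons (e : Transition n) (l : List (Transition n)) :
    effect (e :: l) = e.2.1 + effect l := by
  simp [effect]

theorem effect_append (a b : List (Transition n)) : effect (a ++ b) = effect a + effect b := by
  simp [effect]

theorem effect_reverse (l : List (Transition n)) : effect l.reverse = effect l := by
  simp [effect]

theorem effect_flatten_replicate (k : ℕ) (l : List (Transition n)) :
    effect (List.replicate k l).flatten = k • effect l := by
  induction k with
  | zero => simp [effect_nil]
  | succ k ih =>
    rw [List.replicate_succ, List.flatten_cons, effect_append, ih, succ_nsmul']

theorem sum_map_linear (α β : ℤ) (l : List (Transition n)) :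
    (l.map (fun e => α * e.2.1.1 + β * e.2.1.2)).sum = α * (effect l).1 + β * (effect l).2 := by
  induction l with
  | nil => simp [effect_nil]
  | cons e l ih => simp [effect_cons, ih]; ring

theorem nonneg_effect_take_append {v : Vec2} {a b : List (Transition n)}
    (ha : ∀ k, 0 ≤ v + effect (a.take k)) (hb : ∀ k, 0 ≤ v + effect a + effect (b.take k))
    (k : ℕ) : 0 ≤ v + effect ((a ++ b).take k) := by
  rcases le_total k a.length with hk | hk
  · rw [List.take_append_of_le_length hk]; exact ha k
  · rw [List.take_append, List.take_of_length_le hk, effect_append, ← add_assoc]; exact hb _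

/-- All transitions in `V` have norm at most `M`. -/
def NormLe (V : Set (Transition n)) (M : ℕ) : Prop :=
  ∀ e ∈ V, vnorm e.2.1 ≤ M

variable {V : Set (Transition n)} {M B : ℕ} {l : List (Transition n)}

theorem NormLe.vnorm_effect_le (hM : NormLe V M) (hl : ∀ e ∈ l, e ∈ V) (hB : l.length ≤ B) :
    vnorm (effect l) ≤ B * M := by
  refine le_trans ?_ (Nat.mul_le_mul_right M hB)
  clear hB
  induction l with
  | nil => simp [effect_nil, vnorm]
  | cons e l ih =>
    rw [effect_cons, List.length_cons, Nat.succ_mul, add_comm (_ * M)]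
    exact (vnorm_add_le _ _).trans <| add_le_add (hM e (hl e List.mem_cons_self)) <|
      ih fun e he => hl e (List.mem_cons_of_mem _ he)

theorem NormLe.nonneg_effect_take (hM : NormLe V M) {u : Vec2} (hl : ∀ e ∈ l, e ∈ V)
    (hB : l.length ≤ B) (h₁ : (B * M : ℕ) ≤ u.1) (h₂ : (B * M : ℕ) ≤ u.2) (k : ℕ) :
    0 ≤ u + effect (l.take k) := by
  obtain ⟨b₁, b₂⟩ := vnorm_le_iff.1 <| hM.vnorm_effect_le (l := l.take k)
    (fun e he => hl e (List.mem_of_mem_take he)) ((List.length_take_le' _ _).trans hB)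
  have k₁ := (abs_le.1 b₁).1
  have k₂ := (abs_le.1 b₂).1
  exact ⟨show 0 ≤ u.1 + _ by linarith, show 0 ≤ u.2 + _ by linarith⟩

/-- The transitions `l` form a walk from `p` to `q` all of whose transitions are in `V`. Here `V`
is an arbitrary set, so that it can be transported along symmetries of the transitions. -/
def WalkIn (V : Set (Transition n)) (p : Fin n) (l : List (Transition n)) (q : Fin n) : Prop :=
  (∀ e ∈ l, e ∈ V) ∧ IsWalk (fun e => e.1) (fun e => e.2.2) p l q

variable {p q r : Fin n} {a b : List (Transition n)}

theorem WalkIn.nil (p : Fin n) : WalkIn V p [] p := ⟨by simp, rfl⟩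

theorem WalkIn.append (ha : WalkIn V p a r) (hb : WalkIn V r b q) : WalkIn V p (a ++ b) q :=
  ⟨fun e he => (List.mem_append.1 he).elim (ha.1 e) (hb.1 e), ha.2.append hb.2⟩

theorem WalkIn.flatten_replicate (ha : WalkIn V p a p) (k : ℕ) :
    WalkIn V p (List.replicate k a).flatten p := by
  refine ⟨fun e he => ?_, ha.2.flatten_replicate k⟩
  obtain ⟨l, hl, hel⟩ := List.mem_flatten.1 he
  exact ha.1 e (List.eq_of_mem_replicate hl ▸ hel)

theorem WalkIn.exists_short (h : WalkIn V p l q) : ∃ l', l'.length ≤ n ∧ WalkIn V p l' q := by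
  obtain ⟨l', hsub, hlen, hwalk, -⟩ :=
    h.2.exists_short Finset.univ (by simp) (fun _ => 0) (by simp)
  exact ⟨l', by simpa using hlen, fun e he => h.1 e (hsub he), hwalk⟩

/-- The transition with its two counters exchanged. -/
def swapTr (e : Transition n) : Transition n := (e.1, e.2.1.swap, e.2.2)

/-- The transition read backwards. -/
def revTr (e : Transition n) : Transition n := (e.2.2, -e.2.1, e.1)

theorem effect_map_swapTr (l : List (Transition n)) :
    effect (l.map swapTr) = (effect l).swap := by
  induction l with
  | nil => rfl
  | cons e l ih => rw [List.map_cons, effect_cons, effect_cons, ih]; rfl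

theorem effect_map_revTr (l : List (Transition n)) : effect (l.map revTr) = -effect l := by
  induction l with
  | nil => rfl
  | cons e l ih => rw [List.map_cons, effect_cons, effect_cons, ih, neg_add]; rfl

theorem NormLe.swap (hM : NormLe V M) : NormLe (swapTr ⁻¹' V) M :=
  fun e he => vnorm_swap e.2.1 ▸ hM _ he

theorem NormLe.rev (hM : NormLe V M) : NormLe (revTr ⁻¹' V) M :=
  fun e he => vnorm_neg e.2.1 ▸ hM _ he

theorem WalkIn.map_swapTr (h : WalkIn (swapTr ⁻¹' V) p l q) : WalkIn V p (l.map swapTr) q := by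
  obtain ⟨hmem, hwalk⟩ := h
  refine ⟨List.forall_mem_map.2 hmem, ?_⟩
  clear hmem
  induction l generalizing p with
  | nil => exact hwalk
  | cons e l ih => exact ⟨hwalk.1, ih hwalk.2⟩

theorem WalkIn.reverse_map_revTr (h : WalkIn (revTr ⁻¹' V) p l q) :
    WalkIn V q (l.map revTr).reverse p := by
  obtain ⟨hmem, hwalk⟩ := h
  have hV : ∀ e ∈ l.map revTr, e ∈ V := List.forall_mem_map.2 hmem
  refine ⟨fun e he => hV e (List.mem_reverse.1 he), ?_⟩
  clear hmem hV
  induction l generalizing p with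
  | nil => exact hwalk.symm
  | cons e l ih =>
    rw [List.map_cons, List.reverse_cons]
    exact (ih hwalk.2).append ⟨rfl, hwalk.1⟩

end Effects

/-- A walk of `V` whose states and counter values are indexed by time. Counters may be negative,
and the values at times beyond `len` are irrelevant. -/
structure Trajectory {n : ℕ} (V : Set (Transition n)) where
  len : ℕ
  st : ℕ → Fin n
  x : ℕ → Vec2
  step : ∀ t < len, (st t, x (t + 1) - x t, st (t + 1)) ∈ V

namespace Trajectory

variable {n M : ℕ} {V : Set (Transition n)} (ζ : Trajectory V) {a b c : ℕ}

/-- The transition taken at time `t`. -/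
def tr (t : ℕ) : Transition n := (ζ.st t, ζ.x (t + 1) - ζ.x t, ζ.st (t + 1))

/-- The list of transitions taken between times `a` and `b`. -/
def seg (a b : ℕ) : List (Transition n) := (List.range' a (b - a)).map ζ.tr

theorem seg_self (a : ℕ) : ζ.seg a a = [] := by simp [seg]

theorem length_seg (a b : ℕ) : (ζ.seg a b).length = b - a := by simp [seg]

theorem seg_eq_cons (h : a < b) : ζ.seg a b = ζ.tr a :: ζ.seg (a + 1) b := by
  obtain ⟨k, rfl⟩ := Nat.exists_eq_add_of_lt h
  rw [seg, show a + k + 1 - a = k + 1 by omega, List.range'_succ, List.map_cons, seg,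
    show a + k + 1 - (a + 1) = k by omega]

theorem seg_append (hab : a ≤ b) (hbc : b ≤ c) : ζ.seg a b ++ ζ.seg b c = ζ.seg a c := by
  simp only [seg, ← List.map_append]
  rw [show c - a = (b - a) + (c - b) by omega, ← List.range'_append_1, Nat.add_sub_cancel' hab]

theorem take_seg (k : ℕ) (hk : a + k ≤ b) : (ζ.seg a b).take k = ζ.seg a (a + k) := by
  rw [← ζ.seg_append (Nat.le_add_right a k) hk]
  exact List.take_left' (by simp [length_seg])

theorem mem_seg {e : Transition n} : e ∈ ζ.seg a b ↔ ∃ t, a ≤ t ∧ t < b ∧ ζ.tr t = e := by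
  simp only [seg, List.mem_map, List.mem_range'_1]
  exact exists_congr fun t => ⟨by rintro ⟨ht, rfl⟩; grind, by rintro ⟨ha, hb, rfl⟩; grind⟩

theorem walkIn_seg (hab : a ≤ b) (hb : b ≤ ζ.len) :
    WalkIn V (ζ.st a) (ζ.seg a b) (ζ.st b) := by
  induction hab using Nat.decreasingInduction with
  | self => exact ζ.seg_self b ▸ WalkIn.nil _
  | of_succ a hab ih =>
    rw [ζ.seg_eq_cons hab]
    exact ⟨List.forall_mem_cons.2 ⟨ζ.step a (by omega), ih.1⟩, rfl, ih.2⟩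

theorem effect_seg (hab : a ≤ b) : effect (ζ.seg a b) = ζ.x b - ζ.x a := by
  induction hab using Nat.decreasingInduction with
  | self => simp [seg_self, effect_nil]
  | of_succ a hab ih => rw [ζ.seg_eq_cons hab, effect_cons, ih, tr, add_comm, sub_add_sub_cancel]

variable {ζ}

theorem linear_le_add (hM : NormLe V M) (hab : a ≤ b) (hb : b ≤ ζ.len) (α β : ℤ)
    (hc : ∀ s, a ≤ s → s < b → ∀ c, WalkIn V (ζ.st s) c (ζ.st s) → c.length ≤ n →
      α * (effect c).1 + β * (effect c).2 ≤ 0) :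
    α * (ζ.x b).1 + β * (ζ.x b).2 ≤
      α * (ζ.x a).1 + β * (ζ.x a).2 + n * ((|α| + |β|) * M) := by
  have hw := ζ.walkIn_seg hab hb
  obtain ⟨l, hsub, hlen, -, hsum⟩ := hw.2.exists_short Finset.univ (by simp)
    (fun e => α * e.2.1.1 + β * e.2.1.2) fun c r hcs hcl hcw => by
      rw [sum_map_linear]
      cases c with
      | nil => simp [effect_nil]
      | cons e l =>
        obtain ⟨s, has, hsb, rfl⟩ := ζ.mem_seg.1 (hcs List.mem_cons_self)
        obtain rfl : ζ.st s = r := hcw.1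
        exact hc s has hsb _ ⟨fun e he => hw.1 e (hcs he), hcw⟩ (by simpa using hcl)
  rw [sum_map_linear, sum_map_linear, ζ.effect_seg hab, Prod.fst_sub, Prod.snd_sub] at hsum
  have hl := vnorm_le_iff.1 <| hM.vnorm_effect_le (fun e he => hw.1 e (hsub he))
    (show l.length ≤ n by simpa using hlen)
  push_cast at hl
  have h₁ : α * (effect l).1 ≤ |α| * (n * M) :=
    (le_abs_self _).trans (abs_mul α _ ▸ mul_le_mul_of_nonneg_left hl.1 (abs_nonneg α))
  have h₂ : β * (effect l).2 ≤ |β| * (n * M) :=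
    (le_abs_self _).trans (abs_mul β _ ▸ mul_le_mul_of_nonneg_left hl.2 (abs_nonneg β))
  linarith

end Trajectory

/-! ### Pumps -/

section Gain

variable {n : ℕ} {P Q : ℕ → List (Transition n)} {s t : ℕ}

/-- The total effect of the lists of transitions `P r` inserted at the times `r < s`. -/
def gain (P : ℕ → List (Transition n)) (s : ℕ) : Vec2 := ∑ r ∈ Finset.range s, effect (P r)

theorem gain_succ (P : ℕ → List (Transition n)) (s : ℕ) :
    gain P (s + 1) = gain P s + effect (P s) :=
  Finset.sum_range_succ _ _

theorem gain_append (P Q : ℕ → List (Transition n)) (s : ℕ) :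
    gain (fun r => P r ++ Q r) s = gain P s + gain Q s := by
  simp only [gain, effect_append, Finset.sum_add_distrib]

theorem gain_eq_of_eq_nil (hP : ∀ r, s ≤ r → P r = []) (hst : s ≤ t) : gain P t = gain P s := by
  refine (Finset.sum_subset (Finset.range_subset_range.2 hst) fun r _ hr => ?_).symm
  rw [hP r (not_lt.1 fun h => hr (Finset.mem_range.2 h)), effect_nil]

theorem gain_ite (t s : ℕ) (c : List (Transition n)) :
    gain (fun r => if r = t then c else []) s = if t < s then effect c else 0 := by
  simp [gain, apply_ite effect, effect_nil]

theorem gain_map_swapTr (P : ℕ → List (Transition n)) (s : ℕ) :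
    gain (fun r => (P r).map swapTr) s = (gain P s).swap := by
  simp only [gain, effect_map_swapTr]
  exact (map_sum (AddEquiv.prodComm : Vec2 ≃+ Vec2) (fun r => effect (P r)) _).symm

end Gain

/-- A run starting with zero counters, in a set of transitions of norm at most `M`. -/
structure Run {n : ℕ} (V : Set (Transition n)) (M : ℕ) extends Trajectory V where
  normLe : NormLe V M
  nonneg : ∀ t ≤ len, 0 ≤ x t
  start : x 0 = 0

namespace Run

variable {n M : ℕ} {V : Set (Transition n)} {ρ : Run V M}
  {P Q : ℕ → List (Transition n)} {ℓ ℓ' t t' : ℕ} {v w : Vec2} {c : List (Transition n)}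

theorem vnorm_step_le {t : ℕ} (ht : t < ρ.len) : vnorm (ρ.x (t + 1) - ρ.x t) ≤ M :=
  ρ.normLe _ (ρ.step t ht)

/-- Exchanging the two counters. -/
def swap (ρ : Run V M) : Run (swapTr ⁻¹' V) M where
  len := ρ.len
  st := ρ.st
  x t := (ρ.x t).swap
  step := ρ.step
  normLe := ρ.normLe.swap
  nonneg t ht := ⟨(ρ.nonneg t ht).2, (ρ.nonneg t ht).1⟩
  start := by rw [ρ.start]; rfl

/-- The time reversal of a run ending with zero counters. -/
def rev (ρ : Run V M) (h0 : ρ.x ρ.len = 0) : Run (revTr ⁻¹' V) M where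
  len := ρ.len
  st t := ρ.st (ρ.len - t)
  x t := ρ.x (ρ.len - t)
  step t ht := by
    have h := ρ.step (ρ.len - (t + 1)) (by omega)
    rw [show ρ.len - (t + 1) + 1 = ρ.len - t by omega] at h
    simpa [revTr] using h
  normLe := ρ.normLe.rev
  nonneg t _ := ρ.nonneg _ (by omega)
  start := by simpa using h0

variable (ρ) in
/-- Inserting the cycle `P s` at each time `s ≤ t` of the run, for cycles of length at most `ℓ`,
keeps the counters nonnegative and has total effect `v`. The condition `gain_nonneg` makes
pumps additive, and in particular lets them be repeated. -/
structure IsPump (P : ℕ → List (Transition n)) (ℓ t : ℕ) (v : Vec2) : Prop where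
  walkIn : ∀ s, WalkIn V (ρ.st s) (P s) (ρ.st s)
  length_le : ∀ s, (P s).length ≤ ℓ
  eq_nil : ∀ s, t < s → P s = []
  gain_nonneg : ∀ s, 0 ≤ gain P s
  nonneg : ∀ s ≤ t, ∀ k, 0 ≤ ρ.x s + gain P s + effect ((P s).take k)
  gain_eq : gain P (t + 1) = v

namespace IsPump

theorem gain_eq_of_lt (h : ρ.IsPump P ℓ t v) (hs : t < t') : gain P t' = v :=
  (gain_eq_of_eq_nil h.eq_nil hs).trans h.gain_eq

theorem mono_length (h : ρ.IsPump P ℓ t v) (hℓ : ℓ ≤ ℓ') : ρ.IsPump P ℓ' t v :=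
  { h with length_le := fun s => (h.length_le s).trans hℓ }

theorem mono_time (h : ρ.IsPump P ℓ t v) (htt : t ≤ t') (ht' : t' ≤ ρ.len) :
    ρ.IsPump P ℓ t' v where
  walkIn := h.walkIn
  length_le := h.length_le
  eq_nil s hs := h.eq_nil s (htt.trans_lt hs)
  gain_nonneg := h.gain_nonneg
  nonneg s hs k := by
    rcases le_or_gt s t with hst | hst
    · exact h.nonneg s hst k
    · rw [h.eq_nil s hst, List.take_nil, effect_nil, add_zero]
      exact add_nonneg (ρ.nonneg s (hs.trans ht')) (h.gain_nonneg s)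
  gain_eq := h.gain_eq_of_lt (Nat.lt_succ_of_le htt)

theorem zero (ht : t ≤ ρ.len) : ρ.IsPump (fun _ => []) ℓ t 0 where
  walkIn _ := WalkIn.nil _
  length_le _ := Nat.zero_le _
  eq_nil _ _ := rfl
  gain_nonneg s := by simp [gain, effect_nil]
  nonneg s hs k := by simpa [gain, effect_nil] using ρ.nonneg s (hs.trans ht)
  gain_eq := by simp [gain, effect_nil]

theorem add (hP : ρ.IsPump P ℓ t v) (hQ : ρ.IsPump Q ℓ' t w) :
    ρ.IsPump (fun s => P s ++ Q s) (ℓ + ℓ') t (v + w) where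
  walkIn s := (hP.walkIn s).append (hQ.walkIn s)
  length_le s := List.length_append ▸ add_le_add (hP.length_le s) (hQ.length_le s)
  eq_nil s hs := by simp [hP.eq_nil s hs, hQ.eq_nil s hs]
  gain_nonneg s := gain_append P Q s ▸ add_nonneg (hP.gain_nonneg s) (hQ.gain_nonneg s)
  nonneg s hs := by
    rw [gain_append]
    refine nonneg_effect_take_append (fun k => ?_) (fun k => ?_)
    · exact (add_nonneg (hP.nonneg s hs k) (hQ.gain_nonneg s)).trans_eq (by abel)
    · have h := add_nonneg (hQ.nonneg s hs k) (hP.gain_nonneg (s + 1))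
      rw [gain_succ] at h
      exact h.trans_eq (by abel)
  gain_eq := by rw [gain_append, hP.gain_eq, hQ.gain_eq]

theorem append (hP : ρ.IsPump P ℓ t v) (hc : WalkIn V (ρ.st t) c (ρ.st t))
    (hpre : ∀ k, 0 ≤ ρ.x t + v + effect (c.take k)) (hv : 0 ≤ v + effect c) :
    ρ.IsPump (fun s => P s ++ if s = t then c else []) (ℓ + c.length) t (v + effect c) where
  walkIn s := (hP.walkIn s).append <| by
    split_ifs with hs
    · exact hs ▸ hc
    · exact WalkIn.nil _
  length_le s := by
    rw [List.length_append]
    exact add_le_add (hP.length_le s) (by split_ifs <;> simp)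
  eq_nil s hs := by simp [hP.eq_nil s hs, hs.ne']
  gain_nonneg s := by
    rw [gain_append, gain_ite]
    split_ifs with hs
    · rwa [hP.gain_eq_of_lt hs]
    · simpa using hP.gain_nonneg s
  nonneg s hs := by
    rw [gain_append, gain_ite, if_neg (not_lt.2 hs), add_zero]
    refine nonneg_effect_take_append (hP.nonneg s hs) (fun k => ?_)
    split_ifs with hst
    · subst hst
      rw [add_assoc (ρ.x s), ← gain_succ, hP.gain_eq]
      exact hpre k
    · simpa [effect_nil] using hP.nonneg s hs (P s).length
  gain_eq := by rw [gain_append, gain_ite, if_pos t.lt_succ_self, hP.gain_eq]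

theorem swap (hP : ρ.swap.IsPump P ℓ t v) :
    ρ.IsPump (fun s => (P s).map swapTr) ℓ t v.swap where
  walkIn s := (hP.walkIn s).map_swapTr
  length_le s := by simpa using hP.length_le s
  eq_nil s hs := by simp [hP.eq_nil s hs]
  gain_nonneg s := gain_map_swapTr P s ▸ ⟨(hP.gain_nonneg s).2, (hP.gain_nonneg s).1⟩
  nonneg s hs k := by
    rw [gain_map_swapTr, ← List.map_take, effect_map_swapTr]
    exact ⟨(hP.nonneg s hs k).2, (hP.nonneg s hs k).1⟩
  gain_eq := by rw [gain_map_swapTr, hP.gain_eq]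

end IsPump

section Combine

/-- The insertions `Q` into the time reversal of a run of length `L`, read in the run itself. -/
def revPump (L : ℕ) (Q : ℕ → List (Transition n)) (s : ℕ) : List (Transition n) :=
  if s ≤ L then ((Q (L - s)).map revTr).reverse else []

theorem exists_effect_take_revPump {L s : ℕ} (hs : s ≤ L) (Q : ℕ → List (Transition n)) (k : ℕ) :
    ∃ j, effect ((revPump L Q s).take k) = effect ((Q (L - s)).take j) - effect (Q (L - s)) := by
  refine ⟨(Q (L - s)).length - k, ?_⟩
  have h := congrArg effect (List.take_append_drop ((Q (L - s)).length - k) (Q (L - s)))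
  rw [effect_append] at h
  rw [revPump, if_pos hs, List.take_reverse, effect_reverse, ← List.map_drop, effect_map_revTr,
    List.length_map, ← h]
  abel

theorem gain_revPump {L s : ℕ} (hs : s ≤ L + 1) (Q : ℕ → List (Transition n)) :
    gain (revPump L Q) s = gain Q (L + 1 - s) - gain Q (L + 1) := by
  induction s with
  | zero => simp [gain]
  | succ s ih =>
    rw [gain_succ, ih (by omega), revPump, if_pos (by omega), effect_reverse, effect_map_revTr,
      show L + 1 - s = L - s + 1 by omega, gain_succ, show L + 1 - (s + 1) = L - s by omega]
    abel

variable {h0 : ρ.x ρ.len = 0} {m : Vec2}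

theorem IsPump.walkIn_revPump (hQ : (ρ.rev h0).IsPump Q ℓ t m) (s : ℕ) :
    WalkIn V (ρ.st s) (revPump ρ.len Q s) (ρ.st s) := by
  rw [revPump]
  split_ifs with hs
  · have hw := (hQ.walkIn (ρ.len - s)).reverse_map_revTr
    rwa [show (ρ.rev h0).st (ρ.len - s) = ρ.st s from congrArg ρ.st (Nat.sub_sub_self hs)] at hw
  · exact WalkIn.nil _

theorem IsPump.length_revPump_le (hQ : (ρ.rev h0).IsPump Q ℓ t m) (s : ℕ) :
    (revPump ρ.len Q s).length ≤ ℓ := by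
  rw [revPump]
  split_ifs
  · simpa using hQ.length_le _
  · exact Nat.zero_le _

theorem IsPump.nonneg_revPump (hQ : (ρ.rev h0).IsPump Q ℓ (ρ.len - t) m) {s : ℕ} (hts : t ≤ s)
    (hs : s ≤ ρ.len) (k : ℕ) :
    0 ≤ ρ.x s + gain Q (ρ.len + 1 - s) + effect ((revPump ρ.len Q s).take k) := by
  obtain ⟨j, hj⟩ := exists_effect_take_revPump hs Q k
  have h := hQ.nonneg (ρ.len - s) (by omega) j
  rw [show (ρ.rev h0).x (ρ.len - s) = ρ.x s from congrArg ρ.x (Nat.sub_sub_self hs)] at h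
  rw [hj, show ρ.len + 1 - s = ρ.len - s + 1 by omega, gain_succ]
  exact h.trans_eq (by abel)

theorem IsPump.gain_revPump (ht : t ≤ ρ.len) (hQ : (ρ.rev h0).IsPump Q ℓ (ρ.len - t) m) {s : ℕ}
    (hs : s ≤ ρ.len + 1) : gain (revPump ρ.len Q) s = gain Q (ρ.len + 1 - s) - m := by
  rw [Run.gain_revPump hs, hQ.gain_eq_of_lt (t' := ρ.len + 1) (by omega)]

theorem IsPump.combine (ht : t ≤ ρ.len) (hP : ρ.IsPump P ℓ t m)
    (hQ : (ρ.rev h0).IsPump Q ℓ' (ρ.len - t) m) :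
    ρ.IsPump (fun s => P s ++ revPump ρ.len Q s) (ℓ + ℓ') ρ.len 0 := by
  have hgain_low {s : ℕ} (hs : s ≤ t) : gain (revPump ρ.len Q) s = 0 := by
    rw [hQ.gain_revPump ht (by omega), hQ.gain_eq_of_lt (by omega), sub_self]
  have hgain_high {s : ℕ} (hst : t < s) (hs : s ≤ ρ.len + 1) :
      gain P s + gain (revPump ρ.len Q) s = gain Q (ρ.len + 1 - s) := by
    rw [hQ.gain_revPump ht hs, hP.gain_eq_of_lt hst, add_sub_cancel]
  have hnil (s : ℕ) (hs : ρ.len < s) : P s ++ revPump ρ.len Q s = [] := by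
    simp [revPump, hP.eq_nil s (by omega), not_le.2 hs]
  have htot : gain (fun s => P s ++ revPump ρ.len Q s) (ρ.len + 1) = 0 := by
    rw [gain_append, hgain_high (by omega) le_rfl, Nat.sub_self]; rfl
  refine ⟨fun s => (hP.walkIn s).append (hQ.walkIn_revPump s), fun s => List.length_append ▸
    add_le_add (hP.length_le s) (hQ.length_revPump_le s), hnil, fun s => ?_, fun s hs => ?_, htot⟩
  · rcases le_or_gt s t with hst | hst
    · rw [gain_append, hgain_low hst, add_zero]; exact hP.gain_nonneg s
    · rcases le_or_gt s (ρ.len + 1) with hs | hs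
      · rw [gain_append, hgain_high hst hs]; exact hQ.gain_nonneg _
      · rw [gain_eq_of_eq_nil hnil hs.le, htot]
  · rw [gain_append]
    refine nonneg_effect_take_append (fun k => ?_) (fun k => ?_)
    · rcases le_or_gt s t with hst | hst
      · rw [hgain_low hst, add_zero]; exact hP.nonneg s hst k
      · rw [hgain_high hst (by omega), hP.eq_nil s hst, List.take_nil, effect_nil, add_zero]
        exact add_nonneg (ρ.nonneg s hs) (hQ.gain_nonneg _)
    · rcases le_or_gt t s with hts | hts
      · have hPs : gain P s + effect (P s) = m := by rw [← gain_succ, hP.gain_eq_of_lt (by omega)]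
        rw [hQ.gain_revPump ht (by omega)]
        exact (hQ.nonneg_revPump hts hs k).trans_eq (by rw [← hPs]; abel)
      · have hR : revPump ρ.len Q s = [] := by simp [revPump, hQ.eq_nil (ρ.len - s) (by omega)]
        rw [hgain_low hts.le, add_zero, hR, List.take_nil, effect_nil, add_zero]
        simpa using hP.nonneg s hts.le (P s).length

end Combine

variable (ρ) in
/-- Some pump with cycles of length at most `ℓ` inserted up to time `t` has total effect `v`. -/
def Pumpable (ℓ t : ℕ) (v : Vec2) : Prop := ∃ P, ρ.IsPump P ℓ t v

namespace Pumpable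

theorem nonneg : ρ.Pumpable ℓ t v → 0 ≤ v
  | ⟨_, hP⟩ => hP.gain_eq ▸ hP.gain_nonneg _

theorem zero (ht : t ≤ ρ.len) : ρ.Pumpable ℓ t 0 := ⟨_, IsPump.zero ht⟩

theorem mono_length : ρ.Pumpable ℓ t v → ℓ ≤ ℓ' → ρ.Pumpable ℓ' t v
  | ⟨P, hP⟩, hℓ => ⟨P, hP.mono_length hℓ⟩

theorem mono_time : ρ.Pumpable ℓ t v → t ≤ t' → t' ≤ ρ.len → ρ.Pumpable ℓ t' v
  | ⟨P, hP⟩, htt, ht' => ⟨P, hP.mono_time htt ht'⟩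

theorem add : ρ.Pumpable ℓ t v → ρ.Pumpable ℓ' t w → ρ.Pumpable (ℓ + ℓ') t (v + w)
  | ⟨_, hP⟩, ⟨_, hQ⟩ => ⟨_, hP.add hQ⟩

theorem nsmul (h : ρ.Pumpable ℓ t v) (ht : t ≤ ρ.len) (k : ℕ) :
    ρ.Pumpable (k * ℓ) t (k • v) := by
  induction k with
  | zero => simpa using zero ht
  | succ k ih => rw [succ_nsmul, Nat.succ_mul]; exact ih.add h

theorem append (h : ρ.Pumpable ℓ t v) (hc : WalkIn V (ρ.st t) c (ρ.st t))
    (hpre : ∀ k, 0 ≤ ρ.x t + v + effect (c.take k)) (hv : 0 ≤ v + effect c) :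
    ρ.Pumpable (ℓ + c.length) t (v + effect c) :=
  let ⟨_, hP⟩ := h
  ⟨_, hP.append hc hpre hv⟩

theorem of_walkIn (ht : t ≤ ρ.len) (hc : WalkIn V (ρ.st t) c (ρ.st t))
    (hpre : ∀ k, 0 ≤ ρ.x t + effect (c.take k)) (hv : 0 ≤ effect c) :
    ρ.Pumpable c.length t (effect c) := by
  simpa using (zero (ℓ := 0) ht).append hc (by simpa using hpre) (by simpa using hv)

theorem of_swap : ρ.swap.Pumpable ℓ t v → ρ.Pumpable ℓ t v.swap
  | ⟨_, hP⟩ => ⟨_, hP.swap⟩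

end Pumpable

end Run

/-! ### Planar vectors and constants -/

section Planar

/-- The first value above `L` is at most `L + σ`, and so are then all values of its colour: remove
that colour and replace `L` by `L + σ`. -/
theorem le_add_mul_card_of_colored {κ : Type*} (R : Set ℕ) (f : ℕ → ℤ) (c : ℕ → κ)
    {σ : ℤ} (hσ : 0 ≤ σ) (F : Finset κ) {L : ℤ} (hF : ∀ r ∈ R, L < f r → c r ∈ F)
    (hnear : ∀ r ∈ R, f r ≤ L + σ ∨ ∃ r' < r, r' ∈ R ∧ f r ≤ f r' + σ)
    (hcolor : ∀ r₁ ∈ R, ∀ r₂ ∈ R, r₁ < r₂ → c r₁ = c r₂ → f r₂ ≤ f r₁) {r : ℕ} (hr : r ∈ R) :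
    f r ≤ L + σ * F.card := by
  classical
  induction hk : F.card generalizing F L with
  | zero =>
    by_contra! hlt
    simpa [Finset.card_eq_zero.1 hk] using hF r hr (by simpa using hlt)
  | succ k ih =>
    by_cases hex : ∃ s, s ∈ R ∧ L < f s
    · obtain ⟨hs, hLs⟩ := Nat.find_spec hex
      have hmin {r : ℕ} (hr : r ∈ R) (hL : L < f r) : Nat.find hex ≤ r := Nat.find_min' hex ⟨hr, hL⟩
      generalize Nat.find hex = s at hs hLs hmin
      have hfs : f s ≤ L + σ := by
        rcases hnear s hs with h | ⟨r', hr's, hr', h⟩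
        · exact h
        · exact h.trans (add_le_add_left (not_lt.1 fun hL => (hmin hr' hL).not_gt hr's) σ)
      have hsame {r : ℕ} (hr : r ∈ R) (hlt : L + σ < f r) : c r ≠ c s := fun hc => by
        rcases (hmin hr (by linarith)).eq_or_lt with rfl | hsr
        · exact hlt.not_ge hfs
        · exact hlt.not_ge ((hcolor s hs r hr hsr hc.symm).trans hfs)
      have h := ih (F.erase (c s)) (L := L + σ)
        (fun r hr hlt => Finset.mem_erase.2 ⟨hsame hr hlt, hF r hr (by linarith)⟩)
        (fun r hr => (hnear r hr).imp_left fun h => h.trans (by linarith))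
        (by rw [Finset.card_erase_of_mem (hF s hs hLs), hk, Nat.add_sub_cancel])
      push_cast
      linarith
    · push Not at hex
      exact (hex r hr).trans (le_add_of_nonneg_right (by positivity))

theorem exists_last_or_forall_not (p : ℕ → Prop) (a r : ℕ) :
    (∀ s, a ≤ s → s < r → ¬ p s) ∨
      ∃ r', a ≤ r' ∧ r' < r ∧ p r' ∧ ∀ s, r' < s → s < r → ¬ p s := by
  induction r with
  | zero => exact Or.inl fun s _ hs => absurd hs s.not_lt_zero
  | succ r ih =>
    by_cases hr : a ≤ r ∧ p r
    · exact Or.inr ⟨r, hr.1, r.lt_succ_self, hr.2, fun s h₁ h₂ => by omega⟩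
    · grind

theorem vnorm_le_iff_of_nonneg {v : Vec2} (hv : 0 ≤ v) {B : ℕ} :
    vnorm v ≤ B ↔ v.1 ≤ B ∧ v.2 ≤ B := by
  rw [vnorm_le_iff, abs_of_nonneg hv.1, abs_of_nonneg hv.2]

theorem exists_max_slope {S : Set Vec2} {B : ℕ}
    (hS : ∀ v ∈ S, 0 ≤ v.1 ∧ 0 < v.2 ∧ vnorm v ≤ B) (hne : S.Nonempty) :
    ∃ v ∈ S, ∀ w ∈ S, w.1 * v.2 ≤ v.1 * w.2 := by
  have hfin : S.Finite := (Set.finite_Icc (0 : Vec2) (B, B)).subset fun v hv => by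
    obtain ⟨h₁, h₂, hvB⟩ := hS v hv
    obtain ⟨b₁, b₂⟩ := (vnorm_le_iff_of_nonneg ⟨h₁, h₂.le⟩).1 hvB
    exact ⟨⟨h₁, h₂.le⟩, ⟨b₁, b₂⟩⟩
  obtain ⟨v, hv, hmax⟩ := hfin.exists_maximalFor (fun v : Vec2 => (v.1 : ℚ) / v.2) S hne
  refine ⟨v, hv, fun w hw => ?_⟩
  have hv₂ : (0 : ℚ) < v.2 := mod_cast (hS v hv).2.1
  have hw₂ : (0 : ℚ) < w.2 := mod_cast (hS w hw).2.1
  have hle : (w.1 : ℚ) / w.2 ≤ v.1 / v.2 := (le_total _ _).elim id (hmax hw)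
  rw [div_le_div_iff₀ hw₂ hv₂] at hle
  exact_mod_cast hle

/-- The functional vanishes on the flattest vector of `C` that points to the right, if any. -/
theorem exists_pos_functional_nonpos {C : Set Vec2} {N : ℕ} (hN : 0 < N)
    (hb : ∀ c ∈ C, vnorm c ≤ N) (h0 : ∀ c ∈ C, 0 ≤ c → c = 0)
    (hdet : ∀ c ∈ C, ∀ c' ∈ C, 0 < c.1 → c.2 < 0 → c'.1 < 0 → 0 < c'.2 →
      c.1 * c'.2 ≤ c.2 * c'.1) :
    ∃ α β : ℤ, α ∈ Set.Icc 1 (N : ℤ) ∧ β ∈ Set.Icc 1 (N : ℤ) ∧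
      ∀ c ∈ C, α * c.1 + β * c.2 ≤ 0 := by
  have hneg {c : Vec2} (hc : c ∈ C) (h₁ : 0 < c.1) : c.2 < 0 := by
    by_contra! h₂
    exact h₁.ne' (congrArg Prod.fst (h0 c hc ⟨h₁.le, h₂⟩))
  have hneg' {c : Vec2} (hc : c ∈ C) (h₂ : 0 < c.2) : c.1 < 0 := by
    by_contra! h₁
    exact h₂.ne' (congrArg Prod.snd (h0 c hc ⟨h₁, h₂.le⟩))
  by_cases hex : ∃ c ∈ C, 0 < c.1
  · obtain ⟨v, ⟨hv, hv₁⟩, hmax⟩ := exists_max_slope (S := {v | (v.1, -v.2) ∈ C ∧ 0 < v.1}) (B := N)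
      (fun v ⟨hv, hv₁⟩ => ⟨hv₁.le, neg_lt_zero.1 (hneg hv hv₁), by simpa [vnorm] using hb _ hv⟩)
      (hex.imp' (fun c => (c.1, -c.2)) fun c hc => by simpa using hc)
    have hv₂ : 0 < v.2 := neg_lt_zero.1 (hneg hv hv₁)
    obtain ⟨b₁, b₂⟩ := vnorm_le_iff.1 (hb _ hv)
    refine ⟨v.2, v.1, ⟨hv₂, by simpa using (abs_le.1 b₂).1⟩, ⟨hv₁, (abs_le.1 b₁).2⟩,
      fun c hc => ?_⟩
    rcases lt_or_ge 0 c.1 with hc₁ | hc₁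
    · linarith [hmax (c.1, -c.2) ⟨by simpa using hc, hc₁⟩]
    · rcases lt_or_ge 0 c.2 with hc₂ | hc₂
      · linarith [hdet _ hv c hc hv₁ (neg_lt_zero.2 hv₂) (hneg' hc hc₂) hc₂]
      · nlinarith
  · push Not at hex
    refine ⟨N, 1, ⟨by omega, le_rfl⟩, ⟨le_rfl, by omega⟩, fun c hc => ?_⟩
    obtain ⟨-, b₂⟩ := vnorm_le_iff.1 (hb c hc)
    rcases lt_or_ge 0 c.2 with hc₂ | hc₂
    · nlinarith [hneg' hc hc₂, (abs_le.1 b₂).2]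
    · nlinarith [hex c hc]

theorem exists_nsmul_add_nsmul_pos {c c' : Vec2} {N : ℕ} (hc : vnorm c ≤ N) (hc' : vnorm c' ≤ N)
    (h₁ : 0 < c.1) (h₂ : c.2 < 0) (h₁' : c'.1 < 0) (h₂' : 0 < c'.2)
    (hdet : c.2 * c'.1 < c.1 * c'.2) :
    ∃ k k' : ℕ, k ≤ 2 * N ∧ k' ≤ 2 * N ∧ 0 < (k • c + k' • c').1 ∧ 0 < (k • c + k' • c').2 := by
  rw [vnorm_le_iff, abs_le, abs_le] at hc hc'
  obtain ⟨k, hk⟩ := Int.eq_ofNat_of_zero_le (show 0 ≤ c'.2 - c'.1 by omega)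
  obtain ⟨k', hk'⟩ := Int.eq_ofNat_of_zero_le (show 0 ≤ c.1 - c.2 by omega)
  refine ⟨k, k', by omega, by omega, ?_, ?_⟩
  · rw [Prod.fst_add, Prod.smul_fst, Prod.smul_fst, nsmul_eq_mul, nsmul_eq_mul, ← hk, ← hk']
    linarith
  · rw [Prod.snd_add, Prod.smul_snd, Prod.smul_snd, nsmul_eq_mul, nsmul_eq_mul, ← hk, ← hk']
    linarith

theorem pos_succ_nsmul_add {u w : Vec2} {K : ℕ} (h₁ : 0 < u.1) (h₂ : 0 < u.2) (hw : vnorm w ≤ K) :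
    0 < ((K + 1) • u + w).1 ∧ 0 < ((K + 1) • u + w).2 := by
  rw [vnorm_le_iff, abs_le, abs_le] at hw
  rw [Prod.fst_add, Prod.snd_add, Prod.smul_fst, Prod.smul_snd, nsmul_eq_mul, nsmul_eq_mul]
  push_cast
  constructor <;> nlinarith

end Planar

section Constants

variable {n M : ℕ}

/-- The size parameter `nM` of the theorem. -/
def size (n M : ℕ) : ℕ := n * M

/-- The width of the strips along the axes outside which both counters count as large. -/
def stripWidth (n M : ℕ) : ℕ := 14 * size n M ^ 3

/-- The factor by which the counters can grow while no new state is visited outside the strips. -/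
def growth (n M : ℕ) : ℕ := 600 * size n M ^ 6

/-- The counter value above which there is a pump. -/
def scale (n M : ℕ) : ℕ := growth n M ^ (n + 1)

/-- The number of configurations with counters at most `scale ^ 9`. -/
def bound (n M : ℕ) : ℕ := n * (scale n M ^ 9 + 1) ^ 2

theorem left_le_size (hN : 0 < size n M) : n ≤ size n M :=
  Nat.le_mul_of_pos_right _ (Nat.pos_of_mul_pos_left hN)

theorem right_le_size (hN : 0 < size n M) : M ≤ size n M :=
  Nat.le_mul_of_pos_left _ (Nat.pos_of_mul_pos_right hN)

theorem size_le_stripWidth : size n M ≤ stripWidth n M :=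
  (Nat.le_self_pow (by norm_num) _).trans (Nat.le_mul_of_pos_left _ (by norm_num))

theorem growth_pos (hN : 0 < size n M) : 0 < growth n M := by rw [growth]; positivity

theorem growth_le_scale : growth n M ≤ scale n M := Nat.le_self_pow (by omega) _

theorem stripWidth_le_scale (hN : 0 < size n M) : stripWidth n M ≤ scale n M :=
  (Nat.mul_le_mul (by norm_num) (Nat.pow_le_pow_right hN (by norm_num))).trans growth_le_scale

theorem mul_size_le_scale : 600 * size n M ≤ scale n M :=
  (Nat.mul_le_mul_left _ (Nat.le_self_pow (by norm_num) _)).trans growth_le_scale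

theorem box_le_scale_pow (hN : 0 < size n M) : n * (scale n M + 1) ^ 2 ≤ scale n M ^ 3 := by
  have hn := left_le_size hN
  have hND := mul_size_le_scale (n := n) (M := M)
  generalize scale n M = D at *
  calc n * (D + 1) ^ 2 ≤ n * (2 * D) ^ 2 := by gcongr; omega
    _ = 4 * n * D ^ 2 := by ring
    _ ≤ D * D ^ 2 := by gcongr; omega
    _ = D ^ 3 := by ring

theorem growth_bound (hN : 0 < size n M) {B : ℕ} (hB : 1 ≤ B) :
    2 * size n M * (B + M) + 4 * size n M ^ 2 * (2 * (n * (stripWidth n M + 1)) + 1) ≤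
      growth n M * B := by
  have hn := left_le_size hN
  have hM := right_le_size hN
  rw [growth, stripWidth]
  generalize size n M = N at *
  have h₁ : n * (14 * N ^ 3 + 1) ≤ 15 * N ^ 4 := calc
    n * (14 * N ^ 3 + 1) ≤ N * (14 * N ^ 3 + N ^ 3) := by gcongr; exact Nat.one_le_pow _ _ hN
    _ = 15 * N ^ 4 := by ring
  have hNB : N ^ 6 ≤ N ^ 6 * B := Nat.le_mul_of_pos_right _ hB
  calc 2 * N * (B + M) + 4 * N ^ 2 * (2 * (n * (14 * N ^ 3 + 1)) + 1)
      ≤ 2 * N * (B + N) + 4 * N ^ 2 * (2 * (15 * N ^ 4) + N ^ 4) := by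
        gcongr; exact Nat.one_le_pow _ _ hN
    _ = 2 * (N ^ 1 * B) + 2 * N ^ 2 + 124 * N ^ 6 := by ring
    _ ≤ 2 * (N ^ 6 * B) + 2 * N ^ 6 + 124 * N ^ 6 := by
        gcongr <;> omega
    _ ≤ 600 * N ^ 6 * B := by rw [mul_assoc]; omega

end Constants

/-! ### The first pump -/

section Configurations

variable {n : ℕ} {V : Set (Transition n)}

/-- The configuration at time `t`: the state together with the counter values. -/
def Trajectory.conf (ζ : Trajectory V) (t : ℕ) : Fin n × Vec2 := (ζ.st t, ζ.x t)

theorem Trajectory.isWalk_conf_range' (ζ : Trajectory V) (a k : ℕ) :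
    IsWalk ζ.conf (fun t => ζ.conf (t + 1)) (ζ.conf a) (List.range' a k) (ζ.conf (a + k)) := by
  induction k generalizing a with
  | zero => rfl
  | succ k ih => exact ⟨rfl, Nat.succ_add_eq_add_succ a k ▸ ih (a + 1)⟩

end Configurations

namespace Run

variable {n M : ℕ} {V : Set (Transition n)} {ρ : Run V M} {s t a r B T : ℕ} {q : Fin n}
  {c c' d d' : List (Transition n)}

theorem walkIn_map_tr_of_isWalk_conf {l : List ℕ} (hl : ∀ t ∈ l, t < ρ.len) {u w : Fin n × Vec2}
    (hu : 0 ≤ u.2) (h : IsWalk ρ.conf (fun t => ρ.conf (t + 1)) u l w) :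
    WalkIn V u.1 (l.map ρ.tr) w.1 ∧ effect (l.map ρ.tr) = w.2 - u.2 ∧
      ∀ k, 0 ≤ u.2 + effect ((l.map ρ.tr).take k) := by
  induction l generalizing u with
  | nil =>
    obtain rfl : u = w := h
    exact ⟨WalkIn.nil _, by simp [effect_nil], by simpa [effect_nil] using hu⟩
  | cons t l ih =>
    obtain ⟨rfl, h⟩ := h
    have ht := hl t List.mem_cons_self
    obtain ⟨hwalk, heff, hpre⟩ := ih (fun t ht => hl t (List.mem_cons_of_mem _ ht))
      (ρ.nonneg (t + 1) ht) h
    refine ⟨⟨List.forall_mem_cons.2 ⟨ρ.step t ht, hwalk.1⟩, rfl, hwalk.2⟩, ?_, fun k => ?_⟩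
    · rw [List.map_cons, effect_cons, heff]
      exact (add_comm _ _).trans (sub_add_sub_cancel _ _ _)
    · cases k with
      | zero => simpa [effect_nil] using hu
      | succ k =>
        rw [List.map_cons, List.take_succ_cons, effect_cons, ← add_assoc]
        exact (hpre k).trans_eq (congrArg (· + _) (add_sub_cancel (ρ.x t) (ρ.x (t + 1))).symm)

theorem pumpable_of_return {r₁ r₂ : ℕ} (hr : r₁ < r₂) (hr₂ : r₂ ≤ ρ.len)
    (hst : ρ.st r₁ = ρ.st r₂) (hle : ρ.x r₁ ≤ ρ.x r₂) (hB : ∀ t < r₂, vnorm (ρ.x t) ≤ B) :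
    ρ.Pumpable (n * (B + 1) ^ 2) r₁ (ρ.x r₂ - ρ.x r₁) := by
  have hwalk := ρ.isWalk_conf_range' r₁ (r₂ - r₁)
  rw [Nat.add_sub_cancel' hr.le] at hwalk
  have hmem : ∀ t ∈ List.range' r₁ (r₂ - r₁), t < r₂ := fun t ht => by
    rw [List.mem_range'_1] at ht
    omega
  obtain ⟨l, hsub, hlen, hl, -⟩ := hwalk.exists_short
    (Finset.univ ×ˢ (Finset.Icc (0 : ℤ) B ×ˢ Finset.Icc (0 : ℤ) B)) (fun t ht => by
      have h₀ := ρ.nonneg t ((hmem t ht).le.trans hr₂)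
      have h₁ := (vnorm_le_iff_of_nonneg h₀).1 (hB t (hmem t ht))
      simpa [Trajectory.conf] using ⟨⟨h₀.1, h₁.1⟩, h₀.2, h₁.2⟩) (fun _ => 0) (by simp)
  obtain ⟨hwalk', heff, hpre⟩ := walkIn_map_tr_of_isWalk_conf
    (fun t ht => (hmem t (hsub ht)).trans_le hr₂) (ρ.nonneg r₁ (hr.le.trans hr₂)) hl
  rw [show (ρ.conf r₂).1 = ρ.st r₁ from hst.symm] at hwalk'
  have h := Pumpable.of_walkIn (hr.le.trans hr₂) hwalk' hpre (heff ▸ sub_nonneg.2 hle)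
  rw [List.length_map, heff] at h
  refine h.mono_length (hlen.trans_eq ?_)
  simp only [Finset.card_product, Finset.card_univ, Fintype.card_fin, Int.card_Icc, sub_zero,
    Int.toNat_natCast_add_one]
  ring

theorem vnorm_le_add_of_forall_lt (hT : T ≤ ρ.len) (h : ∀ t < T, vnorm (ρ.x t) ≤ B) :
    vnorm (ρ.x T) ≤ B + M := by
  cases T with
  | zero => simp [ρ.start, vnorm]
  | succ t =>
    rw [← add_sub_cancel (ρ.x t) (ρ.x (t + 1))]
    exact (vnorm_add_le _ _).trans (add_le_add (h t t.lt_succ_self) (vnorm_step_le hT))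

theorem exists_first_lt_vnorm (h : B < vnorm (ρ.x t)) :
    ∃ a ≤ t, B < vnorm (ρ.x a) ∧ ∀ s < a, vnorm (ρ.x s) ≤ B := by
  have hex : ∃ a, B < vnorm (ρ.x a) := ⟨t, h⟩
  exact ⟨Nat.find hex, Nat.find_min' hex h, Nat.find_spec hex,
    fun s hs => not_lt.1 (Nat.find_min hex hs)⟩

variable (ρ) in
/-- At time `t` both counters are outside the strips along the axes. -/
def Interior (t : ℕ) : Prop := (stripWidth n M : ℤ) < (ρ.x t).1 ∧ (stripWidth n M : ℤ) < (ρ.x t).2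

theorem Interior.pumpable (hs : ρ.Interior s) (hsl : s ≤ ρ.len)
    (hc : WalkIn V (ρ.st s) c (ρ.st s)) (hl : c.length ≤ n) (h0 : 0 ≤ effect c) :
    ρ.Pumpable n s (effect c) := by
  have hW : ((n * M : ℕ) : ℤ) ≤ stripWidth n M := mod_cast size_le_stripWidth
  exact (Pumpable.of_walkIn hsl hc (ρ.normLe.nonneg_effect_take hc.1 hl (hW.trans hs.1.le)
    (hW.trans hs.2.le)) h0).mono_length hl

/-- Repeating both cycles outweighs the detour between them. -/
theorem exists_walkIn_pos (hM : NormLe V M) {p : Fin n} (hc : WalkIn V p c p)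
    (hc' : WalkIn V q c' q) (hd : WalkIn V p d q) (hd' : WalkIn V q d' p)
    (hcl : c.length ≤ n) (hcl' : c'.length ≤ n) (hdl : d.length ≤ n) (hdl' : d'.length ≤ n)
    (h₁ : 0 < (effect c).1) (h₂ : (effect c).2 < 0) (h₁' : (effect c').1 < 0)
    (h₂' : 0 < (effect c').2)
    (hdet : (effect c).2 * (effect c').1 < (effect c).1 * (effect c').2) :
    ∃ τ, WalkIn V p τ p ∧ τ.length ≤ 14 * n * size n M ^ 2 ∧ 0 < (effect τ).1 ∧
      0 < (effect τ).2 := by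
  have hbound {p q : Fin n} {l : List (Transition n)} (h : WalkIn V p l q) (hl : l.length ≤ n) :
      vnorm (effect l) ≤ size n M := hM.vnorm_effect_le h.1 hl
  have hN : 1 ≤ size n M := Int.natCast_pos.1 <|
    h₁.trans_le ((le_abs_self _).trans (vnorm_le_iff.1 (hbound hc hcl)).1)
  obtain ⟨k, k', hk, hk', hpos₁, hpos₂⟩ :=
    exists_nsmul_add_nsmul_pos (hbound hc hcl) (hbound hc' hcl') h₁ h₂ h₁' h₂' hdet
  let τ := (List.replicate ((2 * size n M + 1) * k) c).flatten ++ d ++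
    (List.replicate ((2 * size n M + 1) * k') c').flatten ++ d'
  have heff : effect τ =
      (2 * size n M + 1) • (k • effect c + k' • effect c') + (effect d + effect d') := by
    simp only [τ, effect_append, effect_flatten_replicate, smul_add, mul_smul]
    abel
  have hdetour : vnorm (effect d + effect d') ≤ 2 * size n M :=
    (vnorm_add_le _ _).trans (by linarith [hbound hd hdl, hbound hd' hdl'])
  refine ⟨τ, ((hc.flatten_replicate _).append hd |>.append (hc'.flatten_replicate _)).append hd',
    ?_, heff ▸ pos_succ_nsmul_add hpos₁ hpos₂ hdetour⟩
  simp only [τ, List.length_append, List.length_flatten, List.map_replicate,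
    List.sum_replicate_nat]
  calc _ ≤ (2 * size n M + 1) * (2 * size n M) * n + n +
        (2 * size n M + 1) * (2 * size n M) * n + n := by gcongr
    _ = (8 * size n M ^ 2 + 4 * size n M + 2) * n := by ring
    _ ≤ (14 * size n M ^ 2) * n := by gcongr; nlinarith
    _ = 14 * n * size n M ^ 2 := by ring

theorem Interior.exists_pumpable_of_det_pos (hs : ρ.Interior s) (hsl : s ≤ ρ.len)
    (hc : WalkIn V (ρ.st s) c (ρ.st s)) (hc' : WalkIn V q c' q)
    (hd : WalkIn V (ρ.st s) d q) (hd' : WalkIn V q d' (ρ.st s))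
    (hcl : c.length ≤ n) (hcl' : c'.length ≤ n) (hdl : d.length ≤ n) (hdl' : d'.length ≤ n)
    (h₁ : 0 < (effect c).1) (h₂ : (effect c).2 < 0) (h₁' : (effect c').1 < 0)
    (h₂' : 0 < (effect c').2)
    (hdet : (effect c).2 * (effect c').1 < (effect c).1 * (effect c').2) :
    ∃ v, v ≠ 0 ∧ ρ.Pumpable (14 * n * size n M ^ 2) s v ∧ vnorm v ≤ stripWidth n M := by
  obtain ⟨τ, hτ, hlen, hv₁, hv₂⟩ := exists_walkIn_pos ρ.normLe hc hc' hd hd' hcl hcl' hdl hdl'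
    h₁ h₂ h₁' h₂' hdet
  have hW : 14 * n * size n M ^ 2 * M = stripWidth n M := by simp only [stripWidth, size]; ring
  refine ⟨effect τ, fun h => hv₁.ne' (congrArg Prod.fst h),
    (Pumpable.of_walkIn hsl hτ (ρ.normLe.nonneg_effect_take hτ.1 hlen ?_ ?_)
      ⟨hv₁.le, hv₂.le⟩).mono_length hlen, hW ▸ ρ.normLe.vnorm_effect_le hτ.1 hlen⟩
  · rw [hW]; exact hs.1.le
  · rw [hW]; exact hs.2.le

section Growth

open Classical in
variable (ρ) in
/-- The states visited outside the strips up to time `t`. -/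
noncomputable def visited (t : ℕ) : Finset (Fin n) :=
  Finset.univ.filter fun q => ∃ s ≤ t, ρ.Interior s ∧ ρ.st s = q

theorem mem_visited : q ∈ ρ.visited t ↔ ∃ s ≤ t, ρ.Interior s ∧ ρ.st s = q := by simp [visited]

theorem visited_mono (h : s ≤ t) : ρ.visited s ⊆ ρ.visited t := fun _ hq =>
  let ⟨r, hr, hrq⟩ := mem_visited.1 hq
  mem_visited.2 ⟨r, hr.trans h, hrq⟩

theorem card_visited_le : (ρ.visited t).card ≤ n := by simpa using Finset.card_le_univ (ρ.visited t)

theorem exists_short_walkIn_of_visited_eq (hvis : ρ.visited a = ρ.visited t) (hs : ρ.Interior s)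
    (hst : s ≤ t) (har : a ≤ r) (hr : r ≤ ρ.len) :
    ∃ d, d.length ≤ n ∧ WalkIn V (ρ.st s) d (ρ.st r) := by
  obtain ⟨s', hs'a, -, hs'⟩ := mem_visited.1 (hvis ▸ mem_visited.2 ⟨s, hst, hs, rfl⟩)
  exact hs' ▸ (ρ.walkIn_seg (hs'a.trans har) hr).exists_short

variable (ρ) in
/-- No nonzero vector of norm at most `2 * scale n M` can be pumped up to time `T`. -/
def NoSmallPump (T : ℕ) : Prop :=
  ∀ v, ρ.Pumpable (scale n M ^ 3) T v → vnorm v ≤ 2 * scale n M → v = 0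

theorem NoSmallPump.anti (hno : ρ.NoSmallPump T) (hT : T ≤ ρ.len) (ht : t ≤ T) :
    ρ.NoSmallPump t := fun v hv => hno v (hv.mono_time ht hT)

variable (ρ) in
/-- The linear combination of the two counters with coefficients `α` and `β`. -/
def potential (α β : ℤ) (t : ℕ) : ℤ := α * (ρ.x t).1 + β * (ρ.x t).2

variable (ρ) in
/-- The coefficients `α` and `β` are positive and small, and short cycles at states visited outside
the strips between the times `a` and `t` do not increase the potential. -/
structure IsPotential (a t : ℕ) (α β : ℤ) : Prop where
  left_mem : α ∈ Set.Icc 1 (size n M : ℤ)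
  right_mem : β ∈ Set.Icc 1 (size n M : ℤ)
  cycle_le : ∀ s, a ≤ s → s ≤ t → ρ.Interior s → ∀ c, WalkIn V (ρ.st s) c (ρ.st s) →
    c.length ≤ n → α * (effect c).1 + β * (effect c).2 ≤ 0

variable {α β : ℤ}

theorem exists_isPotential (hN : 0 < size n M) (ht : t ≤ ρ.len) (hno : ρ.NoSmallPump t)
    (hvis : ρ.visited a = ρ.visited t) : ∃ α β, ρ.IsPotential a t α β := by
  have hW : stripWidth n M ≤ scale n M := stripWidth_le_scale hN
  have hlen : 14 * n * size n M ^ 2 ≤ stripWidth n M :=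
    (Nat.mul_le_mul_right _ (Nat.mul_le_mul_left 14 (left_le_size hN))).trans_eq
      (by rw [stripWidth]; ring)
  have hND : 600 * size n M ≤ scale n M := mul_size_le_scale
  have hD : scale n M ≤ scale n M ^ 3 := Nat.le_self_pow (by norm_num) _
  have hn := left_le_size hN
  let C : Set Vec2 := {e | ∃ s, a ≤ s ∧ s ≤ t ∧ ρ.Interior s ∧
    ∃ c, WalkIn V (ρ.st s) c (ρ.st s) ∧ c.length ≤ n ∧ effect c = e}
  have hCN : ∀ e ∈ C, vnorm e ≤ size n M := by
    rintro e ⟨s, -, -, -, c, hc, hl, rfl⟩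
    exact ρ.normLe.vnorm_effect_le hc.1 hl
  have hC0 : ∀ e ∈ C, 0 ≤ e → e = 0 := by
    rintro e ⟨s, -, hst, hs, c, hc, hl, rfl⟩ h0
    have hsl := hst.trans ht
    have hvn : vnorm (effect c) ≤ size n M := ρ.normLe.vnorm_effect_le hc.1 hl
    exact hno.anti ht hst _ ((hs.pumpable hsl hc hl h0).mono_length (by omega)) (by omega)
  obtain ⟨α, β, hα, hβ, hle⟩ := exists_pos_functional_nonpos hN hCN hC0 <| by
    rintro e ⟨s, has, hst, hs, c, hc, hl, rfl⟩ e' ⟨s', has', hst', hs', c', hc', hl', rfl⟩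
      h₁ h₂ h₁' h₂'
    by_contra! hdet
    obtain ⟨d, hdl, hd⟩ := exists_short_walkIn_of_visited_eq hvis hs hst has' (hst'.trans ht)
    obtain ⟨d', hdl', hd'⟩ := exists_short_walkIn_of_visited_eq hvis hs' hst' has (hst.trans ht)
    obtain ⟨v, hv0, hv, hvW⟩ := hs.exists_pumpable_of_det_pos (hst.trans ht) hc hc' hd hd'
      hl hl' hdl hdl' h₁ h₂ h₁' h₂' hdet
    exact hv0 (hno.anti ht hst v (hv.mono_length (by omega)) (by omega))
  exact ⟨α, β, hα, hβ, fun s has hst hs c hc hl => hle _ ⟨s, has, hst, hs, c, hc, hl, rfl⟩⟩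

namespace IsPotential

theorem le_add_of_interior (h : ρ.IsPotential a t α β) (ht : t ≤ ρ.len) {b : ℕ} (hab : a ≤ b)
    (hbr : b ≤ r) (hrt : r ≤ t) (hint : ∀ s, b ≤ s → s < r → ρ.Interior s) :
    ρ.potential α β r ≤ ρ.potential α β b + 2 * size n M ^ 2 := by
  obtain ⟨hα, hαN⟩ := h.left_mem
  obtain ⟨hβ, hβN⟩ := h.right_mem
  refine (Trajectory.linear_le_add ρ.normLe hbr (hrt.trans ht) α β fun s hbs hsr c hc hl =>
    h.cycle_le s (hab.trans hbs) (hsr.le.trans hrt) (hint s hbs hsr) c hc hl).trans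
    (add_le_add le_rfl ?_)
  rw [abs_of_pos hα, abs_of_pos hβ]
  calc (n : ℤ) * ((α + β) * M) = (α + β) * size n M := by rw [size]; push_cast; ring
    _ ≤ (size n M + size n M) * size n M := by gcongr
    _ = 2 * size n M ^ 2 := by ring

theorem step_le (h : ρ.IsPotential a t α β) (hr : r < ρ.len) :
    ρ.potential α β (r + 1) ≤ ρ.potential α β r + 2 * size n M ^ 2 := by
  obtain ⟨hα, hαN⟩ := h.left_mem
  obtain ⟨hβ, hβN⟩ := h.right_mem
  have hM : (M : ℤ) ≤ size n M := mod_cast right_le_size (n := n) (by omega)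
  obtain ⟨b₁, b₂⟩ := vnorm_le_iff.1 (vnorm_step_le hr)
  have h₁ : α * ((ρ.x (r + 1)).1 - (ρ.x r).1) ≤ size n M * size n M :=
    mul_le_mul_of_nonneg hαN ((le_abs_self _).trans (b₁.trans hM)) (by omega) (by omega)
  have h₂ : β * ((ρ.x (r + 1)).2 - (ρ.x r).2) ≤ size n M * size n M :=
    mul_le_mul_of_nonneg hβN ((le_abs_self _).trans (b₂.trans hM)) (by omega) (by omega)
  rw [potential, potential]
  linarith

theorem le_add_or_exists_not_interior (h : ρ.IsPotential a t α β) (ht : t ≤ ρ.len) (har : a ≤ r)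
    (hrt : r ≤ t) :
    ρ.potential α β r ≤ ρ.potential α β a + 4 * size n M ^ 2 ∨
      ∃ r' < r, a ≤ r' ∧ ¬ ρ.Interior r' ∧
        ρ.potential α β r ≤ ρ.potential α β r' + 4 * size n M ^ 2 := by
  rcases exists_last_or_forall_not (fun s => ¬ ρ.Interior s) a r with
    hint | ⟨r', har', hr', hr'', hint⟩
  · have hle := h.le_add_of_interior ht le_rfl har hrt fun s has hsr => not_not.1 (hint s has hsr)
    exact Or.inl (by linarith [sq_nonneg (size n M : ℤ)])
  · have hle := h.le_add_of_interior ht (har'.trans r'.le_succ) hr' hrt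
      fun s hs hsr => not_not.1 (hint s hs hsr)
    have hstep := h.step_le (r := r') (by omega)
    exact Or.inr ⟨r', hr', har', hr'', by linarith⟩

end IsPotential

variable (ρ) in
/-- The state at time `t` together with the value of a counter, which is small if the time is not
interior; the Boolean tells which counter is recorded. -/
def stripColour (t : ℕ) : Bool × Fin n × ℤ :=
  if (ρ.x t).2 ≤ stripWidth n M then (true, ρ.st t, (ρ.x t).2) else (false, ρ.st t, (ρ.x t).1)

/-- The colours of the times that are not interior. -/
noncomputable def stripColours (n M : ℕ) : Finset (Bool × Fin n × ℤ) :=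
  Finset.univ ×ˢ Finset.univ ×ˢ Finset.Icc 0 (stripWidth n M : ℤ)

theorem card_stripColours : (stripColours n M).card = 2 * (n * (stripWidth n M + 1)) := by
  simp [stripColours]

theorem stripColour_mem (ht : t ≤ ρ.len) (hi : ¬ ρ.Interior t) :
    ρ.stripColour t ∈ stripColours n M := by
  obtain ⟨h₁, h₂⟩ : 0 ≤ (ρ.x t).1 ∧ 0 ≤ (ρ.x t).2 := ρ.nonneg t ht
  rw [Interior, not_and_or, not_lt, not_lt] at hi
  simp only [stripColours, Finset.mem_product, Finset.mem_univ, Finset.mem_Icc, true_and]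
  rw [stripColour]
  split_ifs with h
  · exact ⟨h₂, h⟩
  · exact ⟨h₁, hi.resolve_right h⟩

theorem le_of_potential_lt_of_stripColour_eq (hα : 0 < α) (hβ : 0 < β) {r₁ r₂ : ℕ}
    (hcol : ρ.stripColour r₁ = ρ.stripColour r₂)
    (hlt : ρ.potential α β r₁ < ρ.potential α β r₂) :
    ρ.st r₁ = ρ.st r₂ ∧ ρ.x r₁ ≤ ρ.x r₂ := by
  rw [potential, potential] at hlt
  rw [stripColour, stripColour] at hcol
  split_ifs at hcol <;> simp only [Prod.mk.injEq, true_and, Bool.false_eq_true,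
    Bool.true_eq_false, false_and] at hcol
  · refine ⟨hcol.1, ?_, hcol.2.le⟩
    rw [hcol.2] at hlt
    exact le_of_mul_le_mul_left (by linarith) hα
  · refine ⟨hcol.1, hcol.2.le, ?_⟩
    rw [hcol.2] at hlt
    exact le_of_mul_le_mul_left (by linarith) hβ

theorem potential_le_of_stripColour_eq (hN : 0 < size n M) (hα : 0 < α) (hβ : 0 < β)
    (ht : t ≤ ρ.len) (hno : ρ.NoSmallPump t) (hfirst : ∀ s < t, vnorm (ρ.x s) ≤ scale n M)
    {r₁ r₂ : ℕ} (hr : r₁ < r₂) (hr₂ : r₂ ≤ t) (hcol : ρ.stripColour r₁ = ρ.stripColour r₂) :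
    ρ.potential α β r₂ ≤ ρ.potential α β r₁ := by
  by_contra! hlt
  obtain ⟨hst, hle⟩ := le_of_potential_lt_of_stripColour_eq hα hβ hcol hlt
  have hsmall (s) (hs : s < r₂) : vnorm (ρ.x s) ≤ scale n M := hfirst s (hs.trans_le hr₂)
  have hpump := (pumpable_of_return hr (hr₂.trans ht) hst hle hsmall).mono_length
    (box_le_scale_pow hN)
  have hvnorm : vnorm (ρ.x r₂ - ρ.x r₁) ≤ 2 * scale n M := by
    have hM := right_le_size hN
    have hND : 600 * size n M ≤ scale n M := mul_size_le_scale
    have h₁ := ρ.nonneg r₁ (hr.le.trans (hr₂.trans ht))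
    obtain ⟨b₁, b₂⟩ := (vnorm_le_iff_of_nonneg (ρ.nonneg r₂ (hr₂.trans ht))).1
      (vnorm_le_add_of_forall_lt (hr₂.trans ht) hsmall)
    rw [vnorm_le_iff_of_nonneg (sub_nonneg.2 hle), Prod.fst_sub, Prod.snd_sub]
    have h₁₁ : 0 ≤ (ρ.x r₁).1 := h₁.1
    have h₁₂ : 0 ≤ (ρ.x r₁).2 := h₁.2
    constructor <;> omega
  have heq := sub_eq_zero.1 (hno.anti ht (hr.le.trans hr₂) _ hpump hvnorm)
  rw [potential, potential, heq] at hlt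
  exact lt_irrefl _ hlt

theorem IsPotential.le_add (h : ρ.IsPotential a t α β) (hN : 0 < size n M) (hat : a ≤ t)
    (ht : t ≤ ρ.len) (hno : ρ.NoSmallPump t) (hfirst : ∀ s < t, vnorm (ρ.x s) ≤ scale n M) :
    ρ.potential α β t ≤ ρ.potential α β a +
      4 * size n M ^ 2 * (2 * (n * (stripWidth n M + 1)) + 1) := by
  have hσ : (0 : ℤ) ≤ 4 * size n M ^ 2 := by positivity
  have hstrip {r : ℕ} (hr : a ≤ r ∧ r ≤ t ∧ ¬ ρ.Interior r) :=
    le_add_mul_card_of_colored {r | a ≤ r ∧ r ≤ t ∧ ¬ ρ.Interior r} (ρ.potential α β)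
      ρ.stripColour hσ (stripColours n M) (L := ρ.potential α β a)
      (fun r ⟨_, hrt, hr⟩ _ => stripColour_mem (hrt.trans ht) hr)
      (fun r ⟨har, hrt, _⟩ => (h.le_add_or_exists_not_interior ht har hrt).imp_right
        fun ⟨r', hr', har', hi, hle⟩ => ⟨r', hr', ⟨har', hr'.le.trans hrt, hi⟩, hle⟩)
      (fun r₁ _ r₂ ⟨_, hr₂, _⟩ hr hcol => potential_le_of_stripColour_eq hN h.left_mem.1
        h.right_mem.1 ht hno hfirst hr hr₂ hcol) hr
  rw [card_stripColours] at hstrip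
  push_cast at hstrip
  rcases h.le_add_or_exists_not_interior ht hat le_rfl with hle | ⟨r, hr, har, hi, hle⟩
  · have : (0 : ℤ) ≤ 4 * size n M ^ 2 * (2 * (n * (stripWidth n M + 1))) := by positivity
    linarith
  · linarith [hstrip ⟨har, hr.le, hi⟩]

theorem vnorm_le_growth_mul_of_visited_eq (hN : 0 < size n M) (hB : 1 ≤ B) (hat : a ≤ t)
    (ht : t ≤ ρ.len) (hno : ρ.NoSmallPump t) (hfirst : ∀ s < t, vnorm (ρ.x s) ≤ scale n M)
    (hvis : ρ.visited a = ρ.visited t) (ha : vnorm (ρ.x a) ≤ B + M) :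
    vnorm (ρ.x t) ≤ growth n M * B := by
  obtain ⟨α, β, h⟩ := exists_isPotential hN ht hno hvis
  have hle := h.le_add hN hat ht hno hfirst
  obtain ⟨hα, hαN⟩ := h.left_mem
  obtain ⟨hβ, hβN⟩ := h.right_mem
  have hxa := ρ.nonneg a (hat.trans ht)
  obtain ⟨b₁, b₂⟩ := (vnorm_le_iff_of_nonneg hxa).1 ha
  have ha' : ρ.potential α β a ≤ 2 * size n M * (B + M : ℕ) := by
    have h₁ := mul_le_mul hαN b₁ hxa.1 (by omega)
    have h₂ := mul_le_mul hβN b₂ hxa.2 (by omega)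
    rw [potential]
    linarith
  have hg : (_ : ℤ) ≤ _ := Nat.cast_le.2 (growth_bound hN hB)
  push_cast at hg ha'
  have hxt := ρ.nonneg t ht
  have h₁ : (ρ.x t).1 ≤ α * (ρ.x t).1 := le_mul_of_one_le_left hxt.1 hα
  have h₂ : (ρ.x t).2 ≤ β * (ρ.x t).2 := le_mul_of_one_le_left hxt.2 hβ
  have h₁' : 0 ≤ (ρ.x t).1 := hxt.1
  have h₂' : 0 ≤ (ρ.x t).2 := hxt.2
  rw [potential] at hle
  rw [vnorm_le_iff_of_nonneg hxt]
  push_cast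
  constructor <;> linarith

theorem le_card_visited (hN : 0 < size n M) (hT : T ≤ ρ.len) (hno : ρ.NoSmallPump T)
    (hfirst : ∀ s < T, vnorm (ρ.x s) ≤ scale n M) {k : ℕ} (ht : t ≤ T)
    (hk : growth n M ^ k < vnorm (ρ.x t)) : k ≤ (ρ.visited t).card := by
  induction k generalizing t with
  | zero => exact Nat.zero_le _
  | succ k ih =>
    by_contra! hlt
    have hle : growth n M ^ k ≤ growth n M ^ (k + 1) :=
      Nat.pow_le_pow_right (growth_pos hN) k.le_succ
    obtain ⟨a, hat, ha, hafirst⟩ := exists_first_lt_vnorm (hle.trans_lt hk)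
    have hka := ih (hat.trans ht) ha
    have hvis : ρ.visited a = ρ.visited t :=
      Finset.eq_of_subset_of_card_le (visited_mono hat) (by omega)
    refine hk.not_ge (pow_succ' (growth n M) k ▸ vnorm_le_growth_mul_of_visited_eq hN
      (Nat.one_le_pow _ _ (growth_pos hN)) hat (ht.trans hT) (hno.anti hT ht)
      (fun s hs => hfirst s (hs.trans_le ht)) hvis
      (vnorm_le_add_of_forall_lt (hat.trans (ht.trans hT)) hafirst))

theorem exists_pumpable_of_scale_lt (hN : 0 < size n M) (hT : T ≤ ρ.len)
    (hbig : scale n M < vnorm (ρ.x T)) (hfirst : ∀ s < T, vnorm (ρ.x s) ≤ scale n M) :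
    ∃ v, v ≠ 0 ∧ ρ.Pumpable (scale n M ^ 3) T v ∧ vnorm v ≤ 2 * scale n M := by
  by_contra! hcon
  have hno : ρ.NoSmallPump T := fun v hv hvn => by_contra fun hv0 => (hcon v hv0 hv).not_ge hvn
  have hcard := le_card_visited (k := n + 1) hN hT hno hfirst le_rfl hbig
  exact absurd (hcard.trans card_visited_le) (by omega)

end Growth

end Run

/-! ### Hills -/

section Levels

variable {n M L p : ℕ} {W : ℤ} {f : ℕ → ℤ} {c : ℕ → Fin n}

/-- `a` and `b` are the last time before `p` and the first time after `p` at which the sequence `f`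
with steps of size at most `M` is not above the level `ℓ`. -/
structure IsCrossing (f : ℕ → ℤ) (M L p : ℕ) (ℓ : ℤ) (a b : ℕ) : Prop where
  lt_peak : a < p
  peak_lt : p < b
  le_len : b ≤ L
  mem_left : f a ∈ Set.Ioc (ℓ - M) ℓ
  mem_right : f b ∈ Set.Ioc (ℓ - M) ℓ
  lt_mid : ∀ t, a < t → t < b → ℓ < f t

theorem exists_isCrossing {ℓ : ℤ} (hstep : ∀ t < L, |f (t + 1) - f t| ≤ M) (h₀ : f 0 ≤ ℓ)
    (hL : f L ≤ ℓ) (hp : p ≤ L) (hfp : ℓ < f p) :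
    ∃ a b, IsCrossing f M L p ℓ a b := by
  classical
  have hp₀ : p ≠ 0 := by rintro rfl; omega
  rcases exists_last_or_forall_not (fun t => f t ≤ ℓ) 0 p with hno | ⟨a, -, hap, ha, ha_last⟩
  · exact absurd h₀ (hno 0 le_rfl (by omega))
  have hex : ∃ t, p ≤ t ∧ f t ≤ ℓ := ⟨L, hp, hL⟩
  obtain ⟨b, hb⟩ : ∃ b, b = Nat.find hex := ⟨_, rfl⟩
  obtain ⟨hpb, hfb⟩ : p ≤ b ∧ f b ≤ ℓ := hb ▸ Nat.find_spec hex
  have hb_first : ∀ t, p ≤ t → t < b → ℓ < f t := fun t hpt htb =>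
    not_le.1 fun hft => Nat.find_min hex (hb ▸ htb) ⟨hpt, hft⟩
  have hbL : b ≤ L := hb ▸ Nat.find_min' hex ⟨hp, hL⟩
  have hpb' : p < b := lt_of_le_of_ne hpb (by rintro rfl; omega)
  have hmid : ∀ t, a < t → t < b → ℓ < f t := fun t hat htb => by
    rcases lt_or_ge t p with htp | htp
    · exact not_le.1 (ha_last t hat htp)
    · exact hb_first t htp htb
  have hup := hmid (a + 1) (by omega) (by omega)
  have hdown := hmid (b - 1) (by omega) (by omega)
  have hstep_a := abs_le.1 (hstep a (by omega))
  have hstep_b := abs_le.1 (hstep (b - 1) (by omega))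
  rw [Nat.sub_add_cancel (by omega)] at hstep_b
  exact ⟨a, b, hap, hpb', hbL, ⟨by omega, ha⟩, ⟨by omega, hfb⟩, hmid⟩

/-- The parts of a walk with states `c` and second counters `f` between the times `i` and `j` and
between `i'` and `j'` are closed and have opposite effects on the second counter, so that both can
be removed without changing its final value. What lies between them then stays above `W`. -/
structure IsCancelling (c : ℕ → Fin n) (f : ℕ → ℤ) (W : ℤ) (L i j i' j' : ℕ) : Prop where
  pos : 0 < i
  lt : i < j
  le_mid : j ≤ i'
  le : i' ≤ j'
  lt_len : j' < L
  eq : c i = c j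
  eq' : c i' = c j'
  sub_eq : f j - f i = f i' - f j'
  lt_mid : ∀ t, j ≤ t → t ≤ i' → W < f t - (f j - f i)

theorem IsCrossing.isCancelling {a a' b b' : ℕ} {ℓ ℓ' : ℤ} (h : IsCrossing f M L p ℓ a b)
    (h' : IsCrossing f M L p ℓ' a' b') (hlt : ℓ < ℓ') (hW : W + M ≤ ℓ) (h₀ : f 0 ≤ W)
    (hL : f L ≤ W) (hc : c a = c a') (hc' : c b' = c b) (hf : ℓ - f a = ℓ' - f a')
    (hf' : ℓ - f b = ℓ' - f b') : IsCancelling c f W L a a' b' b := by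
  obtain ⟨hfa, hfa'⟩ := h.mem_left
  obtain ⟨hfb, hfb'⟩ := h.mem_right
  refine ⟨Nat.pos_of_ne_zero fun ha => ?_, ?_, (h'.lt_peak.trans h'.peak_lt).le, ?_,
    lt_of_le_of_ne h.le_len fun hb => ?_, hc, hc', by omega, fun t hat htb => ?_⟩
  · rw [ha] at hfa; omega
  · by_contra! hle
    rcases hle.lt_or_eq with hlt' | rfl
    · exact hfa'.not_gt (hlt.trans (h'.lt_mid _ hlt' (h.lt_peak.trans h'.peak_lt)))
    · omega
  · by_contra! hlt'
    exact hfb'.not_gt (hlt.trans (h'.lt_mid _ (h'.lt_peak.trans h.peak_lt) hlt'))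
  · rw [hb] at hfb; omega
  · have hft : ℓ' - M < f t := by
      rcases hat.eq_or_lt with rfl | hat
      · exact h'.mem_left.1
      rcases htb.eq_or_lt with rfl | htb
      · exact h'.mem_right.1
      · linarith [h'.lt_mid t hat htb]
    omega

-- Going up to the peak and going down from it, the walk passes each level in one of `(n * M) ^ 2`
-- many ways, so two levels are passed in the same way.
theorem exists_isCancelling_of_peak (hstep : ∀ t < L, |f (t + 1) - f t| ≤ M) (h₀ : f 0 ≤ W)
    (hL : f L ≤ W) (hp : p ≤ L) (hpeak : W + M + (n * M : ℕ) ^ 2 < f p) :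
    ∃ i j i' j', IsCancelling c f W L i j i' j' := by
  have hcross (ℓ : ℤ) (hℓ : ℓ ∈ Set.Icc (W + M) (W + M + (n * M : ℕ) ^ 2)) :=
    exists_isCrossing (ℓ := ℓ) hstep (by grind) (by grind) hp (by grind)
  choose! a b hab using hcross
  obtain ⟨ℓ, hℓ, ℓ', hℓ', hlt, heq⟩ := exists_lt_map_eq_of_card_lt
    (s := Finset.Icc (W + M) (W + M + (n * M : ℕ) ^ 2))
    (t := ((Finset.univ : Finset (Fin n)) ×ˢ Finset.Ico (0 : ℤ) M) ×ˢ
      ((Finset.univ : Finset (Fin n)) ×ˢ Finset.Ico (0 : ℤ) M))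
    (g := fun ℓ => ((c (a ℓ), ℓ - f (a ℓ)), (c (b ℓ), ℓ - f (b ℓ))))
    (by
      simp only [Finset.card_product, Finset.card_univ, Fintype.card_fin, Int.card_Ico, sub_zero,
        Int.toNat_natCast, Int.card_Icc, Int.lt_toNat, ← sq]
      push_cast
      linarith)
    (fun ℓ hℓ => by
      have hfa := (hab ℓ (Finset.mem_Icc.1 hℓ)).mem_left
      have hfb := (hab ℓ (Finset.mem_Icc.1 hℓ)).mem_right
      simp only [Finset.mem_product, Finset.mem_univ, Finset.mem_Ico, true_and]
      grind)
  rw [Finset.mem_Icc] at hℓ hℓ'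
  simp only [Prod.mk.injEq] at heq
  obtain ⟨⟨hc, hf⟩, hc', hf'⟩ := heq
  exact ⟨_, _, _, _, (hab ℓ hℓ).isCancelling (hab ℓ' hℓ') hlt hℓ.1 h₀ hL hc hc'.symm hf hf'⟩

theorem exists_isCancelling (hstep : ∀ t < L, |f (t + 1) - f t| ≤ M) (h₀ : f 0 ≤ W)
    (hL : f L ≤ W) (hW : ∀ t, 0 < t → t < L → W < f t)
    (hlen : n * (M + (n * M) ^ 2) + 1 < L) :
    ∃ i j i' j', IsCancelling c f W L i j i' j' := by
  by_cases hpeak : ∃ p ≤ L, W + M + (n * M : ℕ) ^ 2 < f p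
  · obtain ⟨p, hp, hpeak⟩ := hpeak
    exact exists_isCancelling_of_peak hstep h₀ hL hp hpeak
  push Not at hpeak
  obtain ⟨i, hi, j, hj, hij, heq⟩ := exists_lt_map_eq_of_card_lt (s := Finset.Ico 1 L)
    (t := (Finset.univ : Finset (Fin n)) ×ˢ Finset.Ioc W (W + M + (n * M : ℕ) ^ 2))
    (g := fun t => (c t, f t))
    (by
      rw [Finset.card_product, Finset.card_univ, Fintype.card_fin, Int.card_Ioc, Nat.card_Ico,
        add_assoc, add_sub_cancel_left, ← Nat.cast_pow, ← Nat.cast_add, Int.toNat_natCast]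
      omega)
    (fun t ht => by
      rw [Finset.mem_Ico] at ht
      simpa using ⟨hW t (by omega) ht.2, by simpa using hpeak t ht.2.le⟩)
  rw [Finset.mem_Ico] at hi hj
  obtain ⟨hc, hf⟩ := Prod.mk.inj heq
  exact ⟨i, j, j, j, hi.1, hij, le_rfl, le_rfl, hj.2, hc, rfl, by omega,
    fun t htj hjt => by rw [le_antisymm hjt htj, hf]; simpa using hW j (by grind) hj.2⟩

end Levels

section Hills

variable {n M : ℕ} {V : Set (Transition n)} {J : Set (Fin n)} {g : Vec2} {W : ℤ}
  {ζ : Trajectory V} {a b i j i' j' : ℕ}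

/-- No short cycle at a state in `J` is flatter than `g`: it gains at most `g.1 / g.2` in the first
counter for each unit gained in the second one, and loses at least this much for each unit lost. -/
def CyclesSteep (V : Set (Transition n)) (J : Set (Fin n)) (g : Vec2) : Prop :=
  ∀ q ∈ J, ∀ c, WalkIn V q c q → c.length ≤ n → g.2 * (effect c).1 ≤ g.1 * (effect c).2

theorem CyclesSteep.le (hJ : CyclesSteep V J g) (hab : a ≤ b) (hb : b ≤ ζ.len)
    (hst : ζ.st a = ζ.st b) (hmem : ∀ t, a ≤ t → t < b → ζ.st t ∈ J) :
    g.2 * ((ζ.x b).1 - (ζ.x a).1) ≤ g.1 * ((ζ.x b).2 - (ζ.x a).2) := by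
  by_contra! hlt
  have hw := ζ.walkIn_seg hab hb
  rw [← hst] at hw
  obtain ⟨c, r, hsub, hlen, hwalk, hpos⟩ := hw.2.exists_short_closed_of_pos Finset.univ (by simp)
    (fun e => g.2 * e.2.1.1 + (-g.1) * e.2.1.2) (by
      rw [sum_map_linear, ζ.effect_seg hab, Prod.fst_sub, Prod.snd_sub]; linarith)
  cases c with
  | nil => simp at hpos
  | cons e c =>
    obtain ⟨s, has, hsb, rfl⟩ := ζ.mem_seg.1 (hsub List.mem_cons_self)
    obtain rfl : ζ.st s = r := hwalk.1
    have hle := hJ _ (hmem s has hsb) _ ⟨fun e he => hw.1 e (hsub he), hwalk⟩ (by simpa using hlen)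
    rw [sum_map_linear] at hpos
    linarith

namespace Trajectory

theorem exists_cut (ζ : Trajectory V) (hij : i ≤ j) (hj : j ≤ ζ.len) (hst : ζ.st i = ζ.st j) :
    ∃ ζ' : Trajectory V, ζ'.len = ζ.len - (j - i) ∧
      (∀ t ≤ i, ζ'.st t = ζ.st t ∧ ζ'.x t = ζ.x t) ∧
      ∀ t ≥ i, ζ'.st t = ζ.st (t + (j - i)) ∧
        ζ'.x t = ζ.x (t + (j - i)) - (ζ.x j - ζ.x i) := by
  let st (t : ℕ) : Fin n := if t ≤ i then ζ.st t else ζ.st (t + (j - i))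
  let x (t : ℕ) : Vec2 := if t ≤ i then ζ.x t else ζ.x (t + (j - i)) - (ζ.x j - ζ.x i)
  have hbefore : ∀ t ≤ i, st t = ζ.st t ∧ x t = ζ.x t := fun t ht => by simp [st, x, ht]
  have hafter : ∀ t ≥ i, st t = ζ.st (t + (j - i)) ∧
      x t = ζ.x (t + (j - i)) - (ζ.x j - ζ.x i) := fun t ht => by
    rcases ht.eq_or_lt with rfl | ht
    · simp [st, x, Nat.add_sub_cancel' hij, hst]
    · simp [st, x, not_le.2 ht]
  refine ⟨⟨ζ.len - (j - i), st, x, fun t ht => ?_⟩, rfl, hbefore, hafter⟩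
  by_cases hti : t < i
  · rw [(hbefore t hti.le).1, (hbefore t hti.le).2, (hbefore (t + 1) hti).1,
      (hbefore (t + 1) hti).2]
    exact ζ.step t (by omega)
  · rw [(hafter t (by omega)).1, (hafter t (by omega)).2, (hafter (t + 1) (by omega)).1,
      (hafter (t + 1) (by omega)).2, sub_sub_sub_cancel_right, Nat.add_right_comm t 1]
    exact ζ.step _ (by omega)

theorem exists_double_cut (ζ : Trajectory V) (hij : i ≤ j) (hji : j ≤ i') (hij' : i' ≤ j')
    (hj : j' ≤ ζ.len) (hst : ζ.st i = ζ.st j) (hst' : ζ.st i' = ζ.st j') :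
    ∃ ζ' : Trajectory V, ζ'.len = ζ.len - (j' - i') - (j - i) ∧
      (∀ t ≤ i, ζ'.st t = ζ.st t ∧ ζ'.x t = ζ.x t) ∧
      (∀ t, i ≤ t → t + (j - i) ≤ i' → ζ'.st t = ζ.st (t + (j - i)) ∧
        ζ'.x t = ζ.x (t + (j - i)) - (ζ.x j - ζ.x i)) ∧
      ∀ t, i ≤ t → i' ≤ t + (j - i) → ζ'.st t = ζ.st (t + (j - i) + (j' - i')) ∧
        ζ'.x t = ζ.x (t + (j - i) + (j' - i')) - (ζ.x j' - ζ.x i') - (ζ.x j - ζ.x i) := by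
  obtain ⟨ζ₁, hlen₁, hbefore₁, hafter₁⟩ := ζ.exists_cut hij' hj hst'
  have hi := hbefore₁ i (by omega)
  have hj₁ := hbefore₁ j hji
  obtain ⟨ζ₂, hlen₂, hbefore₂, hafter₂⟩ := ζ₁.exists_cut hij (by omega) (by rw [hi.1, hj₁.1, hst])
  rw [hi.2, hj₁.2] at hafter₂
  refine ⟨ζ₂, by rw [hlen₂, hlen₁], fun t ht => ?_, fun t hit hti => ?_, fun t hit hti => ?_⟩
  · rw [(hbefore₂ t ht).1, (hbefore₂ t ht).2]
    exact hbefore₁ t (by omega)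
  · rw [(hafter₂ t hit).1, (hafter₂ t hit).2, (hbefore₁ _ hti).1, (hbefore₁ _ hti).2]
    exact ⟨rfl, rfl⟩
  · rw [(hafter₂ t hit).1, (hafter₂ t hit).2, (hafter₁ _ hti).1, (hafter₁ _ hti).2]
    exact ⟨rfl, rfl⟩

/-- Strictly between its endpoints, `ζ` has second counter above `W` and states in `J`. -/
def IsHill (ζ : Trajectory V) (J : Set (Fin n)) (W : ℤ) : Prop :=
  ∀ t, 0 < t → t < ζ.len → W < (ζ.x t).2 ∧ ζ.st t ∈ J

/-- `ζ'` has the same endpoints as `ζ`, except that its final first counter may be larger. -/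
structure Dominates (ζ' ζ : Trajectory V) : Prop where
  st_zero : ζ'.st 0 = ζ.st 0
  st_len : ζ'.st ζ'.len = ζ.st ζ.len
  x_zero : ζ'.x 0 = ζ.x 0
  snd_len : (ζ'.x ζ'.len).2 = (ζ.x ζ.len).2
  fst_len : (ζ.x ζ.len).1 ≤ (ζ'.x ζ'.len).1

theorem Dominates.refl (ζ : Trajectory V) : ζ.Dominates ζ := ⟨rfl, rfl, rfl, rfl, le_rfl⟩

theorem Dominates.trans {ζ₁ ζ₂ ζ₃ : Trajectory V} (h : ζ₁.Dominates ζ₂) (h' : ζ₂.Dominates ζ₃) :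
    ζ₁.Dominates ζ₃ where
  st_zero := h.st_zero.trans h'.st_zero
  st_len := h.st_len.trans h'.st_len
  x_zero := h.x_zero.trans h'.x_zero
  snd_len := h.snd_len.trans h'.snd_len
  fst_len := h'.fst_len.trans h.fst_len

theorem IsHill.exists_dominates_of_isCancelling (h : ζ.IsHill J W) (hg : 0 < g.2)
    (hJ : CyclesSteep V J g)
    (hc : IsCancelling ζ.st (fun t => (ζ.x t).2) W ζ.len i j i' j') :
    ∃ ζ' : Trajectory V, ζ'.len < ζ.len ∧ ζ'.IsHill J W ∧ ζ'.Dominates ζ := by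
  obtain ⟨hi, hij, hji, hij', hj, hst, hst', hsub, hmid⟩ := hc
  obtain ⟨ζ', hlen, hbefore, hbetween, hafter⟩ :=
    ζ.exists_double_cut hij.le hji hij' hj.le hst hst'
  have hgain := hJ.le hij.le (by omega) hst fun t hit htj => (h t (by omega) (by omega)).2
  have hgain' := hJ.le hij' hj.le hst' fun t hit htj => (h t (by omega) (by omega)).2
  have hgain_sum : (ζ.x j).1 - (ζ.x i).1 + ((ζ.x j').1 - (ζ.x i').1) ≤ 0 := by
    refine nonpos_of_mul_nonpos_right (a := g.2) ?_ hg
    have hcancel : g.1 * ((ζ.x j).2 - (ζ.x i).2) + g.1 * ((ζ.x j').2 - (ζ.x i').2) = 0 := by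
      rw [hsub]; ring
    linarith
  have hend := hafter ζ'.len (by omega) (by omega)
  rw [show ζ'.len + (j - i) + (j' - i') = ζ.len by omega] at hend
  refine ⟨ζ', by omega, fun t ht htL => ?_, (hbefore 0 (by omega)).1, hend.1,
    (hbefore 0 (by omega)).2, by rw [hend.2]; simp only [Prod.snd_sub]; linarith,
    by rw [hend.2]; simp only [Prod.fst_sub]; linarith⟩
  rcases le_total t i with hti | hti
  · rw [(hbefore t hti).1, (hbefore t hti).2]
    exact h t ht (by omega)
  rcases le_total (t + (j - i)) i' with hti' | hti'
  · rw [(hbetween t hti hti').1, (hbetween t hti hti').2]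
    exact ⟨hmid _ (by omega) hti', (h _ (by omega) (by omega)).2⟩
  · rw [(hafter t hti hti').1, (hafter t hti hti').2]
    obtain ⟨hW, hJt⟩ := h (t + (j - i) + (j' - i')) (by omega) (by omega)
    refine ⟨?_, hJt⟩
    simp only [Prod.snd_sub]
    linarith

theorem IsHill.exists_short (hM : NormLe V M) (hg : 0 < g.2) (hJ : CyclesSteep V J g)
    (h : ζ.IsHill J W) (h₀ : (ζ.x 0).2 ≤ W) (hlen : (ζ.x ζ.len).2 ≤ W) :
    ∃ ζ' : Trajectory V, ζ'.len ≤ n * (M + (n * M) ^ 2) + 1 ∧ ζ'.IsHill J W ∧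
      ζ'.Dominates ζ := by
  induction hL : ζ.len using Nat.strong_induction_on generalizing ζ with
  | _ L ih =>
    subst hL
    by_cases hshort : ζ.len ≤ n * (M + (n * M) ^ 2) + 1
    · exact ⟨ζ, hshort, h, .refl ζ⟩
    have hstep : ∀ t < ζ.len, |(ζ.x (t + 1)).2 - (ζ.x t).2| ≤ M := fun t ht =>
      (vnorm_le_iff.1 (hM _ (ζ.step t ht))).2
    obtain ⟨i, j, i', j', hc⟩ := exists_isCancelling (c := ζ.st) hstep h₀ hlen
      (fun t ht htL => (h t ht htL).1) (not_le.1 hshort)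
    obtain ⟨ζ₁, hlen₁, hhill₁, hdom₁⟩ := h.exists_dominates_of_isCancelling hg hJ hc
    obtain ⟨ζ', hlen', hhill', hdom'⟩ :=
      ih ζ₁.len hlen₁ hhill₁ (by rwa [hdom₁.x_zero]) (by rwa [hdom₁.snd_len]) rfl
    exact ⟨ζ', hlen', hhill', hdom'.trans hdom₁⟩

end Trajectory

end Hills

/-! ### Walks along a strip -/

section StripWalks

variable {n M : ℕ} {V : Set (Transition n)} {r r' r'' : Fin n × ℤ} {d d' : ℤ}
  {γ γ' : List (Transition n)}

theorem card_strip_mul_le_scale (hN : 0 < size n M) :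
    n * (stripWidth n M + 1) * (n * (M + (n * M) ^ 2) + 1) * M ≤ scale n M := by
  have hn := left_le_size hN
  have hM := right_le_size hN
  have hn₂ : 2 ≤ n + 1 := Nat.succ_le_succ (Nat.pos_of_mul_pos_right hN)
  refine le_trans ?_ (Nat.pow_le_pow_right (growth_pos hN) hn₂)
  rw [growth, stripWidth, show n * M = size n M from rfl]
  generalize size n M = N at *
  have hstrip : 14 * N ^ 3 + 1 ≤ 15 * N ^ 3 := by have := Nat.pow_pos (n := 3) hN; omega
  have hhill : n * (M + N ^ 2) + 1 ≤ 3 * N ^ 3 := by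
    calc n * (M + N ^ 2) + 1 ≤ N * (N ^ 2 + N ^ 2) + N ^ 3 := by
          gcongr
          · exact hM.trans (Nat.le_self_pow two_ne_zero N)
          · exact Nat.pow_pos hN
      _ = 3 * N ^ 3 := by ring
  calc n * (14 * N ^ 3 + 1) * (n * (M + N ^ 2) + 1) * M
      ≤ N * (15 * N ^ 3) * (3 * N ^ 3) * N := by gcongr
    _ = 45 * N ^ 8 := by ring
    _ ≤ 360000 * N ^ 12 := by
        gcongr <;> norm_num
    _ = (600 * N ^ 6) ^ 2 := by ring

/-- `γ` is a walk between configurations given by the state and the second counter only. The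
second counter stays non-negative along `γ`, the first one changes by at least `d` in total. -/
structure StripWalk (V : Set (Transition n)) (r r' : Fin n × ℤ) (d : ℤ)
    (γ : List (Transition n)) : Prop where
  walkIn : WalkIn V r.1 γ r'.1
  snd_eq : r.2 + (effect γ).2 = r'.2
  le_fst : d ≤ (effect γ).1
  nonneg : ∀ k, 0 ≤ r.2 + (effect (γ.take k)).2

theorem StripWalk.nil (hr : 0 ≤ r.2) : StripWalk V r r 0 [] where
  walkIn := .nil _
  snd_eq := by simp [effect_nil]
  le_fst := by simp [effect_nil]
  nonneg _ := by simpa [effect_nil] using hr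

theorem StripWalk.append (h : StripWalk V r r' d γ) (h' : StripWalk V r' r'' d' γ') :
    StripWalk V r r'' (d + d') (γ ++ γ') where
  walkIn := h.walkIn.append h'.walkIn
  snd_eq := by rw [effect_append, Prod.snd_add, ← add_assoc, h.snd_eq, h'.snd_eq]
  le_fst := by rw [effect_append]; exact add_le_add h.le_fst h'.le_fst
  nonneg k := by
    rcases le_total k γ.length with hk | hk
    · rw [List.take_append_of_le_length hk]
      exact h.nonneg k
    · rw [List.take_append, List.take_of_length_le hk, effect_append, Prod.snd_add, ← add_assoc,
        h.snd_eq]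
      exact h'.nonneg _

end StripWalks

namespace Trajectory

variable {n : ℕ} {V : Set (Transition n)} {ζ ζ' : Trajectory V} {a b : ℕ}

/-- The part of the trajectory between the times `a` and `b`. -/
def slice (ζ : Trajectory V) (a b : ℕ) (hb : b ≤ ζ.len) : Trajectory V where
  len := b - a
  st t := ζ.st (a + t)
  x t := ζ.x (a + t)
  step t ht := ζ.step (a + t) (by omega)

theorem Dominates.stripWalk {hb : b ≤ ζ.len} (hab : a ≤ b)
    (h : ζ'.Dominates (ζ.slice a b hb)) (hnonneg : ∀ t ≤ ζ'.len, 0 ≤ (ζ'.x t).2) :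
    StripWalk V (ζ.st a, (ζ.x a).2) (ζ.st b, (ζ.x b).2) ((ζ.x b).1 - (ζ.x a).1)
      (ζ'.seg 0 ζ'.len) := by
  obtain ⟨hst₀, hst, hx₀, hsnd, hfst⟩ := h
  simp only [slice, Nat.add_sub_cancel' hab, add_zero] at hst₀ hst hx₀ hsnd hfst
  refine ⟨hst₀ ▸ hst ▸ ζ'.walkIn_seg (Nat.zero_le _) le_rfl, ?_, ?_, fun k => ?_⟩
  · rw [ζ'.effect_seg (Nat.zero_le _), Prod.snd_sub, hx₀, hsnd, add_sub_cancel]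
  · rw [ζ'.effect_seg (Nat.zero_le _), Prod.fst_sub, hx₀]
    linarith
  · rw [← hx₀]
    rcases le_total k ζ'.len with hk | hk
    · rw [ζ'.take_seg k (by omega), ζ'.effect_seg (Nat.zero_le _), Prod.snd_sub, add_sub_cancel,
        zero_add]
      exact hnonneg k hk
    · rw [List.take_of_length_le (by rwa [ζ'.length_seg]), ζ'.effect_seg (Nat.zero_le _),
        Prod.snd_sub, add_sub_cancel]
      exact hnonneg _ le_rfl

end Trajectory

namespace Run

variable {n M : ℕ} {V : Set (Transition n)} {ρ : Run V M} {g : Vec2} {J : Set (Fin n)} {a b : ℕ}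
  {e : ℕ × ℕ}

variable (ρ) in
/-- The second counter is small at time `t`. -/
def Strip (t : ℕ) : Prop := (ρ.x t).2 ≤ stripWidth n M

variable (ρ) in
/-- The configuration at time `t`, up to its first counter. -/
def stripConf (t : ℕ) : Fin n × ℤ := (ρ.st t, (ρ.x t).2)

variable (ρ) in
/-- `e` is a pair of consecutive strip times between `a` and `b`. -/
structure IsHop (a b : ℕ) (e : ℕ × ℕ) : Prop where
  le_fst : a ≤ e.1
  lt : e.1 < e.2
  snd_le : e.2 ≤ b
  strip_fst : ρ.Strip e.1
  strip_snd : ρ.Strip e.2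
  not_strip : ∀ s, e.1 < s → s < e.2 → ¬ ρ.Strip s

theorem exists_isHop_walk (hab : a ≤ b) (ha : ρ.Strip a) (hb : ρ.Strip b) :
    ∃ l : List (ℕ × ℕ), (∀ e ∈ l, ρ.IsHop a b e) ∧
      IsWalk (fun e => ρ.stripConf e.1) (fun e => ρ.stripConf e.2) (ρ.stripConf a) l
        (ρ.stripConf b) ∧
      (l.map fun e => (ρ.x e.2).1 - (ρ.x e.1).1).sum = (ρ.x b).1 - (ρ.x a).1 := by
  induction b using Nat.strong_induction_on with
  | _ b ih =>
    rcases hab.eq_or_lt with rfl | hab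
    · exact ⟨[], by simp, rfl, by simp⟩
    rcases exists_last_or_forall_not ρ.Strip a b with hno | ⟨r, har, hrb, hr, hlast⟩
    · exact absurd ha (hno a le_rfl hab)
    obtain ⟨l, hhop, hwalk, hsum⟩ := ih r hrb har hr
    refine ⟨l ++ [(r, b)], fun e he => ?_, hwalk.append ⟨rfl, rfl⟩, by simp [hsum]⟩
    rcases List.mem_append.1 he with he | he
    · exact { hhop e he with snd_le := (hhop e he).snd_le.trans hrb.le }
    · obtain rfl := List.mem_singleton.1 he
      exact ⟨har, hrb, le_rfl, hr, hb, hlast⟩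

theorem IsHop.exists_stripWalk (h : ρ.IsHop a b e) (hg : 0 < g.2) (hJ : CyclesSteep V J g)
    (hb : b ≤ ρ.len) (hmem : ∀ t, a ≤ t → t ≤ b → ¬ ρ.Strip t → ρ.st t ∈ J) :
    ∃ γ, γ.length ≤ n * (M + (n * M) ^ 2) + 1 ∧
      StripWalk V (ρ.stripConf e.1) (ρ.stripConf e.2) ((ρ.x e.2).1 - (ρ.x e.1).1) γ := by
  obtain ⟨hae, hlt, heb, hs₁, hs₂, hnot⟩ := h
  let ζ := ρ.toTrajectory.slice e.1 e.2 (heb.trans hb)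
  have hx_len : ζ.x ζ.len = ρ.x e.2 := congrArg ρ.x (Nat.add_sub_cancel' hlt.le)
  have hhill : ζ.IsHill J (stripWidth n M) := fun t ht htL => by
    have htL : t < e.2 - e.1 := htL
    have hns := hnot (e.1 + t) (by omega) (by omega)
    exact ⟨not_le.1 hns, hmem _ (by omega) (by omega) hns⟩
  obtain ⟨ζ', hlen, hhill', hdom⟩ := hhill.exists_short ρ.normLe hg hJ hs₁ (by rwa [hx_len])
  refine ⟨ζ'.seg 0 ζ'.len, by rwa [ζ'.length_seg], hdom.stripWalk hlt.le fun t ht => ?_⟩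
  rcases ht.eq_or_lt with rfl | ht
  · rw [hdom.snd_len, hx_len]
    exact (ρ.nonneg e.2 (by omega)).2
  rcases t.eq_zero_or_pos with rfl | ht₀
  · rw [hdom.x_zero]
    exact (ρ.nonneg e.1 (by omega)).2
  · exact (Nat.cast_nonneg _).trans (hhill' t ht₀ ht).1.le

theorem exists_stripWalk_of_isWalk {K : ℕ} {l : List (ℕ × ℕ)} {r r' : Fin n × ℤ}
    (hl : ∀ e ∈ l, ∃ γ, γ.length ≤ K ∧
      StripWalk V (ρ.stripConf e.1) (ρ.stripConf e.2) ((ρ.x e.2).1 - (ρ.x e.1).1) γ)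
    (h : IsWalk (fun e => ρ.stripConf e.1) (fun e => ρ.stripConf e.2) r l r') (hr : 0 ≤ r'.2) :
    ∃ γ, γ.length ≤ l.length * K ∧
      StripWalk V r r' (l.map fun e => (ρ.x e.2).1 - (ρ.x e.1).1).sum γ := by
  induction l generalizing r with
  | nil =>
    obtain rfl : r = r' := h
    exact ⟨[], by simp, by simpa using StripWalk.nil hr⟩
  | cons e l ih =>
    obtain ⟨rfl, h⟩ := h
    obtain ⟨γ₁, hlen₁, hγ₁⟩ := hl e List.mem_cons_self
    obtain ⟨γ₂, hlen₂, hγ₂⟩ := ih (fun e he => hl e (List.mem_cons_of_mem _ he)) h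
    refine ⟨γ₁ ++ γ₂, ?_, by simpa using hγ₁.append hγ₂⟩
    rw [List.length_append, List.length_cons, Nat.succ_mul, add_comm]
    exact add_le_add hlen₂ hlen₁

theorem exists_closed_stripWalk (hg : 0 < g.2) (hJ : CyclesSteep V J g) (hab : a ≤ b)
    (hb : b ≤ ρ.len) (hmem : ∀ t, a ≤ t → t ≤ b → ¬ ρ.Strip t → ρ.st t ∈ J) (hsa : ρ.Strip a)
    (hsb : ρ.Strip b) (hconf : ρ.stripConf a = ρ.stripConf b) (hlt : (ρ.x a).1 < (ρ.x b).1) :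
    ∃ s γ d, a ≤ s ∧ s ≤ b ∧ 0 < d ∧ StripWalk V (ρ.stripConf s) (ρ.stripConf s) d γ ∧
      γ.length ≤ n * (stripWidth n M + 1) * (n * (M + (n * M) ^ 2) + 1) := by
  obtain ⟨l, hhop, hwalk, hsum⟩ := exists_isHop_walk hab hsa hsb
  rw [← hconf] at hwalk
  obtain ⟨l', r, hsub, hlen, hwalk', hpos⟩ := hwalk.exists_short_closed_of_pos
    ((Finset.univ : Finset (Fin n)) ×ˢ Finset.Icc (0 : ℤ) (stripWidth n M))
    (fun e he => by
      obtain ⟨-, hlt, heb, hs, -⟩ := hhop e he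
      simpa [stripConf] using ⟨(ρ.nonneg e.1 (by omega)).2, hs⟩)
    (fun e => (ρ.x e.2).1 - (ρ.x e.1).1) (by rw [hsum]; linarith)
  cases l' with
  | nil => simp at hpos
  | cons e l' =>
    obtain ⟨hae, hlt, heb, -⟩ := hhop e (hsub List.mem_cons_self)
    obtain rfl : ρ.stripConf e.1 = r := hwalk'.1
    obtain ⟨γ, hγ_len, hγ⟩ := exists_stripWalk_of_isWalk
      (fun e he => (hhop e (hsub he)).exists_stripWalk hg hJ hb hmem) hwalk'
      (ρ.nonneg e.1 (by omega)).2
    refine ⟨e.1, γ, _, hae, by omega, hpos, hγ, hγ_len.trans (Nat.mul_le_mul_right _ ?_)⟩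
    simpa [Finset.card_product] using hlen

theorem exists_pumpable_horizontal (hN : 0 < size n M) (hg : 0 < g.2) (hJ : CyclesSteep V J g)
    (hab : a ≤ b) (hb : b ≤ ρ.len) (hmem : ∀ t, a ≤ t → t ≤ b → ¬ ρ.Strip t → ρ.st t ∈ J)
    (hx : ∀ t, a ≤ t → t ≤ b → (scale n M : ℤ) ≤ (ρ.x t).1) (hsa : ρ.Strip a) (hsb : ρ.Strip b)
    (hconf : ρ.stripConf a = ρ.stripConf b) (hlt : (ρ.x a).1 < (ρ.x b).1) :
    ∃ h : ℤ, 0 < h ∧ h ≤ scale n M ∧ ρ.Pumpable (scale n M) b (h, 0) := by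
  obtain ⟨s, γ, d, has, hsb', hd, hγ, hlen⟩ :=
    exists_closed_stripWalk hg hJ hab hb hmem hsa hsb hconf hlt
  have hscale := card_strip_mul_le_scale hN
  have hM : 0 < M := Nat.pos_of_mul_pos_left hN
  have hlen_scale := hlen.trans ((Nat.le_mul_of_pos_right _ hM).trans hscale)
  have hbound (k : ℕ) : |(effect (γ.take k)).1| ≤ scale n M :=
    (vnorm_le_iff.1 <| (ρ.normLe.vnorm_effect_le
      (fun e he => hγ.walkIn.1 e (List.mem_of_mem_take he))
      ((List.length_take_le' _ _).trans hlen)).trans hscale).1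
  have heff : effect γ = ((effect γ).1, 0) :=
    Prod.ext rfl (add_eq_left.1 hγ.snd_eq)
  have hpos : 0 < (effect γ).1 := hd.trans_le hγ.le_fst
  refine ⟨(effect γ).1, hpos, ?_, ?_⟩
  · simpa using (abs_le.1 (hbound γ.length)).2
  · rw [← heff]
    refine ((Pumpable.of_walkIn (hsb'.trans hb) hγ.walkIn (fun k => ⟨?_, hγ.nonneg k⟩)
      ?_).mono_length hlen_scale).mono_time hsb' hb
    · have h₁ := (abs_le.1 (hbound k)).1
      have h₂ := hx s has hsb'
      exact show 0 ≤ (ρ.x s).1 + _ by linarith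
    · rw [heff]
      exact ⟨hpos.le, le_rfl⟩

end Run

/-! ### Flat pumps -/

theorem exists_take_flatten_replicate_eq {E : Type*} (K i : ℕ) (c : List E) :
    ∃ j ≤ K, ∃ i', (List.replicate K c).flatten.take i =
      (List.replicate j c).flatten ++ c.take i' ∧ (j = K → i' = 0) := by
  induction K generalizing i with
  | zero => exact ⟨0, le_rfl, 0, by simp⟩
  | succ K ih =>
    rw [List.replicate_succ, List.flatten_cons, List.take_append]
    rcases le_or_gt i c.length with hi | hi
    · exact ⟨0, by omega, i, by simp [Nat.sub_eq_zero_of_le hi], by omega⟩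
    · obtain ⟨j, hj, i', h, hi'⟩ := ih (i - c.length)
      refine ⟨j + 1, by omega, i', ?_, by omega⟩
      rw [h, List.take_of_length_le hi.le, List.replicate_succ, List.flatten_cons,
        List.append_assoc]

theorem nonneg_add_nsmul_of_le {G : Type*} [AddCommGroup G] [LinearOrder G] [IsOrderedAddMonoid G]
    {u v : G} {j K : ℕ} (hu : 0 ≤ u) (h : 0 ≤ u + K • v) (hj : j ≤ K) : 0 ≤ u + j • v := by
  rcases le_total 0 v with hv | hv
  · exact add_nonneg hu (nsmul_nonneg hv j)
  · refine h.trans (add_le_add_right ?_ u)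
    rw [← Nat.add_sub_cancel' hj, add_nsmul]
    exact add_le_of_nonpos_right (nsmul_nonpos hv _)

section SteepConstants

variable {n M : ℕ}

/-- A bound on the change of the slope defect in one step. -/
def slack (n M : ℕ) : ℕ := 4 * scale n M * M

/-- A bound on the growth of the first counter between consecutive times in the strip. -/
def gap (n M : ℕ) : ℕ := 2 * scale n M * stripWidth n M + (n + 1) * slack n M

/-- A bound on the growth of the slope defect while no new state is visited outside the strips. -/
def phaseGrowth (n M : ℕ) : ℕ := gap n M * (n * (stripWidth n M + 1) + 1)

theorem scale_add_mul_phaseGrowth_le (hN : 0 < size n M) :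
    scale n M + M + (n + 1) * (slack n M + phaseGrowth n M) ≤ scale n M ^ 4 := by
  have hn := left_le_size hN
  have hM := right_le_size hN
  have hD : 600 * size n M ^ 6 ≤ scale n M := growth_le_scale
  have hD₀ : 0 < scale n M := (growth_pos hN).trans_le growth_le_scale
  rw [phaseGrowth, gap, slack, stripWidth]
  generalize scale n M = D at *
  generalize size n M = N at *
  have hgap : 2 * D * (14 * N ^ 3) + (n + 1) * (4 * D * M) ≤ 36 * (D * N ^ 3) := calc
    _ ≤ 2 * D * (14 * N ^ 3) + (N + N) * (4 * D * N) := by gcongr; exact hN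
    _ = 28 * (D * N ^ 3) + 8 * (D * N ^ 2) := by ring
    _ ≤ 28 * (D * N ^ 3) + 8 * (D * N ^ 3) := by gcongr; omega
    _ = 36 * (D * N ^ 3) := by ring
  have hbox : n * (14 * N ^ 3 + 1) + 1 ≤ 16 * N ^ 4 := calc
    _ ≤ N * (14 * N ^ 3 + N ^ 3) + N ^ 4 := by gcongr <;> exact Nat.one_le_pow _ _ hN
    _ = 16 * N ^ 4 := by ring
  calc _ ≤ D * N ^ 8 + D * N ^ 8 + (N + N) * (4 * D * N + 36 * (D * N ^ 3) * (16 * N ^ 4)) := by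
        gcongr
        · exact Nat.le_mul_of_pos_right _ (Nat.pow_pos hN)
        · exact (hM.trans (Nat.le_self_pow (by norm_num) _)).trans (Nat.le_mul_of_pos_left _ hD₀)
        · exact hN
    _ = 2 * (D * N ^ 8) + 8 * (D * N ^ 2) + 1152 * (D * N ^ 8) := by ring
    _ ≤ 2 * (D * N ^ 12) + 8 * (D * N ^ 12) + 1152 * (D * N ^ 12) := by gcongr <;> omega
    _ ≤ D * (600 * N ^ 6) ^ 2 := by ring_nf; gcongr; norm_num
    _ ≤ D * D ^ 2 := by gcongr
    _ = D ^ 3 := by ring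
    _ ≤ D ^ 4 := Nat.pow_le_pow_right hD₀ (by norm_num)

theorem size_mul_add_mul_size_le :
    size n M * scale n M ^ 3 + 2 * scale n M * size n M ≤ scale n M ^ 4 := calc
  _ ≤ size n M * scale n M ^ 3 + 2 * scale n M ^ 3 * size n M := by
      gcongr; exact Nat.le_self_pow (by norm_num) _
  _ ≤ 600 * size n M * scale n M ^ 3 := by ring_nf; gcongr; norm_num
  _ ≤ scale n M * scale n M ^ 3 := by gcongr; exact mul_size_le_scale
  _ = scale n M ^ 4 := by ring

theorem mul_two_mul_add_le_sq :
    size n M * (2 * scale n M) + 2 * scale n M * size n M ≤ scale n M ^ 2 := calc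
  _ ≤ 600 * size n M * scale n M := by ring_nf; gcongr; norm_num
  _ ≤ scale n M * scale n M := by gcongr; exact mul_size_le_scale
  _ = scale n M ^ 2 := by ring

end SteepConstants

namespace Run

variable {n M : ℕ} {V : Set (Transition n)} {ρ : Run V M} {g v : Vec2} {J : Set (Fin n)}
  {a b s t T A A' ℓ : ℕ} {c : List (Transition n)}

theorem Interior.pumpable_nsmul_add_nsmul (hs : ρ.Interior s) (hsl : s ≤ ρ.len)
    (hg : ρ.Pumpable ℓ s g) (hc : WalkIn V (ρ.st s) c (ρ.st s)) (hl : c.length ≤ n) (k K : ℕ)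
    (h : 0 ≤ k • g + K • effect c) :
    ρ.Pumpable (k * ℓ + K * c.length) s (k • g + K • effect c) := by
  have hW : ((n * M : ℕ) : ℤ) ≤ stripWidth n M := mod_cast size_le_stripWidth
  have hkg := hg.nsmul hsl k
  have hcat := hkg.append (hc.flatten_replicate K) (fun i => ?_) (by rwa [effect_flatten_replicate])
  · simpa only [effect_flatten_replicate, List.length_flatten, List.map_replicate,
      List.sum_replicate_nat] using hcat
  · obtain ⟨j, hj, i', hi', -⟩ := exists_take_flatten_replicate_eq K i c
    have hcopies : 0 ≤ k • g + j • effect c :=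
      ⟨nonneg_add_nsmul_of_le hkg.nonneg.1 h.1 hj, nonneg_add_nsmul_of_le hkg.nonneg.2 h.2 hj⟩
    have hpart := ρ.normLe.nonneg_effect_take hc.1 hl (hW.trans hs.1.le) (hW.trans hs.2.le) i'
    rw [hi', effect_append, effect_flatten_replicate]
    exact (add_nonneg hpart hcopies).trans_eq (by abel)

variable (ρ) in
/-- No small horizontal vector can be pumped up to time `T`. -/
def NoHorizontal (T : ℕ) : Prop :=
  ∀ h : ℤ, 0 < h → h ≤ scale n M ^ 2 → ¬ ρ.Pumpable (scale n M ^ 4) T (h, 0)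

theorem NoHorizontal.snd_pos (hno : ρ.NoHorizontal t) (hN : 0 < size n M)
    (hv : ρ.Pumpable (scale n M ^ 3) t v) (hvn : vnorm v ≤ 2 * scale n M) (hv₀ : v ≠ 0) :
    0 < v.2 := by
  refine lt_of_le_of_ne hv.nonneg.2 fun h₂ => ?_
  have hv_eq : v = (v.1, 0) := Prod.ext rfl h₂.symm
  have h₁ : 0 < v.1 := lt_of_le_of_ne hv.nonneg.1 fun h₁ => hv₀ (Prod.ext h₁.symm h₂.symm)
  have hscale := mul_size_le_scale (n := n) (M := M)
  have hle : 2 * scale n M ≤ scale n M ^ 2 := by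
    rw [sq]; exact Nat.mul_le_mul_right _ (by omega)
  refine hno v.1 h₁ (((vnorm_le_iff_of_nonneg hv.nonneg).1 hvn).1.trans (mod_cast hle)) ?_
  rw [← hv_eq]
  exact hv.mono_length (Nat.pow_le_pow_right (by omega) (by norm_num))

theorem NoHorizontal.anti (hno : ρ.NoHorizontal T) (hT : T ≤ ρ.len) (ht : t ≤ T) :
    ρ.NoHorizontal t := fun h h₀ h₁ hp => hno h h₀ h₁ (hp.mono_time ht hT)

variable (ρ) in
/-- `g` is a small pumpable vector at time `t` that is not horizontal. -/
structure Candidate (t : ℕ) (g : Vec2) : Prop where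
  pumpable : ρ.Pumpable (scale n M ^ 3) t g
  snd_pos : 0 < g.2
  vnorm_le : vnorm g ≤ 2 * scale n M

namespace Candidate

theorem fst_nonneg (hg : ρ.Candidate t g) : 0 ≤ g.1 := hg.pumpable.nonneg.1

theorem fst_le (hg : ρ.Candidate t g) : g.1 ≤ 2 * scale n M :=
  mod_cast ((vnorm_le_iff_of_nonneg hg.pumpable.nonneg).1 hg.vnorm_le).1

theorem snd_le (hg : ρ.Candidate t g) : g.2 ≤ 2 * scale n M :=
  mod_cast ((vnorm_le_iff_of_nonneg hg.pumpable.nonneg).1 hg.vnorm_le).2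

theorem mono_time (hg : ρ.Candidate s g) (hst : s ≤ t) (ht : t ≤ ρ.len) : ρ.Candidate t g :=
  { hg with pumpable := hg.pumpable.mono_time hst ht }

theorem not_noHorizontal_of_descending (hg : ρ.Candidate s g) (hs : ρ.Interior s)
    (hsl : s ≤ ρ.len) (hc : WalkIn V (ρ.st s) c (ρ.st s)) (hl : c.length ≤ n)
    (hdesc : (effect c).2 < 0) (hlt : g.1 * (effect c).2 < g.2 * (effect c).1) :
    ¬ ρ.NoHorizontal s := fun hno => by
  obtain ⟨hc₁, hc₂⟩ := vnorm_le_iff.1 (ρ.normLe.vnorm_effect_le hc.1 hl)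
  rw [abs_le] at hc₁ hc₂
  obtain ⟨k, hk⟩ := Int.eq_ofNat_of_zero_le (show 0 ≤ -(effect c).2 by omega)
  obtain ⟨K, hK⟩ := Int.eq_ofNat_of_zero_le hg.snd_pos.le
  have hk_le : k ≤ size n M := by rw [size]; omega
  have hK_le : K ≤ 2 * scale n M := by have := hg.snd_le; omega
  have heff : k • g + K • effect c = (k * g.1 + g.2 * (effect c).1, 0) := by
    ext
    · rw [Prod.fst_add, Prod.smul_fst, Prod.smul_fst, nsmul_eq_mul, nsmul_eq_mul, hK]
    · rw [Prod.snd_add, Prod.smul_snd, Prod.smul_snd, nsmul_eq_mul, nsmul_eq_mul, ← hK, ← hk]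
      ring
  have hpos : 0 < k * g.1 + g.2 * (effect c).1 := by rw [← hk]; linarith
  have hpump := hs.pumpable_nsmul_add_nsmul hsl hg.pumpable hc hl k K
    (by rw [heff]; exact ⟨hpos.le, le_rfl⟩)
  rw [heff] at hpump
  refine hno _ hpos ?_ (hpump.mono_length ?_)
  · calc k * g.1 + g.2 * (effect c).1
        ≤ size n M * g.1 + g.2 * size n M :=
          add_le_add (mul_le_mul_of_nonneg_right (mod_cast hk_le) hg.fst_nonneg)
            (mul_le_mul_of_nonneg_left hc₁.2 hg.snd_pos.le)
      _ ≤ size n M * (2 * scale n M) + 2 * scale n M * size n M :=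
          add_le_add (mul_le_mul_of_nonneg_left hg.fst_le (by positivity))
            (mul_le_mul_of_nonneg_right hg.snd_le (by positivity))
      _ ≤ scale n M ^ 2 := mod_cast mul_two_mul_add_le_sq
  · refine le_trans ?_ size_mul_add_mul_size_le
    gcongr
    exact hl.trans (left_le_size (by rw [size]; omega))

end Candidate

variable (ρ) in
/-- `g` is a candidate of the smallest slope at time `t`. -/
structure IsFlattest (t : ℕ) (g : Vec2) : Prop extends ρ.Candidate t g where
  max : ∀ w, ρ.Candidate t w → w.1 * g.2 ≤ g.1 * w.2

theorem Candidate.exists_isFlattest (hv : ρ.Candidate t v) : ∃ g, ρ.IsFlattest t g :=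
  let ⟨g, hg, hmax⟩ := exists_max_slope (S := {g | ρ.Candidate t g})
    (fun _ hw => ⟨hw.fst_nonneg, hw.snd_pos, hw.vnorm_le⟩) ⟨v, hv⟩
  ⟨g, hg, hmax⟩

theorem IsFlattest.le_of_pumpable (hg : ρ.IsFlattest t g) (hN : 0 < size n M)
    (hno : ρ.NoHorizontal t) (hv : ρ.Pumpable (scale n M ^ 3) t v)
    (hvn : vnorm v ≤ 2 * scale n M) : g.2 * v.1 ≤ g.1 * v.2 := by
  rcases eq_or_ne v 0 with rfl | hv₀
  · simp
  · linarith [hg.max v ⟨hv, hno.snd_pos hN hv hvn hv₀, hvn⟩]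

variable (ρ) in
/-- The states visited outside the strips between the times `a` and `t`. -/
def interiorStates (a t : ℕ) : Set (Fin n) := {q | ∃ s, a ≤ s ∧ s ≤ t ∧ ρ.Interior s ∧ ρ.st s = q}

/-- A short cycle flatter than `g` is either non-negative, hence a pump itself, or it combines with
copies of `g` to a horizontal pump. -/
theorem IsFlattest.cyclesSteep (hg : ρ.IsFlattest a g) (hN : 0 < size n M) (ht : t ≤ ρ.len)
    (hvis : ρ.visited a = ρ.visited t) (hno : ρ.NoHorizontal t) :
    CyclesSteep V (ρ.interiorStates a t) g := by
  rintro q ⟨s, has, hst, hs, rfl⟩ c hc hl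
  have hno_s := hno.anti ht hst
  by_contra! hlt
  rcases lt_or_ge (effect c).2 0 with h₂ | h₂
  · exact (hg.mono_time has (hst.trans ht)).not_noHorizontal_of_descending hs (hst.trans ht) hc hl
      h₂ hlt hno_s
  · have h₁ : 0 ≤ (effect c).1 := (pos_of_mul_pos_right
      ((mul_nonneg hg.fst_nonneg h₂).trans_lt hlt) hg.snd_pos.le).le
    obtain ⟨s', hs'a, hs', hss'⟩ := mem_visited.1 (hvis ▸ mem_visited.2 ⟨s, hst, hs, rfl⟩)
    have hscale := mul_size_le_scale (n := n) (M := M)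
    have hn := left_le_size hN
    have hpow : scale n M ≤ scale n M ^ 3 := Nat.le_self_pow (by norm_num) _
    have hpump := (hs'.pumpable (by omega) (hss'.symm ▸ hc) hl ⟨h₁, h₂⟩).mono_time hs'a (by omega)
    refine hlt.not_ge (hg.le_of_pumpable hN (hno_s.anti (by omega) has)
      (hpump.mono_length (by omega)) ((ρ.normLe.vnorm_effect_le hc.1 hl).trans ?_))
    rw [← size]
    omega

variable (ρ) in
/-- The amount by which the configuration at time `t` is flatter than `g`, that is, the determinant
of `g` and the configuration. -/
def slopeDefect (g : Vec2) (t : ℕ) : ℤ := g.2 * (ρ.x t).1 - g.1 * (ρ.x t).2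

theorem Candidate.slopeDefect_le (hg : ρ.Candidate a g) (ht : t ≤ ρ.len) :
    ρ.slopeDefect g t ≤ g.2 * (ρ.x t).1 :=
  sub_le_self _ (mul_nonneg hg.fst_nonneg (ρ.nonneg t ht).2)

theorem Candidate.add_mul_le_slack (hg : ρ.Candidate a g) : (g.2 + g.1) * M ≤ slack n M := by
  rw [slack]
  push_cast
  exact mul_le_mul_of_nonneg_right (by linarith [hg.fst_le, hg.snd_le]) (by positivity)

theorem Candidate.slopeDefect_succ_le (hg : ρ.Candidate a g) (ht : t < ρ.len) :
    ρ.slopeDefect g (t + 1) ≤ ρ.slopeDefect g t + slack n M := by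
  obtain ⟨h₁, h₂⟩ := vnorm_le_iff.1 (vnorm_step_le ht)
  have hfst := mul_le_mul_of_nonneg_left (abs_le.1 h₁).2 hg.snd_pos.le
  have hsnd := mul_le_mul_of_nonneg_left (abs_le.1 h₂).1 hg.fst_nonneg
  rw [Prod.fst_sub] at hfst
  rw [Prod.snd_sub] at hsnd
  rw [slopeDefect, slopeDefect]
  linarith [hg.add_mul_le_slack]

theorem Candidate.slopeDefect_le_add (hg : ρ.Candidate a g) (hJ : CyclesSteep V J g) {e r : ℕ}
    (her : e ≤ r) (hr : r ≤ ρ.len) (hmem : ∀ s, e < s → s < r → ρ.st s ∈ J) :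
    ρ.slopeDefect g r ≤ ρ.slopeDefect g e + (n + 1) * slack n M := by
  rcases her.eq_or_lt with rfl | her
  · exact le_add_of_nonneg_right (by positivity)
  have hfirst := hg.slopeDefect_succ_le (her.trans_le hr)
  have hrest := ρ.linear_le_add (a := e + 1) (b := r) ρ.normLe her hr g.2 (-g.1)
    fun s hes hsr c hc hl => by linarith [hJ _ (hmem s (by omega) hsr) c hc hl]
  rw [abs_neg, abs_of_pos hg.snd_pos, abs_of_nonneg hg.fst_nonneg] at hrest
  have hslack := mul_le_mul_of_nonneg_left hg.add_mul_le_slack (Nat.cast_nonneg (α := ℤ) n)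
  rw [slopeDefect] at *
  rw [slopeDefect] at *
  linarith

variable (ρ) in
/-- Between the times `a` and `t` the first counter is large, and outside the strip only states in
`J` are visited, all of whose short cycles are steeper than the candidate `g`. -/
structure IsSteepPhase (J : Set (Fin n)) (g : Vec2) (a t : ℕ) : Prop where
  candidate : ρ.Candidate t g
  le_len : t ≤ ρ.len
  noHorizontal : ρ.NoHorizontal t
  cyclesSteep : CyclesSteep V J g
  lt_fst : ∀ s, a < s → s ≤ t → (scale n M : ℤ) < (ρ.x s).1
  mem : ∀ s, a < s → s ≤ t → ¬ ρ.Strip s → ρ.st s ∈ J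

namespace IsSteepPhase

theorem fst_le_add_gap (h : ρ.IsSteepPhase J g a t) {r : ℕ} (hr : r ≤ ρ.len) (hs : ρ.Strip r)
    {Y : ℤ} (hY : ρ.slopeDefect g r ≤ g.2 * Y + (n + 1) * slack n M) :
    (ρ.x r).1 ≤ Y + gap n M := by
  have hg := h.candidate
  have hsnd : g.1 * (ρ.x r).2 ≤ 2 * scale n M * stripWidth n M :=
    mul_le_mul hg.fst_le hs (ρ.nonneg r hr).2 (by positivity)
  have hmul : g.2 * (ρ.x r).1 ≤ g.2 * Y + gap n M := by
    rw [slopeDefect] at hY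
    rw [gap]
    push_cast
    linarith
  refine le_of_mul_le_mul_left (hmul.trans ?_) hg.snd_pos
  rw [mul_add]
  exact add_le_add_right (le_mul_of_one_le_left (by positivity) hg.snd_pos) _

theorem fst_le_of_stripConf_eq (h : ρ.IsSteepPhase J g a t) (hN : 0 < size n M) {r₁ r₂ : ℕ}
    (ha : a < r₁) (hr : r₁ ≤ r₂) (ht : r₂ ≤ t) (hs₁ : ρ.Strip r₁) (hs₂ : ρ.Strip r₂)
    (hconf : ρ.stripConf r₁ = ρ.stripConf r₂) : (ρ.x r₂).1 ≤ (ρ.x r₁).1 := by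
  by_contra! hlt
  obtain ⟨k, hk, hk_le, hpump⟩ := exists_pumpable_horizontal hN h.candidate.snd_pos h.cyclesSteep
    hr (ht.trans h.le_len) (fun s h₁ h₂ => h.mem s (by omega) (by omega))
    (fun s h₁ h₂ => (h.lt_fst s (by omega) (by omega)).le) hs₁ hs₂ hconf hlt
  refine h.noHorizontal.anti h.le_len ht k hk (hk_le.trans ?_)
    (hpump.mono_length (Nat.le_self_pow (by norm_num) _))
  exact_mod_cast Nat.le_self_pow (n := 2) (by norm_num) (scale n M)

theorem fst_le_of_strip (h : ρ.IsSteepPhase J g a t) (hN : 0 < size n M)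
    (hA : ρ.slopeDefect g a ≤ A * g.2) {r : ℕ} (har : a < r) (hrt : r ≤ t) (hr : ρ.Strip r) :
    (ρ.x r).1 ≤ A + gap n M * (n * (stripWidth n M + 1)) := by
  have hbound := le_add_mul_card_of_colored {r | a < r ∧ r ≤ t ∧ ρ.Strip r} (fun r => (ρ.x r).1)
    ρ.stripConf (Nat.cast_nonneg (gap n M))
    ((Finset.univ : Finset (Fin n)) ×ˢ Finset.Icc (0 : ℤ) (stripWidth n M)) (L := A)
    (fun r ⟨_, hrt, hr⟩ _ => by
      simpa [stripConf] using ⟨(ρ.nonneg r (hrt.trans h.le_len)).2, hr⟩)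
    (fun r ⟨har, hrt, hr⟩ => by
      have hr_len := hrt.trans h.le_len
      rcases exists_last_or_forall_not ρ.Strip (a + 1) r with hno | ⟨e, hae, her, he, hno⟩
      · refine Or.inl (h.fst_le_add_gap hr_len hr ?_)
        have := h.candidate.slopeDefect_le_add h.cyclesSteep har.le hr_len
          fun s has hsr => h.mem s has (by omega) (hno s has hsr)
        linarith
      · refine Or.inr ⟨e, her, ⟨hae, by omega, he⟩, h.fst_le_add_gap hr_len hr ?_⟩
        have := h.candidate.slopeDefect_le_add h.cyclesSteep her.le hr_len
          fun s hes hsr => h.mem s (by omega) (by omega) (hno s hes hsr)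
        linarith [h.candidate.slopeDefect_le (t := e) (by omega)])
    (fun r₁ ⟨har, _, hs₁⟩ r₂ ⟨_, hrt, hs₂⟩ hr hconf =>
      h.fst_le_of_stripConf_eq hN har hr.le hrt hs₁ hs₂ hconf) ⟨har, hrt, hr⟩
  simpa [Finset.card_product] using hbound

theorem slopeDefect_le (h : ρ.IsSteepPhase J g a t) (hN : 0 < size n M) (hat : a ≤ t)
    (hA : ρ.slopeDefect g a ≤ A * g.2) :
    ρ.slopeDefect g t ≤ (A + phaseGrowth n M : ℕ) * g.2 := by
  have hg := h.candidate
  have hslack : ((n + 1) * slack n M : ℤ) ≤ gap n M * g.2 := calc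
    ((n + 1) * slack n M : ℤ) ≤ gap n M := by
      rw [gap]; push_cast; exact le_add_of_nonneg_left (by positivity)
    _ ≤ gap n M * g.2 := le_mul_of_one_le_right (by positivity) hg.snd_pos
  have hrec : (0 : ℤ) ≤ gap n M * (n * (stripWidth n M + 1)) * g.2 :=
    mul_nonneg (by positivity) hg.snd_pos.le
  rw [phaseGrowth]
  push_cast
  rcases exists_last_or_forall_not ρ.Strip (a + 1) (t + 1) with hno | ⟨e, hae, het, he, hno⟩
  · have := hg.slopeDefect_le_add h.cyclesSteep hat h.le_len
      fun s has hst => h.mem s has hst.le (hno s has (by omega))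
    linarith
  · have := hg.slopeDefect_le_add h.cyclesSteep (Nat.le_of_lt_succ het) h.le_len
      fun s hes hst => h.mem s (by omega) hst.le (hno s hes (by omega))
    have := hg.slopeDefect_le (t := e) (by have := h.le_len; omega)
    have := mul_le_mul_of_nonneg_left
      (h.fst_le_of_strip hN hA hae (Nat.le_of_lt_succ het) he) hg.snd_pos.le
    linarith

end IsSteepPhase

variable (ρ) in
/-- Some candidate at time `t` is steeper than the configuration by at most `A`. -/
def Flat (A t : ℕ) : Prop := ∃ g, ρ.Candidate t g ∧ ρ.slopeDefect g t ≤ A * g.2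

namespace Flat

theorem mono (h : ρ.Flat A t) (hA : A ≤ A') : ρ.Flat A' t := by
  obtain ⟨g, hg, h⟩ := h
  exact ⟨g, hg, h.trans (mul_le_mul_of_nonneg_right (mod_cast hA) hg.snd_pos.le)⟩

theorem succ (h : ρ.Flat A t) (ht : t < ρ.len) : ρ.Flat (A + slack n M) (t + 1) := by
  obtain ⟨g, hg, h⟩ := h
  refine ⟨g, hg.mono_time t.le_succ ht, (hg.slopeDefect_succ_le ht).trans ?_⟩
  rw [Nat.cast_add, add_mul]
  exact add_le_add h (le_mul_of_one_le_right (by positivity) hg.snd_pos)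

theorem exists_isFlattest (h : ρ.Flat A t) (ht : t ≤ ρ.len) :
    ∃ g, ρ.IsFlattest t g ∧ ρ.slopeDefect g t ≤ A * g.2 := by
  obtain ⟨v, hv, h⟩ := h
  obtain ⟨g, hg⟩ := hv.exists_isFlattest
  refine ⟨g, hg, le_of_mul_le_mul_left (a := v.2) ?_ hv.snd_pos⟩
  have h₁ := mul_le_mul_of_nonneg_right (hg.max v hv) (ρ.nonneg t ht).2
  have h₂ := mul_le_mul_of_nonneg_right h hg.snd_pos.le
  rw [slopeDefect] at *
  linarith

theorem of_visited_eq (h : ρ.Flat A a) (hN : 0 < size n M) (hat : a ≤ t) (ht : t ≤ ρ.len)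
    (hvis : ρ.visited a = ρ.visited t) (hno : ρ.NoHorizontal t) (hA : scale n M ≤ A) :
    ρ.Flat (A + phaseGrowth n M) t := by
  obtain ⟨g, hg, hdef⟩ := h.exists_isFlattest (hat.trans ht)
  obtain ⟨t₀, hat₀, ht₀, hlt, hdef₀⟩ : ∃ t₀, a ≤ t₀ ∧ t₀ ≤ t ∧
      (∀ s, t₀ < s → s ≤ t → (scale n M : ℤ) < (ρ.x s).1) ∧ ρ.slopeDefect g t₀ ≤ A * g.2 := by
    rcases exists_last_or_forall_not (fun s => (ρ.x s).1 ≤ scale n M) a (t + 1) with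
      hno | ⟨r, har, hrt, hr, hno⟩
    · exact ⟨a, le_rfl, hat, fun s has hst => not_le.1 (hno s has.le (by omega)), hdef⟩
    · refine ⟨r, har, by omega, fun s hrs hst => not_le.1 (hno s hrs (by omega)), ?_⟩
      have hrA : (ρ.x r).1 ≤ A := hr.trans (mod_cast hA)
      rw [mul_comm]
      exact (hg.slopeDefect_le (by omega)).trans (mul_le_mul_of_nonneg_left hrA hg.snd_pos.le)
  have hW : (stripWidth n M : ℤ) ≤ scale n M := mod_cast stripWidth_le_scale hN
  have hphase : ρ.IsSteepPhase (ρ.interiorStates a t) g t₀ t :=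
    { candidate := hg.mono_time hat ht
      le_len := ht
      noHorizontal := hno
      cyclesSteep := hg.cyclesSteep hN ht hvis hno
      lt_fst := hlt
      mem s has hst hs := ⟨s, by omega, hst, ⟨hW.trans_lt (hlt s has hst), not_le.1 hs⟩, rfl⟩ }
  exact ⟨g, hphase.candidate, hphase.slopeDefect_le hN ht₀ hdef₀⟩

theorem of_le (h : ρ.Flat A a) (hN : 0 < size n M) (hA : scale n M ≤ A) (hat : a ≤ t)
    (ht : t ≤ ρ.len) (hno : ρ.NoHorizontal t) :
    ρ.Flat (A + ((ρ.visited t).card + 1) * (slack n M + phaseGrowth n M)) t := by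
  induction t using Nat.strong_induction_on with
  | _ t ih =>
    have hex : ∃ b, a ≤ b ∧ ρ.visited b = ρ.visited t := ⟨t, hat, rfl⟩
    obtain ⟨hab, hvis⟩ := Nat.find_spec hex
    have hbt : Nat.find hex ≤ t := Nat.find_min' hex ⟨hat, rfl⟩
    have hmin : ∀ s, a ≤ s → s < Nat.find hex → ρ.visited s ≠ ρ.visited t :=
      fun s has hs heq => Nat.find_min hex hs ⟨has, heq⟩
    generalize Nat.find hex = b at hab hvis hbt hmin
    rcases hab.eq_or_lt with rfl | hab
    · exact (h.of_visited_eq hN hat ht hvis hno hA).mono (by nlinarith)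
    · obtain ⟨s, rfl⟩ : ∃ s, b = s + 1 := ⟨b - 1, by omega⟩
      have hflat := ih s hbt (by omega) (by omega) (hno.anti ht (by omega))
      have hcard : (ρ.visited s).card < (ρ.visited t).card := Finset.card_lt_card
        ((visited_mono (by omega)).ssubset_of_ne (hmin s (by omega) (by omega)))
      refine ((hflat.succ (by omega)).of_visited_eq hN hbt ht hvis hno (by omega)).mono ?_
      nlinarith

end Flat

theorem exists_flat_of_noHorizontal (hN : 0 < size n M) (hT : T ≤ ρ.len)
    (hbig : scale n M < vnorm (ρ.x T)) (hno : ρ.NoHorizontal T) : ρ.Flat (scale n M ^ 4) T := by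
  obtain ⟨a, haT, hab, hfirst⟩ := exists_first_lt_vnorm hbig
  have ha := haT.trans hT
  obtain ⟨v, hv₀, hv, hvn⟩ := exists_pumpable_of_scale_lt hN ha hab hfirst
  have hcand : ρ.Candidate a v := ⟨hv, (hno.anti hT haT).snd_pos hN hv hvn hv₀, hvn⟩
  have hflat : ρ.Flat (scale n M + M) a := by
    refine ⟨v, hcand, (hcand.slopeDefect_le ha).trans ?_⟩
    rw [mul_comm]
    exact mul_le_mul_of_nonneg_right ((vnorm_le_iff_of_nonneg (ρ.nonneg a ha)).1
      (vnorm_le_add_of_forall_lt ha hfirst)).1 hcand.snd_pos.le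
  refine (hflat.of_le hN (by omega) haT hT hno).mono
    (le_trans ?_ (scale_add_mul_phaseGrowth_le hN))
  gcongr
  exact card_visited_le

variable (ρ) in
/-- `g` is a nonzero vector of norm at most `scale ^ 2` that can be pumped up to time `T`. -/
structure IsBoundedPump (T : ℕ) (g : Vec2) : Prop where
  pumpable : ρ.Pumpable (scale n M ^ 4) T g
  ne_zero : g ≠ 0
  vnorm_le : vnorm g ≤ scale n M ^ 2

variable (ρ) in
/-- A bounded pump that is steeper than the configuration by a bounded amount only. -/
structure IsFlatPump (T : ℕ) (g : Vec2) : Prop extends ρ.IsBoundedPump T g where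
  slopeDefect_le : ρ.slopeDefect g T ≤ scale n M ^ 4 * g.2

theorem exists_isFlatPump (hN : 0 < size n M) (hT : T ≤ ρ.len)
    (hbig : scale n M < vnorm (ρ.x T)) : ∃ g, ρ.IsFlatPump T g := by
  have hscale := mul_size_le_scale (n := n) (M := M)
  by_cases hno : ρ.NoHorizontal T
  · obtain ⟨g, hg, hdef⟩ := exists_flat_of_noHorizontal hN hT hbig hno
    refine ⟨g, ⟨hg.pumpable.mono_length (Nat.pow_le_pow_right (by omega) (by norm_num)), ?_,
      hg.vnorm_le.trans ?_⟩, mod_cast hdef⟩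
    · rintro rfl
      exact lt_irrefl _ hg.snd_pos
    · rw [sq]
      exact Nat.mul_le_mul_right _ (by omega)
  · simp only [NoHorizontal, not_forall, not_not] at hno
    obtain ⟨h, hpos, hle, hpump⟩ := hno
    refine ⟨(h, 0), ⟨hpump, fun h₀ => hpos.ne' (congrArg Prod.fst h₀), ?_⟩, ?_⟩
    · exact (vnorm_le_iff_of_nonneg hpump.nonneg).2 ⟨mod_cast hle, by positivity⟩
    · simpa [slopeDefect] using mul_nonneg hpos.le (ρ.nonneg T hT).2

end Run

/-! ### Pumping from both ends -/

section Cone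

variable {p q u v : Vec2} {A Γ : ℕ}

theorem det_zsmul (p q v : Vec2) :
    (p.1 * q.2 - p.2 * q.1) • v =
      (v.1 * q.2 - v.2 * q.1) • p + (p.1 * v.2 - p.2 * v.1) • q := by
  ext <;> simp only [Prod.fst_add, Prod.snd_add, Prod.smul_fst, Prod.smul_snd, smul_eq_mul] <;> ring

theorem add_zsmul_of_det_eq_zero (h : p.1 * v.2 - p.2 * v.1 = 0) :
    (p.1 + p.2) • v = (v.1 + v.2) • p := by
  ext <;> simp only [Prod.smul_fst, Prod.smul_snd, smul_eq_mul] <;> linarith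

theorem fst_add_snd_pos (hp : 0 ≤ p) (hp₀ : p ≠ 0) : 0 < p.1 + p.2 := by
  obtain ⟨h₁, h₂⟩ : 0 ≤ p.1 ∧ 0 ≤ p.2 := hp
  by_contra! h
  exact hp₀ (Prod.ext (show p.1 = 0 by omega) (show p.2 = 0 by omega))

theorem fst_add_snd_le (hp : 0 ≤ p) (hpΓ : vnorm p ≤ Γ) : p.1 + p.2 ≤ 2 * Γ ^ 2 := by
  obtain ⟨h₁, h₂⟩ := (vnorm_le_iff_of_nonneg hp).1 hpΓ
  have hΓ : (Γ : ℤ) ≤ Γ ^ 2 := mod_cast Nat.le_self_pow two_ne_zero Γ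
  linarith

theorem det_le (hp : 0 ≤ p) (hq : 0 ≤ q) (hpΓ : vnorm p ≤ Γ) (hqΓ : vnorm q ≤ Γ) :
    p.1 * q.2 - p.2 * q.1 ≤ 2 * Γ ^ 2 := by
  obtain ⟨hpΓ₁, -⟩ := (vnorm_le_iff_of_nonneg hp).1 hpΓ
  obtain ⟨-, hqΓ₂⟩ := (vnorm_le_iff_of_nonneg hq).1 hqΓ
  calc p.1 * q.2 - p.2 * q.1 ≤ p.1 * q.2 := sub_le_self _ (mul_nonneg hp.2 hq.1)
    _ ≤ Γ * Γ := mul_le_mul hpΓ₁ hqΓ₂ hq.2 (Nat.cast_nonneg Γ)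
    _ ≤ 2 * Γ ^ 2 := by rw [← sq]; linarith [sq_nonneg (Γ : ℤ)]

theorem exists_zsmul_eq_add (hp : 0 ≤ p) (hq : 0 ≤ q) (hv : 0 ≤ v) (hp₀ : p ≠ 0) (hq₀ : q ≠ 0)
    (hpΓ : vnorm p ≤ Γ) (hqΓ : vnorm q ≤ Γ) (hvΓ : vnorm v ≤ Γ)
    (hpv : p.2 * v.1 ≤ p.1 * v.2) (hvq : v.2 * q.1 ≤ v.1 * q.2) :
    ∃ a b c : ℤ, a ∈ Set.Icc 0 (2 * (Γ : ℤ) ^ 2) ∧ b ∈ Set.Icc 0 (2 * (Γ : ℤ) ^ 2) ∧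
      c ∈ Set.Ioc 0 (2 * (Γ : ℤ) ^ 2) ∧ c • v = a • p + b • q := by
  have hp' := fst_add_snd_pos hp hp₀
  have hq' := fst_add_snd_pos hq hq₀
  have hv' : 0 ≤ v.1 + v.2 := add_nonneg hv.1 hv.2
  rcases (sub_nonneg.2 hpv).eq_or_lt with h | h
  · refine ⟨v.1 + v.2, 0, p.1 + p.2, ⟨hv', fst_add_snd_le hv hvΓ⟩, ⟨le_rfl, by positivity⟩,
      ⟨hp', fst_add_snd_le hp hpΓ⟩, ?_⟩
    rw [add_zsmul_of_det_eq_zero h.symm, zero_smul, add_zero]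
  · have hdet : 0 < p.1 * q.2 - p.2 * q.1 := by
      refine pos_of_mul_pos_left ?_ hv'
      calc (0 : ℤ) < (v.1 * q.2 - v.2 * q.1) * (p.1 + p.2) +
            (p.1 * v.2 - p.2 * v.1) * (q.1 + q.2) :=
          add_pos_of_nonneg_of_pos (mul_nonneg (sub_nonneg.2 hvq) hp'.le) (mul_pos h hq')
        _ = (p.1 * q.2 - p.2 * q.1) * (v.1 + v.2) := by ring
    exact ⟨_, _, _, ⟨sub_nonneg.2 hvq, det_le hv hq hvΓ hqΓ⟩, ⟨h.le, det_le hp hv hpΓ hvΓ⟩,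
      ⟨hdet, det_le hp hq hpΓ hqΓ⟩, det_zsmul p q v⟩

theorem exists_nsmul_eq_add (hp : 0 ≤ p) (hq : 0 ≤ q) (hv : 0 ≤ v) (hp₀ : p ≠ 0) (hq₀ : q ≠ 0)
    (hpΓ : vnorm p ≤ Γ) (hqΓ : vnorm q ≤ Γ) (hvΓ : vnorm v ≤ Γ)
    (hpv : p.2 * v.1 ≤ p.1 * v.2) (hvq : v.2 * q.1 ≤ v.1 * q.2) :
    ∃ a ≤ 2 * Γ ^ 2, ∃ b ≤ 2 * Γ ^ 2, ∃ c ≤ 2 * Γ ^ 2, c ≠ 0 ∧ c • v = a • p + b • q := by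
  obtain ⟨a, b, c, ⟨ha, ha'⟩, ⟨hb, hb'⟩, ⟨hc, hc'⟩, h⟩ :=
    exists_zsmul_eq_add hp hq hv hp₀ hq₀ hpΓ hqΓ hvΓ hpv hvq
  lift a to ℕ using ha
  lift b to ℕ using hb
  lift c to ℕ using hc.le
  exact ⟨a, mod_cast ha', b, mod_cast hb', c, mod_cast hc', mod_cast hc.ne', by simpa using h⟩

/-- The determinant of `p` and `q` times `u` is small, since it combines the two defects. -/
theorem steep_le_flat (hp : 0 ≤ p) (hq : 0 ≤ q) (hu : 0 ≤ u) (hpΓ : vnorm p ≤ Γ)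
    (hqΓ : vnorm q ≤ Γ) (hpu : p.1 * u.2 ≤ p.2 * u.1 + A * p.1)
    (hqu : q.2 * u.1 ≤ q.1 * u.2 + A * q.2) (hbig : 2 * A * Γ ^ 2 < vnorm u) :
    p.1 * q.2 ≤ p.2 * q.1 := by
  obtain ⟨hpΓ₁, hpΓ₂⟩ := (vnorm_le_iff_of_nonneg hp).1 hpΓ
  obtain ⟨hqΓ₁, hqΓ₂⟩ := (vnorm_le_iff_of_nonneg hq).1 hqΓ
  obtain ⟨hp₁, hp₂⟩ : 0 ≤ p.1 ∧ 0 ≤ p.2 := hp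
  obtain ⟨hq₁, hq₂⟩ : 0 ≤ q.1 ∧ 0 ≤ q.2 := hq
  by_contra! hdet
  refine hbig.not_ge ((vnorm_le_iff_of_nonneg hu).2 ⟨?_, ?_⟩)
  · calc u.1 ≤ (p.1 * q.2 - p.2 * q.1) * u.1 := le_mul_of_one_le_left hu.1 (by omega)
      _ = p.1 * (q.2 * u.1) - q.1 * (p.2 * u.1) := by ring
      _ ≤ p.1 * (q.1 * u.2 + A * q.2) - q.1 * (p.1 * u.2 - A * p.1) := by gcongr; linarith
      _ = A * (p.1 * q.2 + p.1 * q.1) := by ring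
      _ ≤ A * (Γ * Γ + Γ * Γ) := by gcongr
      _ = (2 * A * Γ ^ 2 : ℕ) := by push_cast; ring
  · calc u.2 ≤ (p.1 * q.2 - p.2 * q.1) * u.2 := le_mul_of_one_le_left hu.2 (by omega)
      _ = q.2 * (p.1 * u.2) - p.2 * (q.1 * u.2) := by ring
      _ ≤ q.2 * (p.2 * u.1 + A * p.1) - p.2 * (q.2 * u.1 - A * q.2) := by gcongr; linarith
      _ = A * (p.1 * q.2 + p.2 * q.2) := by ring
      _ ≤ A * (Γ * Γ + Γ * Γ) := by gcongr
      _ = (2 * A * Γ ^ 2 : ℕ) := by push_cast; ring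

end Cone

namespace Run

variable {n M : ℕ} {V W : Set (Transition n)} {ρ : Run V M} {σ : Run W M}
  {T T' ℓ t : ℕ} {g g' h p q : Vec2}

variable (ρ) in
/-- A bounded pump that is flatter than the configuration by a bounded amount only. -/
structure IsSteepPump (T : ℕ) (g : Vec2) : Prop extends ρ.IsBoundedPump T g where
  neg_slopeDefect_le : -ρ.slopeDefect g T ≤ scale n M ^ 4 * g.1

theorem exists_isSteepPump (hN : 0 < size n M) (hT : T ≤ ρ.len)
    (hbig : scale n M < vnorm (ρ.x T)) : ∃ g, ρ.IsSteepPump T g := by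
  obtain ⟨g, hg⟩ := exists_isFlatPump (ρ := ρ.swap) hN hT (by rwa [← vnorm_swap] at hbig)
  refine ⟨g.swap, ⟨hg.pumpable.of_swap, fun h => hg.ne_zero (Prod.swap_injective h), ?_⟩, ?_⟩
  · rw [vnorm_swap]
    exact hg.vnorm_le
  · refine le_trans (le_of_eq ?_) hg.slopeDefect_le
    simp [slopeDefect, swap]

theorem Pumpable.combination (ht : t ≤ ρ.len) (hp : ρ.Pumpable ℓ t p) (hq : ρ.Pumpable ℓ t q)
    {a b K : ℕ} (ha : a ≤ K) (hb : b ≤ K) : ρ.Pumpable (2 * K * ℓ) t (a • p + b • q) :=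
  ((hp.nsmul ht a).add (hq.nsmul ht b)).mono_length <| calc
    a * ℓ + b * ℓ ≤ K * ℓ + K * ℓ := by gcongr
    _ = 2 * K * ℓ := by ring

theorem four_mul_scale_pow_le (hN : 0 < size n M) : 4 * scale n M ^ 8 ≤ scale n M ^ 9 := by
  have h := mul_size_le_scale (n := n) (M := M)
  rw [pow_succ' _ 8]
  gcongr
  omega

theorem IsSteepPump.le_flat (hp : ρ.IsSteepPump T p) (hq : σ.IsFlatPump T' q) (hT : T ≤ ρ.len)
    (hx : σ.x T' = ρ.x T) (hN : 0 < size n M) (hbig : scale n M ^ 9 < vnorm (ρ.x T)) :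
    p.1 * q.2 ≤ p.2 * q.1 := by
  have hpu := hp.neg_slopeDefect_le
  have hqu := hq.slopeDefect_le
  rw [slopeDefect] at hpu hqu
  rw [hx] at hqu
  refine steep_le_flat (A := scale n M ^ 4) hp.pumpable.nonneg hq.pumpable.nonneg (ρ.nonneg T hT)
    hp.vnorm_le hq.vnorm_le (by push_cast; linarith) (by push_cast; linarith)
    (lt_of_le_of_lt ?_ hbig)
  calc 2 * scale n M ^ 4 * (scale n M ^ 2) ^ 2 = 2 * scale n M ^ 8 := by ring
    _ ≤ 4 * scale n M ^ 8 := by gcongr; norm_num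
    _ ≤ scale n M ^ 9 := four_mul_scale_pow_le hN

theorem exists_common_of_mem_cone (hg : ρ.IsBoundedPump T g) (hg' : ρ.IsBoundedPump T g')
    (hh : σ.IsBoundedPump T' h) (hT : T ≤ ρ.len) (hT' : T' ≤ σ.len) (hN : 0 < size n M)
    (hgh : g.2 * h.1 ≤ g.1 * h.2) (hhg : h.2 * g'.1 ≤ h.1 * g'.2) :
    ∃ m ≠ 0, ρ.Pumpable (scale n M ^ 9) T m ∧ σ.Pumpable (scale n M ^ 9) T' m := by
  obtain ⟨a, ha, b, hb, c, hc, hc₀, hcomb⟩ := exists_nsmul_eq_add hg.pumpable.nonneg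
    hg'.pumpable.nonneg hh.pumpable.nonneg hg.ne_zero hg'.ne_zero hg.vnorm_le hg'.vnorm_le
    hh.vnorm_le hgh hhg
  have hscale := four_mul_scale_pow_le hN
  refine ⟨c • h, smul_ne_zero hc₀ hh.ne_zero, ?_, (hh.pumpable.nsmul hT' c).mono_length ?_⟩
  · rw [hcomb]
    exact (hg.pumpable.combination hT hg'.pumpable ha hb).mono_length
      (le_trans (by ring_nf; rfl) hscale)
  · calc c * scale n M ^ 4 ≤ 2 * (scale n M ^ 2) ^ 2 * scale n M ^ 4 := by gcongr
      _ = 2 * scale n M ^ 8 := by ring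
      _ ≤ scale n M ^ 9 := by omega

theorem exists_common (hN : 0 < size n M) (hT : T ≤ ρ.len) (hT' : T' ≤ σ.len)
    (hx : σ.x T' = ρ.x T) (hbig : scale n M ^ 9 < vnorm (ρ.x T)) :
    ∃ m ≠ 0, ρ.Pumpable (scale n M ^ 9) T m ∧ σ.Pumpable (scale n M ^ 9) T' m := by
  have hbig₁ : scale n M < vnorm (ρ.x T) := (Nat.le_self_pow (by norm_num) _).trans_lt hbig
  obtain ⟨g, hg⟩ := exists_isFlatPump hN hT hbig₁
  obtain ⟨g', hg'⟩ := exists_isSteepPump hN hT hbig₁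
  obtain ⟨h, hh⟩ := exists_isFlatPump hN hT' (hx ▸ hbig₁)
  obtain ⟨h', hh'⟩ := exists_isSteepPump hN hT' (hx ▸ hbig₁)
  rcases le_total (g.2 * h.1) (g.1 * h.2) with hgh | hgh
  · refine exists_common_of_mem_cone hg.toIsBoundedPump hg'.toIsBoundedPump hh.toIsBoundedPump
      hT hT' hN hgh ?_
    linarith [hg'.le_flat hh hT hx hN hbig]
  · obtain ⟨m, hm, hσ, hρ⟩ := exists_common_of_mem_cone hh.toIsBoundedPump hh'.toIsBoundedPump
      hg.toIsBoundedPump hT' hT hN (by linarith)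
      (by linarith [hh'.le_flat hg hT' hx.symm hN (hx ▸ hbig)])
    exact ⟨m, hm, hρ, hσ⟩

theorem size_pos (hT : T ≤ ρ.len) (hpos : 0 < vnorm (ρ.x T)) : 0 < size n M := by
  obtain ⟨a, haT, hpos, hfirst⟩ := exists_first_lt_vnorm hpos
  have hM := vnorm_le_add_of_forall_lt (haT.trans hT) hfirst
  exact Nat.mul_pos (ρ.st 0).pos (by omega)

theorem exists_pump_of_vnorm_gt (h0 : ρ.x ρ.len = 0) (hT : T ≤ ρ.len)
    (hbig : scale n M ^ 9 < vnorm (ρ.x T)) :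
    ∃ P, ρ.IsPump P (2 * scale n M ^ 9) ρ.len 0 ∧ ∃ s ≤ T, P s ≠ [] := by
  obtain ⟨m, hm, ⟨P, hP⟩, Q, hQ⟩ := exists_common (size_pos hT (by omega)) hT
    (Nat.sub_le ρ.len T) (σ := ρ.rev h0) (congrArg ρ.x (Nat.sub_sub_self hT)) hbig
  refine ⟨_, two_mul (scale n M ^ 9) ▸ hP.combine hT hQ, ?_⟩
  by_contra! hnil
  refine hm (hP.gain_eq ▸ Finset.sum_eq_zero fun s hs => ?_)
  rw [(List.append_eq_nil_iff.1 (hnil s (Finset.mem_range_succ_iff.1 hs))).1, effect_nil]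

theorem exists_pump_of_conf_eq {i j : ℕ} (hij : i < j) (hj : j ≤ ρ.len)
    (heq : ρ.conf i = ρ.conf j) : ∃ P, ρ.IsPump P (j - i) ρ.len 0 ∧ P i ≠ [] := by
  obtain ⟨hst, hx⟩ := Prod.mk.inj heq
  have heff : effect (ρ.seg i j) = 0 := by rw [ρ.effect_seg hij.le, hx, sub_self]
  have hP := (IsPump.zero (ℓ := 0) (hij.le.trans hj)).append (c := ρ.seg i j)
    (by simpa only [hst] using ρ.walkIn_seg hij.le hj) (fun k => ?_) (by rw [heff, add_zero])
  · rw [heff, add_zero, ρ.length_seg, zero_add] at hP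
    refine ⟨_, hP.mono_time (hij.le.trans hj) le_rfl, ?_⟩
    simp [ρ.seg_eq_cons hij]
  · rw [add_zero]
    rcases le_total k (j - i) with hk | hk
    · rw [ρ.take_seg k (by omega), ρ.effect_seg (Nat.le_add_right i k), add_sub_cancel]
      exact ρ.nonneg _ (by omega)
    · rw [List.take_of_length_le (by rwa [ρ.length_seg]), heff, add_zero]
      exact ρ.nonneg i (hij.le.trans hj)

theorem exists_conf_eq {B L : ℕ} (hL : L ≤ ρ.len) (hcard : n * (B + 1) ^ 2 ≤ L)
    (hB : ∀ t ≤ L, vnorm (ρ.x t) ≤ B) : ∃ i j, i < j ∧ j ≤ L ∧ ρ.conf i = ρ.conf j := by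
  have hbox : ∀ t ∈ Finset.range (L + 1), ρ.conf t ∈
      Finset.univ ×ˢ (Finset.Icc (0 : ℤ) B ×ˢ Finset.Icc (0 : ℤ) B) := fun t ht => by
    have ht := Finset.mem_range_succ_iff.1 ht
    have h₀ := ρ.nonneg t (ht.trans hL)
    have h₁ := (vnorm_le_iff_of_nonneg h₀).1 (hB t ht)
    simpa [Trajectory.conf] using ⟨⟨h₀.1, h₁.1⟩, h₀.2, h₁.2⟩
  obtain ⟨i, -, j, hj, hij, heq⟩ := exists_lt_map_eq_of_card_lt (by
    simp only [Finset.card_product, Finset.card_univ, Fintype.card_fin, Int.card_Icc, sub_zero,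
      Int.toNat_natCast_add_one, Finset.card_range, ← sq]
    exact Nat.lt_succ_of_le hcard) hbox
  exact ⟨i, j, hij, Finset.mem_range_succ_iff.1 hj, heq⟩

theorem exists_pump_early (h0 : ρ.x ρ.len = 0) (hlen : bound n M ≤ ρ.len) :
    ∃ P, ρ.IsPump P (bound n M) ρ.len 0 ∧ ∃ s ≤ bound n M, P s ≠ [] := by
  by_cases hbig : ∃ T ≤ bound n M, scale n M ^ 9 < vnorm (ρ.x T)
  · obtain ⟨T, hT, hbig⟩ := hbig
    obtain ⟨P, hP, s, hs, hPs⟩ := exists_pump_of_vnorm_gt h0 (hT.trans hlen) hbig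
    refine ⟨P, hP.mono_length ?_, s, hs.trans hT, hPs⟩
    calc 2 * scale n M ^ 9 ≤ (scale n M ^ 9 + 1) ^ 2 := by rw [add_sq]; omega
      _ ≤ bound n M := Nat.le_mul_of_pos_left _ (ρ.st 0).pos
  · push Not at hbig
    obtain ⟨i, j, hij, hj, heq⟩ := exists_conf_eq hlen le_rfl hbig
    obtain ⟨P, hP, hPi⟩ := exists_pump_of_conf_eq hij (hj.trans hlen) heq
    exact ⟨P, hP.mono_length (by omega), i, by omega, hPi⟩

theorem exists_pump (h0 : ρ.x ρ.len = 0) (hlen : bound n M ≤ ρ.len) :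
    ∃ P, ρ.IsPump P (2 * bound n M) ρ.len 0 ∧ (∃ s ≤ bound n M, P s ≠ []) ∧
      ∃ s ≤ ρ.len, ρ.len - s ≤ bound n M ∧ P s ≠ [] := by
  obtain ⟨P, hP, s, hs, hPs⟩ := exists_pump_early h0 hlen
  have h0' : (ρ.rev h0).x (ρ.rev h0).len = 0 := (congrArg ρ.x (Nat.sub_self _)).trans ρ.start
  obtain ⟨Q, hQ, r, hr, hQr⟩ := exists_pump_early h0' hlen
  have hPQ := hP.add ((IsPump.zero (ℓ := 0) ρ.len.zero_le).combine ρ.len.zero_le hQ)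
  rw [zero_add, ← two_mul, add_zero] at hPQ
  refine ⟨_, hPQ, ⟨s, hs, fun h => hPs (List.append_eq_nil_iff.1 h).1⟩,
    ρ.len - r, Nat.sub_le _ _, by omega, fun h => hQr ?_⟩
  have hr' : r ≤ ρ.len := hr.trans hlen
  simpa [revPump, Nat.sub_sub_self hr'] using (List.append_eq_nil_iff.1 h).2

end Run

/-! ### Factorization of a run -/

section Paths

variable {n : ℕ} {V : VASS n} {p q : Fin n} {π l : List (Transition n)}

theorem IsWalk.isChain {E S : Type*} {src tgt : E → S} {p q : S} {l : List E}
    (h : IsWalk src tgt p l q) : l.IsChain fun e f => tgt e = src f := by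
  induction l generalizing p with
  | nil => exact List.isChain_nil
  | cons e l ih =>
    cases l with
    | nil => exact List.isChain_singleton e
    | cons f l => exact List.isChain_cons_cons.2 ⟨h.2.1.symm, ih h.2⟩

theorem WalkIn.isPath (h : WalkIn (V : Set _) p l q) : IsPath V l := ⟨h.1, h.2.isChain⟩

theorem WalkIn.startsAt (h : WalkIn (V : Set _) p l q) : startsAt l p := by
  cases l with
  | nil => simp [_root_.startsAt]
  | cons e l => simpa [_root_.startsAt] using h.2.1

theorem IsWalk.map_getLast? {E S : Type*} {src tgt : E → S} {p q : S} {l : List E}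
    (h : IsWalk src tgt p l q) (hl : l ≠ []) : l.getLast?.map tgt = some q := by
  induction l generalizing p with
  | nil => exact absurd rfl hl
  | cons e l ih =>
    cases l with
    | nil => exact congrArg some h.2
    | cons f l => simpa using ih h.2 (by simp)

theorem WalkIn.isCycle (h : WalkIn (V : Set _) p l p) (hl : l ≠ []) : IsCycle V l := by
  refine ⟨h.isPath, hl, ?_⟩
  rw [h.2.map_getLast? hl]
  cases l with
  | nil => exact absurd rfl hl
  | cons e l => exact congrArg some h.2.1

theorem stateAt_succ (q : Fin n) {t : ℕ} (ht : t < π.length) :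
    stateAt π q (t + 1) = π[t].2.2 := by
  rw [stateAt, List.take_succ_eq_append_getElem ht, List.getLast?_concat]
  rfl

theorem stateAt_eq (hπ : IsPath V π) (hq : startsAt π q) {t : ℕ} (ht : t < π.length) :
    stateAt π q t = π[t].1 := by
  cases t with
  | zero => simpa [stateAt] using (hq π[0] (by simp [List.head?_eq_getElem?, ht])).symm
  | succ t =>
    rw [stateAt_succ q (by omega)]
    exact List.isChain_iff_getElem.1 hπ.2 t ht

theorem vecAt_succ_sub (u : Vec2) {t : ℕ} (ht : t < π.length) :
    vecAt π u (t + 1) - vecAt π u t = π[t].2.1 := by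
  rw [vecAt, vecAt, List.take_succ_eq_append_getElem ht, effect_append, effect_cons, effect_nil,
    add_zero, ← add_assoc, add_sub_cancel_left]

theorem normLe_vassNorm (V : VASS n) : NormLe (V : Set (Transition n)) (vassNorm V) :=
  fun _ he => Finset.le_sup (f := fun t : Transition n => vnorm t.2.1) he

theorem step_eq_getElem (h : IsRun V π q 0) {t : ℕ} (ht : t < π.length) :
    (stateAt π q t, vecAt π 0 (t + 1) - vecAt π 0 t, stateAt π q (t + 1)) = π[t] := by
  rw [stateAt_eq h.1 h.2.1 ht, vecAt_succ_sub 0 ht, stateAt_succ q ht]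

/-- A run from zero counters, indexed by time. -/
def Run.ofIsRun (h : IsRun V π q 0) : Run (V : Set (Transition n)) (vassNorm V) where
  len := π.length
  st := stateAt π q
  x := vecAt π 0
  step t ht := step_eq_getElem h ht ▸ h.1.1 _ (List.getElem_mem ht)
  normLe := normLe_vassNorm V
  nonneg := h.2.2
  start := by simp [vecAt, effect_nil]

theorem Run.seg_ofIsRun (h : IsRun V π q 0) : (Run.ofIsRun h).seg 0 π.length = π := by
  refine List.ext_getElem (by simp [Trajectory.length_seg]) fun t _ ht => ?_
  simp only [Trajectory.seg, List.getElem_map, List.getElem_range', zero_add, one_mul]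
  exact step_eq_getElem h ht

end Paths

section Inserted

variable {n : ℕ} {V : Set (Transition n)} {P : ℕ → List (Transition n)} {a : ℕ}

namespace Trajectory

variable (ζ : Trajectory V)

/-- The part of the trajectory from time `a` on, with `P s` inserted `i` times at each time `s`. -/
def inserted (P : ℕ → List (Transition n)) (i a : ℕ) : List (Transition n) :=
  (List.range' a (ζ.len - a)).flatMap (fun s => (List.replicate i (P s)).flatten ++ [ζ.tr s]) ++
    (List.replicate i (P ζ.len)).flatten

theorem inserted_len (P : ℕ → List (Transition n)) (i : ℕ) :
    ζ.inserted P i ζ.len = (List.replicate i (P ζ.len)).flatten := by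
  simp [inserted]

theorem inserted_of_lt (P : ℕ → List (Transition n)) (i : ℕ) (ha : a < ζ.len) :
    ζ.inserted P i a =
      (List.replicate i (P a)).flatten ++ ζ.tr a :: ζ.inserted P i (a + 1) := by
  rw [inserted, show ζ.len - a = ζ.len - (a + 1) + 1 by omega, List.range'_succ, List.flatMap_cons,
    inserted]
  simp only [List.append_assoc, List.cons_append, List.nil_append]

theorem inserted_zero (P : ℕ → List (Transition n)) (a : ℕ) :
    ζ.inserted P 0 a = ζ.seg a ζ.len := by
  simp [inserted, seg, List.map_eq_flatMap]

theorem walkIn_inserted (hP : ∀ s, WalkIn V (ζ.st s) (P s) (ζ.st s)) (i : ℕ) (ha : a ≤ ζ.len) :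
    WalkIn V (ζ.st a) (ζ.inserted P i a) (ζ.st ζ.len) := by
  induction ha using Nat.decreasingInduction with
  | self => exact ζ.inserted_len P i ▸ (hP _).flatten_replicate i
  | of_succ a ha ih =>
    have htr : WalkIn V (ζ.st a) [ζ.tr a] (ζ.st (a + 1)) :=
      ⟨List.forall_mem_singleton.2 (ζ.step a ha), rfl, rfl⟩
    rw [ζ.inserted_of_lt P i ha]
    exact ((hP a).flatten_replicate i).append (htr.append ih)

theorem effect_inserted (P : ℕ → List (Transition n)) (i : ℕ) (ha : a ≤ ζ.len) :
    effect (ζ.inserted P i a) =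
      ζ.x ζ.len - ζ.x a + i • (gain P (ζ.len + 1) - gain P a) := by
  induction ha using Nat.decreasingInduction with
  | self => rw [inserted_len, effect_flatten_replicate, gain_succ]; simp
  | of_succ a ha ih =>
    rw [ζ.inserted_of_lt P i ha, effect_append, effect_cons, ih, effect_flatten_replicate,
      gain_succ P a, tr]
    simp only [smul_sub, smul_add]
    abel

end Trajectory

namespace Run

variable {M ℓ : ℕ} {ρ : Run V M}

theorem IsPump.nonneg_replicate (h : ρ.IsPump P ℓ ρ.len 0) (ha : a ≤ ρ.len) (i k : ℕ) :
    0 ≤ ρ.x a + i • gain P a + effect ((List.replicate i (P a)).flatten.take k) := by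
  obtain ⟨j, hj, k', hk, hk'⟩ := exists_take_flatten_replicate_eq i k (P a)
  have hsucc := h.gain_nonneg (a + 1)
  rw [gain_succ] at hsucc
  have hpre : 0 ≤ ρ.x a + (i - j) • gain P a + effect ((P a).take k') := by
    rcases hj.eq_or_lt with rfl | hj
    · simpa [hk' rfl, effect_nil] using ρ.nonneg a ha
    · obtain ⟨m, hm⟩ : ∃ m, i - j = m + 1 := ⟨i - j - 1, by omega⟩
      rw [hm, succ_nsmul]
      exact (add_nonneg (h.nonneg a ha k') (nsmul_nonneg (h.gain_nonneg a) m)).trans_eq (by abel)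
  rw [hk, effect_append, effect_flatten_replicate]
  refine (add_nonneg hpre (nsmul_nonneg hsucc j)).trans_eq ?_
  conv_rhs => rw [← Nat.sub_add_cancel hj]
  rw [add_nsmul, nsmul_add]
  abel

theorem IsPump.nonneg_inserted (h : ρ.IsPump P ℓ ρ.len 0) (i : ℕ) (ha : a ≤ ρ.len) (k : ℕ) :
    0 ≤ ρ.x a + i • gain P a + effect ((ρ.inserted P i a).take k) := by
  induction ha using Nat.decreasingInduction generalizing k with
  | self => exact ρ.inserted_len P i ▸ h.nonneg_replicate le_rfl i k
  | of_succ a ha ih =>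
    rw [ρ.inserted_of_lt P i ha]
    refine nonneg_effect_take_append (h.nonneg_replicate ha.le i) (fun k => ?_) k
    have hgain : ρ.x a + i • gain P a + effect (List.replicate i (P a)).flatten =
        ρ.x a + i • gain P (a + 1) := by
      rw [effect_flatten_replicate, gain_succ, nsmul_add, add_assoc]
    rw [hgain]
    cases k with
    | zero =>
      have hstart := add_nonneg (ρ.nonneg a ha.le) (nsmul_nonneg (h.gain_nonneg (a + 1)) i)
      simpa [effect_nil] using hstart
    | succ k =>
      have htr (l : List (Transition n)) :
          effect (ρ.tr a :: l) = ρ.x (a + 1) - ρ.x a + effect l := effect_cons _ _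
      rw [List.take_succ_cons, htr]
      exact (ih k).trans_eq (by abel)

theorem IsPump.isZeroRun_inserted {V : VASS n} {ρ : Run (V : Set (Transition n)) M}
    (h : ρ.IsPump P ℓ ρ.len 0) (h₀ : ρ.x ρ.len = 0) (i : ℕ) :
    IsZeroRun V (ρ.inserted P i 0) (ρ.st 0) := by
  have hwalk := ρ.walkIn_inserted h.walkIn i (Nat.zero_le _)
  refine ⟨⟨hwalk.isPath, hwalk.startsAt, fun k _ => ?_⟩, ?_⟩
  · simpa [vecAt, ρ.start, gain] using h.nonneg_inserted i (Nat.zero_le _) k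
  · rw [ρ.effect_inserted P i (Nat.zero_le _), h₀, ρ.start, h.gain_eq_of_lt ρ.len.lt_succ_self]
    simp [gain]

end Run

end Inserted

section Factorization

variable {n a b L : ℕ} {P : ℕ → List (Transition n)}
  {w : ℕ → List (Transition n)} {τ : List (Transition n)} {τs αs : List (List (Transition n))}

theorem pumped_zero (h : τs.length = αs.length + 1) : pumped 0 τs αs = τs.flatten := by
  induction αs generalizing τs with
  | nil => cases τs <;> rfl
  | cons α αs ih =>
    cases τs with
    | nil => simp at h
    | cons τ τs => simp [pumped, ih (Nat.succ_injective h)]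

/-- The lists `w i` are `τ₀ α₁ⁱ τ₁ ⋯ α_kⁱ τ_k` for `τs = [τ₁, …, τ_k]` and `αs = [α₁, …, α_k]`,
and every `αⱼ` is a nonempty value of `P`. In a run lasting from time `a` to time `L`, the factor
`τ₀` ends no later, and `τ_k` starts no earlier, than any time `s ≥ b` with `P s` nonempty. -/
structure IsFactorization (P : ℕ → List (Transition n)) (L a b : ℕ)
    (w : ℕ → List (Transition n)) (τ₀ : List (Transition n))
    (τs αs : List (List (Transition n))) : Prop where
  length_eq : τs.length = αs.length
  pumped_eq (i : ℕ) : pumped i (τ₀ :: τs) αs = w i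
  ne_nil : ∀ α ∈ αs, α ≠ []
  mem_range : ∀ α ∈ αs, α ∈ Set.range P
  ends (s : ℕ) (hb : b ≤ s) (hL : s ≤ L) (hs : P s ≠ []) :
    τ₀.length + a ≤ s ∧ αs ≠ [] ∧ ((τ₀ :: τs).getLastD []).length + s ≤ L

namespace IsFactorization

theorem nil (P : ℕ → List (Transition n)) (L : ℕ) :
    IsFactorization P L L (L + 1) (fun _ => []) [] [] [] where
  length_eq := rfl
  pumped_eq _ := rfl
  ne_nil := by simp
  mem_range := by simp
  ends s hb hL := by omega

theorem cons (h : IsFactorization P L (a + 1) (a + 1) w τ τs αs) (e : Transition n) :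
    IsFactorization P L a (a + 1) (fun i => e :: w i) (e :: τ) τs αs where
  length_eq := h.length_eq
  pumped_eq i := by rw [← h.pumped_eq i]; cases αs <;> simp [pumped]
  ne_nil := h.ne_nil
  mem_range := h.mem_range
  ends s hb hL hs := by
    obtain ⟨hfirst, hαs, hlast⟩ := h.ends s hb hL hs
    refine ⟨by rw [List.length_cons]; omega, hαs, ?_⟩
    cases τs with
    | nil => exact absurd (List.length_eq_zero_iff.1 h.length_eq.symm) hαs
    | cons σ τs => simpa using hlast

theorem of_eq_nil (h : IsFactorization P L a (a + 1) w τ τs αs) (hP : P a = []) :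
    IsFactorization P L a a w τ τs αs :=
  { h with
    ends s hb hL hs := h.ends s (hb.lt_of_ne fun has => hs (has ▸ hP)) hL hs }

theorem insert (h : IsFactorization P L a (a + 1) w τ τs αs) (hw : (w 0).length + a ≤ L)
    (hP : P a ≠ []) :
    IsFactorization P L a a (fun i => (List.replicate i (P a)).flatten ++ w i)
      [] (τ :: τs) (P a :: αs) where
  length_eq := congrArg (· + 1) h.length_eq
  pumped_eq i := by rw [← h.pumped_eq i]; simp [pumped]
  ne_nil := List.forall_mem_cons.2 ⟨hP, h.ne_nil⟩
  mem_range := List.forall_mem_cons.2 ⟨⟨a, rfl⟩, h.mem_range⟩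
  ends s hb hL hs := by
    refine ⟨by simpa using hb, List.cons_ne_nil _ _, ?_⟩
    change ((τ :: τs).getLastD []).length + s ≤ L
    rcases hb.eq_or_lt with rfl | hb
    · have hsub : ((τ :: τs).getLastD []).Sublist (w 0) := by
        rw [← h.pumped_eq 0, pumped_zero (congrArg (· + 1) h.length_eq),
          List.getLastD_eq_getLast?, List.getLast?_eq_some_getLast (List.cons_ne_nil _ _)]
        exact List.sublist_flatten_of_mem (List.getLast_mem _)
      exact (Nat.add_le_add_right hsub.length_le a).trans hw
    · exact (h.ends s hb hL hs).2.2

theorem exists_insert (h : IsFactorization P L a (a + 1) w τ τs αs)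
    (hw : (w 0).length + a ≤ L) :
    ∃ τ τs αs, IsFactorization P L a a (fun i => (List.replicate i (P a)).flatten ++ w i)
      τ τs αs := by
  by_cases hP : P a = []
  · exact ⟨τ, τs, αs, by simpa [hP] using h.of_eq_nil hP⟩
  · exact ⟨[], τ :: τs, P a :: αs, h.insert hw hP⟩

end IsFactorization

theorem Trajectory.exists_isFactorization {V : Set (Transition n)} (ζ : Trajectory V)
    (P : ℕ → List (Transition n)) :
    ∃ τ τs αs, IsFactorization P ζ.len 0 0 (fun i => ζ.inserted P i 0) τ τs αs := by
  refine Nat.decreasingInduction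
    (motive := fun a _ =>
      ∃ τ τs αs, IsFactorization P ζ.len a a (fun i => ζ.inserted P i a) τ τs αs)
    (fun a ha ⟨_, _, _, h⟩ => ?_) ?_ (Nat.zero_le ζ.len)
  · have hw : (ζ.tr a :: ζ.inserted P 0 (a + 1)).length + a ≤ ζ.len := by
      rw [inserted_zero, List.length_cons, length_seg]; omega
    simpa only [ζ.inserted_of_lt P _ ha] using (h.cons (ζ.tr a)).exists_insert hw
  · simpa [inserted_len] using (IsFactorization.nil P ζ.len).exists_insert (by simp)

end Factorization

theorem two_mul_bound_le {n : ℕ} (hn : 0 < n) (M : ℕ) :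
    2 * bound n M ≤ ((600 * (n * M) ^ 6 + 2) ^ 40) ^ n := by
  have hscale : scale n M ≤ (600 * (n * M) ^ 6 + 2) ^ (2 * n) :=
    (Nat.pow_le_pow_left (Nat.le_add_right _ 2) _).trans
      (Nat.pow_le_pow_right (by omega) (by omega))
  have hE : 2 ≤ 600 * (n * M) ^ 6 + 2 := Nat.le_add_left _ _
  rw [bound]
  generalize 600 * (n * M) ^ 6 + 2 = E at *
  have hpow : scale n M ^ 9 + 1 ≤ 2 * E ^ (18 * n) := calc
    scale n M ^ 9 + 1 ≤ (E ^ (2 * n)) ^ 9 + E ^ (18 * n) :=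
      Nat.add_le_add (Nat.pow_le_pow_left hscale 9) (Nat.one_le_pow _ _ (by omega))
    _ = 2 * E ^ (18 * n) := by ring
  have hnE : n ≤ E ^ n := Nat.lt_two_pow_self.le.trans (Nat.pow_le_pow_left hE n)
  have h8 : 8 ≤ E ^ (3 * n) := calc
    8 = 2 ^ 3 := rfl
    _ ≤ E ^ 3 := Nat.pow_le_pow_left hE 3
    _ ≤ E ^ (3 * n) := Nat.pow_le_pow_right (by omega) (by omega)
  calc 2 * (n * (scale n M ^ 9 + 1) ^ 2) ≤ 2 * (E ^ n * (2 * E ^ (18 * n)) ^ 2) := by gcongr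
    _ = 8 * (E ^ n * E ^ (36 * n)) := by ring
    _ ≤ E ^ (3 * n) * (E ^ n * E ^ (36 * n)) := by gcongr
    _ = (E ^ 40) ^ n := by ring

end TwoVASS

open TwoVASS in
/-- Pumping.  There is a polynomial `p` with natural
coefficients such that every (0,0)-run `τ` of a 2-VASS `V` (with `n` states and
norm `M`) of length greater than `p(nM)ⁿ` factors into `τ = τ₀τ₁⋯τ_k` (k ≥ 1)
such that, for some non-empty cycles `α₁, …, α_k` of length at most `p(nM)ⁿ`,
the path `τ₀ α₁ⁱ τ₁ α₂ⁱ ⋯ α_kⁱ τ_k` is a (0,0)-run for every `i ∈ ℕ`;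
moreover `τ₀` and `τ_k` have length at most `p(nM)ⁿ`. -/
theorem pumping :
    ∃ p : Polynomial ℕ, ∀ (n : ℕ) (V : VASS n) (π : List (Transition n)) (q : Fin n),
      IsZeroRun V π q →
      (p.eval (n * vassNorm V)) ^ n < π.length →
      ∃ (τs αs : List (List (Transition n))),
        τs.length = αs.length + 1 ∧
        1 ≤ αs.length ∧
        π = τs.flatten ∧
        (∀ α ∈ αs, IsCycle V α ∧ α.length ≤ (p.eval (n * vassNorm V)) ^ n) ∧
        (∀ i : ℕ, IsZeroRun V (pumped i τs αs) q) ∧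
        (τs.headD []).length ≤ (p.eval (n * vassNorm V)) ^ n ∧
        (τs.getLastD []).length ≤ (p.eval (n * vassNorm V)) ^ n := by
  refine ⟨(600 * Polynomial.X ^ 6 + 2) ^ 40, fun n V π q hπ hlen => ?_⟩
  have hbound := two_mul_bound_le q.pos (vassNorm V)
  simp only [Polynomial.eval_pow, Polynomial.eval_add, Polynomial.eval_mul, Polynomial.eval_X,
    Polynomial.eval_ofNat] at hlen ⊢
  let ρ := Run.ofIsRun hπ.1
  have hend : ρ.x ρ.len = 0 := by
    change 0 + effect (π.take π.length) = 0
    rw [List.take_length, hπ.2, add_zero]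
  have hlong : bound n (vassNorm V) ≤ ρ.len := by change _ ≤ π.length; omega
  obtain ⟨P, hP, ⟨s, hs, hPs⟩, t, ht, htlen, hPt⟩ := Run.exists_pump hend hlong
  obtain ⟨τ, τs, αs, hτ⟩ := ρ.exists_isFactorization P
  obtain ⟨hfirst, hαs, -⟩ := hτ.ends s (Nat.zero_le s) (by omega) hPs
  obtain ⟨-, -, hlast⟩ := hτ.ends t (Nat.zero_le t) ht hPt
  have hlen_eq : (τ :: τs).length = αs.length + 1 := congrArg (· + 1) hτ.length_eq
  refine ⟨τ :: τs, αs, hlen_eq, List.length_pos_iff.2 hαs, ?_, fun α hα => ?_, fun i => ?_,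
    show τ.length ≤ _ by omega, by omega⟩
  · rw [← pumped_zero hlen_eq, hτ.pumped_eq, ρ.inserted_zero]
    exact (Run.seg_ofIsRun hπ.1).symm
  · obtain ⟨s, rfl⟩ := hτ.mem_range α hα
    exact ⟨(hP.walkIn s).isCycle (hτ.ne_nil _ hα), (hP.length_le s).trans hbound⟩
  · rw [hτ.pumped_eq]
    exact hP.isZeroRun_inserted hend i
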